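/- Let k be a field and α : G → Gal(L/k) a finite Galois embedding problem over k. Then there exists a field extension k₀ of k that is finitely generated over k and regular over k (i.e., k₀ is linearly disjoint from an algebraic closure of k over k) such that the induced embedding problem α_{k₀} has a geometric Galois solution: there exist an indeterminate T, a finite Galois extension E of k₀(T) with Lk₀(T) ⊆ E such that every element of E algebraic over k₀ lies in Lk₀, and an isomorphism β : Gal(E/k₀(T)) → G such that for every σ ∈ Gal(E/k₀(T)), σ maps L onto itself and σ|_L = α(β(σ)). -/

import Mathlib

set_option synthInstance.maxHeartbeats 1000000
set_option maxHeartbeats 1000000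

/-- `α_{F}` has a *geometric Galois solution*: there are an embedding `ι` of `L` into a
fixed algebraic closure of `F(T) = RatFunc F`, a finite Galois extension `E/F(T)` with
`L·F(T) ⊆ E` (i.e. `ι '' L ⊆ E`) such that every element of `E` algebraic over `F` lies
in the compositum `L·F` (i.e. `E ∩ F̄ = L·F`), and an isomorphism `β : Gal(E/F(T)) ≃ G`
such that every `σ ∈ Gal(E/F(T))` maps (the copy of) `L` onto itself and
`σ|_L = α (β σ)`. -/
def HasGeomGaloisSolution (k : Type) [Field k] (G : Type) [Group G]
    (L : Type) [Field L] [Algebra k L] (α : G →* (L ≃ₐ[k] L))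
    (F : Type) [Field F] [Algebra k F] : Prop :=
  letI : Algebra k (AlgebraicClosure (RatFunc F)) :=
    ((algebraMap (RatFunc F) (AlgebraicClosure (RatFunc F))).comp
      ((algebraMap F (RatFunc F)).comp (algebraMap k F))).toAlgebra
  ∃ (ι : L →ₐ[k] AlgebraicClosure (RatFunc F))
    (E : IntermediateField (RatFunc F) (AlgebraicClosure (RatFunc F)))
    (hE : ∀ x : L, ι x ∈ E),
    FiniteDimensional (RatFunc F) E ∧ IsGalois (RatFunc F) E ∧
    (∀ z : AlgebraicClosure (RatFunc F), z ∈ E → IsAlgebraic F z →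
      z ∈ IntermediateField.adjoin F (Set.range ι)) ∧
    ∃ β : (E ≃ₐ[RatFunc F] E) ≃* G,
      ∀ (σ : E ≃ₐ[RatFunc F] E) (x : L),
        ((σ ⟨ι x, hE x⟩ : E) : AlgebraicClosure (RatFunc F)) = ι (α (β σ) x)

set_option synthInstance.maxHeartbeats 1000000
set_option maxHeartbeats 1000000

namespace GES
open HahnSeries

section mapL
variable {A B C : Type*} [CommRing A] [CommRing B] [CommRing C]

/-- coefficientwise map on Laurent series -/
noncomputable def mapL (φ : A →+* B) : LaurentSeries A →+* LaurentSeries B where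
  toFun x := HahnSeries.map x φ
  map_one' := by
    ext n
    simp only [HahnSeries.map_coeff]
    rw [HahnSeries.coeff_one, HahnSeries.coeff_one]
    split_ifs <;> simp
  map_zero' := by ext n; simp
  map_add' x y := by ext n; simp
  map_mul' x y := by
    ext n
    rw [HahnSeries.map_coeff, HahnSeries.coeff_mul, HahnSeries.coeff_mul, map_sum]
    symm
    simp only [HahnSeries.map_coeff, map_mul]
    apply Finset.sum_subset
    · intro ij h
      simp only [Finset.mem_addAntidiagonal, HahnSeries.mem_support, HahnSeries.map_coeff] at h ⊢
      refine ⟨fun h0 => h.1 (by rw [h0, map_zero]), fun h0 => h.2.1 (by rw [h0, map_zero]), h.2.2⟩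
    · intro ij h h'
      simp only [Finset.mem_addAntidiagonal, HahnSeries.mem_support, HahnSeries.map_coeff] at h h'
      by_contra hne
      exact h' ⟨left_ne_zero_of_mul hne, right_ne_zero_of_mul hne, h.2.2⟩

@[simp] theorem mapL_coeff (φ : A →+* B) (x : LaurentSeries A) (n : ℤ) :
    (mapL φ x).coeff n = φ (x.coeff n) := rfl

theorem mapL_mapL (φ : A →+* B) (ψ : B →+* C) (x : LaurentSeries A) :
    mapL ψ (mapL φ x) = mapL (ψ.comp φ) x := by ext n; simp

theorem mapL_id (x : LaurentSeries A) : mapL (RingHom.id A) x = x := by ext n; simp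

theorem mapL_injective {φ : A →+* B} (h : Function.Injective φ) : Function.Injective (mapL φ) := by
  intro x y hxy
  ext n
  apply h
  rw [← mapL_coeff, ← mapL_coeff, hxy]

@[simp] theorem mapL_C (φ : A →+* B) (a : A) : mapL φ (HahnSeries.C a) = HahnSeries.C (φ a) := by
  ext n
  rw [mapL_coeff, HahnSeries.C_apply, HahnSeries.C_apply, HahnSeries.coeff_single,
    HahnSeries.coeff_single]
  split_ifs <;> simp

@[simp] theorem mapL_single (φ : A →+* B) (m : ℤ) (a : A) :
    mapL φ (HahnSeries.single m a) = HahnSeries.single m (φ a) := by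
  ext n
  rw [mapL_coeff, HahnSeries.coeff_single, HahnSeries.coeff_single]
  split_ifs <;> simp

theorem mapL_ofPS (φ : A →+* B) (x : PowerSeries A) :
    mapL φ (HahnSeries.ofPowerSeries ℤ A x) = HahnSeries.ofPowerSeries ℤ B (PowerSeries.map φ x) := by
  ext n
  rw [mapL_coeff]
  rw [PowerSeries.coeff_coe, PowerSeries.coeff_coe]
  split_ifs <;> simp

theorem coeff_C_mul (a : A) (x : LaurentSeries A) (n : ℤ) :
    (HahnSeries.C a * x).coeff n = a * x.coeff n := by
  rw [HahnSeries.C_mul_eq_smul]; simp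

/-- every Laurent series is a power series up to a shift -/
theorem exists_ps (x : LaurentSeries A) : ∃ (m : ℤ) (y : PowerSeries A),
    x = HahnSeries.single m 1 * HahnSeries.ofPowerSeries ℤ A y := by
  exact ⟨x.order, x.powerSeriesPart, (LaurentSeries.single_order_mul_powerSeriesPart x).symm⟩

theorem exists_ps' (x : LaurentSeries A) (hx : x ≠ 0) : ∃ (m : ℤ) (y : PowerSeries A),
    x = HahnSeries.single m 1 * HahnSeries.ofPowerSeries ℤ A y ∧ PowerSeries.coeff 0 y ≠ 0 := by
  refine ⟨x.order, x.powerSeriesPart, (LaurentSeries.single_order_mul_powerSeriesPart x).symm, ?_⟩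
  rw [LaurentSeries.powerSeriesPart_coeff]
  simpa using HahnSeries.coeff_order_eq_zero.not.mpr hx

end mapL

/-- Dedekind spanning -/
theorem spanning {M D I : Type*} [Monoid M] [Field D] [Finite I] (φ : I → M →* D)
    (hφ : Function.Injective φ) (ε : I → D) :
    ∃ (s : Finset M) (y : M → D), ∀ i, ∑ b ∈ s, y b * φ i b = ε i := by
  classical
  cases nonempty_fintype I
  have hli : LinearIndependent D (fun i => (φ i : M → D)) :=
    (linearIndependent_monoidHom M D).comp φ hφ
  have hspan : Submodule.span D (Set.range (fun m : M => fun i => φ i m)) = ⊤ := by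
    by_contra hne
    obtain ⟨f, hf0, hf⟩ := Submodule.exists_le_ker_of_lt_top _ (lt_top_iff_ne_top.mpr hne)
    apply hf0
    have h1 : ∀ m : M, f (fun i => φ i m) = 0 := fun m =>
      hf (Submodule.subset_span ⟨m, rfl⟩)
    have h2 : ∀ v : I → D, f v = ∑ i, v i * f (Pi.single i 1) := by
      intro v
      conv_lhs => rw [← Finset.univ_sum_single v]
      rw [map_sum]
      refine Finset.sum_congr rfl fun i _ => ?_
      have : (Pi.single i (v i) : I → D) = v i • Pi.single i 1 := by
        rw [← Pi.single_smul]; simp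
      rw [this, map_smul, smul_eq_mul]
    have h3 := Fintype.linearIndependent_iff.mp hli (fun i => f (Pi.single i 1)) (by
      ext m
      have := h1 m
      rw [h2] at this
      simpa [mul_comm] using this)
    ext i
    simpa using h3 i
  have hmem : ε ∈ Submodule.span D (Set.range (fun m : M => fun i => φ i m)) := by
    rw [hspan]; trivial
  rw [Finsupp.mem_span_range_iff_exists_finsupp] at hmem
  obtain ⟨c, hc⟩ := hmem
  refine ⟨c.support, c, fun i => ?_⟩
  have := congrFun hc i
  rw [Finsupp.sum, Finset.sum_apply] at this
  simpa using this

end GES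

set_option synthInstance.maxHeartbeats 1000000
set_option maxHeartbeats 1000000
set_option linter.all false
set_option linter.deprecated false
set_option linter.unusedSectionVars false
set_option linter.unusedVariables false

namespace GES

/-- algebraic over the image of a ring hom -/
def AlgOver {A B : Type*} [CommRing A] [CommRing B] (φ : A →+* B) (x : B) : Prop :=
  ∃ p : Polynomial A, p ≠ 0 ∧ p.eval₂ φ x = 0

theorem AlgOver.map {A B C : Type*} [CommRing A] [CommRing B] [CommRing C] {φ : A →+* B} {x : B}
    (h : AlgOver φ x) (ψ : B →+* C) : AlgOver (ψ.comp φ) (ψ x) := by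
  obtain ⟨p, hp, h⟩ := h
  refine ⟨p, hp, ?_⟩
  rw [← Polynomial.hom_eval₂, h, map_zero]

theorem rec_exists {X : Type*} (R : (n : ℕ) → ((m : ℕ) → m < n → X) → X → Prop)
    (h : ∀ n s, ∃ x, R n s x) : ∃ f : ℕ → X, ∀ n, R n (fun m _ => f m) (f n) := by
  choose F hF using h
  let f : ℕ → X := fun n => WellFounded.fix (C := fun _ => X) Nat.lt_wfRel.wf (fun n s => F n s) n
  refine ⟨f, fun n => ?_⟩
  have : f n = F n (fun m _ => f m) := by
    simp only [f]; rw [WellFounded.fix_eq]; rfl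
  rw [this]
  exact hF _ _

section local2
variable (O D : Type) [CommRing O] [IsDomain O] [Field D] [Algebra O D] [IsFractionRing O D]

noncomputable def psΩ : PowerSeries O →+* LaurentSeries D :=
  (HahnSeries.ofPowerSeries ℤ D).comp (PowerSeries.map (algebraMap O D))

theorem psΩ_inj : Function.Injective (psΩ O D) := by
  intro x y h
  have h : PowerSeries.map (algebraMap O D) x = PowerSeries.map (algebraMap O D) y :=
    HahnSeries.ofPowerSeries_injective (Γ := ℤ) h
  ext n
  apply IsFractionRing.injective O D
  rw [← PowerSeries.coeff_map, ← PowerSeries.coeff_map, h]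

noncomputable def F2Ω : FractionRing (PowerSeries O) →+* LaurentSeries D :=
  IsFractionRing.lift (psΩ_inj O D)

theorem F2Ω_algebraMap (x : PowerSeries O) :
    F2Ω O D (algebraMap _ _ x) = psΩ O D x := by
  simp [F2Ω]

noncomputable def F2 : Subfield (LaurentSeries D) := (F2Ω O D).fieldRange

variable {O D}

theorem psΩ_mem (x : PowerSeries O) : psΩ O D x ∈ F2 O D := ⟨_, F2Ω_algebraMap O D x⟩

theorem F2_frac {x : LaurentSeries D} (hx : x ∈ F2 O D) :
    ∃ b r : PowerSeries O, b ≠ 0 ∧ psΩ O D b * x = psΩ O D r := by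
  obtain ⟨y, rfl⟩ := hx
  obtain ⟨r, b, hb, rfl⟩ := IsFractionRing.div_surjective (A := PowerSeries O) y
  have hb0 : b ≠ 0 := nonZeroDivisors.ne_zero hb
  refine ⟨b, r, hb0, ?_⟩
  rw [map_div₀, F2Ω_algebraMap, F2Ω_algebraMap]
  have : psΩ O D b ≠ 0 := by
    rw [Ne, map_eq_zero_iff _ (psΩ_inj O D)]; exact hb0
  field_simp

theorem single_mem_F2 (m : ℤ) : (HahnSeries.single m 1 : LaurentSeries D) ∈ F2 O D := by
  have h1 : (HahnSeries.single 1 1 : LaurentSeries D) ∈ F2 O D := by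
    have : psΩ O D PowerSeries.X = HahnSeries.single 1 1 := by
      simp [psΩ]
    rw [← this]; exact psΩ_mem _
  have : (HahnSeries.single m 1 : LaurentSeries D) = (HahnSeries.single 1 1) ^ m := by
    rcases Int.le_total 0 m with h | h
    · lift m to ℕ using h
      rw [zpow_natCast, HahnSeries.single_pow]; simp
    · obtain ⟨l, rfl⟩ : ∃ l : ℕ, m = -(l : ℤ) := ⟨m.natAbs, by omega⟩
      rw [zpow_neg, zpow_natCast, HahnSeries.single_pow, HahnSeries.inv_single]; simp
  rw [this]
  exact zpow_mem h1 m

theorem C_mem_F2 (d : D) : (HahnSeries.C d : LaurentSeries D) ∈ F2 O D := by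
  obtain ⟨r, b, hb, rfl⟩ := IsFractionRing.div_surjective (A := O) d
  rw [map_div₀]
  have : ∀ a : O, (HahnSeries.C (algebraMap O D a) : LaurentSeries D) ∈ F2 O D := by
    intro a
    have : psΩ O D (PowerSeries.C a) = HahnSeries.C (algebraMap O D a) := by
      simp [psΩ]
    rw [← this]; exact psΩ_mem _
  exact div_mem (this _) (this _)

theorem mapL_mem_F2 (x : LaurentSeries O) : mapL (algebraMap O D) x ∈ F2 O D := by
  obtain ⟨m, y, rfl⟩ := exists_ps x
  rw [map_mul, mapL_single, mapL_ofPS, map_one]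
  exact mul_mem (single_mem_F2 m) (psΩ_mem y)

theorem coeff_mul_zero {y z : LaurentSeries D} {a b : ℤ} (hy : ∀ n < a, y.coeff n = 0)
    (hz : ∀ n < b, z.coeff n = 0) (n : ℤ) (hn : n < a + b) : (y * z).coeff n = 0 := by
  rw [HahnSeries.coeff_mul]
  apply Finset.sum_eq_zero
  intro ij h
  have h3 : ij.1 + ij.2 = n := by
    simp only [Finset.mem_addAntidiagonal] at h; exact h.2.2
  rcases lt_or_ge ij.1 a with h1 | h1
  · rw [hy _ h1, zero_mul]
  · rw [hz ij.2 (by linarith), mul_zero]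

theorem exists_bound (z : LaurentSeries D) : ∃ N : ℕ, ∀ n < -(N : ℤ), z.coeff n = 0 := by
  refine ⟨z.order.natAbs, fun n hn => HahnSeries.coeff_eq_zero_of_lt_order ?_⟩
  omega

variable (O) in
theorem approx (y : LaurentSeries D) (N : ℕ) : ∃ y' ∈ F2 O D, ∀ n < (N : ℤ), (y - y').coeff n = 0 := by
  obtain ⟨m, x, rfl⟩ := exists_ps y
  let K := ((N : ℤ) - m).toNat
  refine ⟨HahnSeries.single m 1 * ∑ k ∈ Finset.range K, HahnSeries.C (PowerSeries.coeff k x) *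
    HahnSeries.single (k : ℤ) 1, mul_mem (single_mem_F2 m) (sum_mem fun k _ =>
      mul_mem (C_mem_F2 _) (single_mem_F2 _)), fun n hn => ?_⟩
  rw [← mul_sub]
  refine coeff_mul_zero (a := m) (b := N - m) ?_ ?_ n (by linarith)
  · intro n hn
    rw [HahnSeries.coeff_single]; simp [hn.ne]
  · intro n hn
    rw [HahnSeries.coeff_sub, PowerSeries.coeff_coe, HahnSeries.coeff_sum]
    simp_rw [coeff_C_mul, HahnSeries.coeff_single]
    split_ifs with h0
    · rw [zero_sub, neg_eq_zero]
      apply Finset.sum_eq_zero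
      intro k hk
      have : n ≠ k := by omega
      simp [this]
    · rw [Finset.sum_eq_single n.natAbs]
      · have : n = (n.natAbs : ℤ) := by omega
        rw [if_pos this]; simp
      · intro k hk hkn
        have : n ≠ k := by omega
        simp [this]
      · intro h
        exfalso; apply h
        simp only [Finset.mem_range, K]; omega

end local2

/-- local datum -/
structure LD (F O D : Type) [CommRing O] [IsDomain O] [Field D] [Algebra O D] [IsFractionRing O D]
    [Field F] [Algebra F O] (n : ℕ) where
  E2 : Type
  [fld : Field E2]
  j : E2 →+* LaurentSeries D
  σ : E2 →+* E2
  pow : σ ^ n = 1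
  dist : ∀ i, 0 < i → i < n → σ ^ i ≠ 1
  fix : ∀ e, σ e = e ↔ j e ∈ F2 O D
  surj : ∀ x ∈ F2 O D, ∃ e, j e = x
  const : ∀ e, AlgOver (mapL ((algebraMap O D).comp (algebraMap F O))) (j e) → σ e = e

attribute [instance] LD.fld

section ldb
variable {F O D : Type} [CommRing O] [IsDomain O] [Field D] [Algebra O D] [IsFractionRing O D]
    [Field F] [Algebra F O] {n : ℕ}

theorem LD.exists_b (ld : LD F O D n) (hn : 0 < n) : ∃ (b : ld.E2) (B : ℕ → PowerSeries D),
    (∀ l < n, ld.j ((ld.σ ^ l) b) = HahnSeries.ofPowerSeries ℤ D (B l)) ∧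
    (∀ l < n, PowerSeries.coeff 0 (B l) = if l = 0 then 1 else 0) := by
  classical
  let φ : Fin n → ld.E2 →* LaurentSeries D := fun l => (ld.j.comp (ld.σ ^ (l : ℕ)) : ld.E2 →+* _)
  have key : ∀ a b : ℕ, a < b → b < n → ld.σ ^ a ≠ ld.σ ^ b := by
    intro a b hab hb h
    apply ld.dist (b - a) (by omega) (by omega)
    have : ld.σ ^ (n - a) * ld.σ ^ a = ld.σ ^ (n - a) * ld.σ ^ b := by rw [h]
    rw [← pow_add, ← pow_add] at this
    have e1 : n - a + a = n := by omega
    have e2 : n - a + b = n + (b - a) := by omega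
    rw [e1, e2, pow_add, ld.pow, one_mul] at this
    exact this.symm
  have hφ : Function.Injective φ := by
    intro a b hab
    by_contra hne
    have hs : ld.σ ^ (a : ℕ) = ld.σ ^ (b : ℕ) := by
      ext x
      have := DFunLike.congr_fun hab x
      exact ld.j.injective this
    rcases lt_or_gt_of_ne (fun h => hne (Fin.ext h)) with h | h
    · exact key _ _ h b.2 hs
    · exact key _ _ h a.2 hs.symm
  obtain ⟨s, y, hy⟩ := spanning φ hφ (fun l => if (l : ℕ) = 0 then 1 else 0)
  choose bd hbd using fun (q : ld.E2 × ℕ) => exists_bound (ld.j ((ld.σ ^ q.2) q.1))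
  let N := (s ×ˢ Finset.range n).sup bd
  have hN : ∀ m ∈ s, ∀ l < n, ∀ k < -(N : ℤ), (ld.j ((ld.σ ^ l) m)).coeff k = 0 := by
    intro m hm l hl k hk
    have : bd (m, l) ≤ N := Finset.le_sup (f := bd) (by simp [hm, hl])
    exact hbd (m, l) k (by omega)
  choose y' hy' hyy using fun m => approx O (y m) (N + 1)
  choose e he using fun m => ld.surj (y' m) (hy' m)
  have hfix : ∀ m, ld.σ (e m) = e m := fun m => (ld.fix _).mpr (by rw [he]; exact hy' m)
  have hfix' : ∀ m (l : ℕ), (ld.σ ^ l) (e m) = e m := by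
    intro m l
    induction l with
    | zero => rfl
    | succ l ih => rw [pow_succ, RingHom.mul_def, RingHom.comp_apply, hfix, ih]
  let b : ld.E2 := ∑ m ∈ s, e m * m
  have hb : ∀ l < n, ∀ k < (1 : ℤ), (ld.j ((ld.σ ^ l) b)).coeff k =
      (if l = 0 then (1 : LaurentSeries D) else 0).coeff k := by
    intro l hl k hk
    have h1 := hy ⟨l, hl⟩
    simp only [φ] at h1
    rw [← h1]
    simp only [b, map_sum, map_mul, hfix', he]
    rw [← sub_eq_zero, ← HahnSeries.coeff_sub, ← Finset.sum_sub_distrib, HahnSeries.coeff_sum]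
    apply Finset.sum_eq_zero
    intro m hm
    have e1 : y' m * ld.j ((ld.σ ^ l) m) - y m * (ld.j.comp (ld.σ ^ l) : ld.E2 →+* _) m
      = -((y m - y' m) * ld.j ((ld.σ ^ l) m)) := by
      simp only [RingHom.comp_apply]; ring
    have e2 : ((y m - y' m) * ld.j ((ld.σ ^ l) m)).coeff k = 0 :=
      coeff_mul_zero (a := N + 1) (b := -(N : ℤ)) (fun i hi => hyy m i (by exact_mod_cast hi))
        (hN m hm l hl) k (by linarith)
    calc _ = (-((y m - y' m) * ld.j ((ld.σ ^ l) m))).coeff k := by rw [← e1]; rfl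
      _ = 0 := by rw [HahnSeries.coeff_neg, e2, neg_zero]
  refine ⟨b, fun l => PowerSeries.mk fun k => (ld.j ((ld.σ ^ l) b)).coeff k, ?_, ?_⟩
  · intro l hl
    ext k
    rw [PowerSeries.coeff_coe]
    split_ifs with h
    · rw [hb l hl k (by linarith)]
      split_ifs
      · rw [HahnSeries.coeff_one, if_neg h.ne]
      · rfl
    · rw [PowerSeries.coeff_mk]; congr 1; omega
  · intro l hl
    rw [PowerSeries.coeff_mk, hb l hl _ (by simp)]
    split_ifs
    · simp
    · rfl

end ldb
end GES

set_option synthInstance.maxHeartbeats 1000000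
set_option maxHeartbeats 1000000
set_option linter.all false
set_option linter.deprecated false
set_option linter.unusedSectionVars false
set_option linter.unusedVariables false

namespace GES

theorem coeff_mul_rec {R : Type*} [CommRing R] (b y : PowerSeries R) (n : ℕ) :
    PowerSeries.coeff n (b * y) = PowerSeries.coeff 0 b * PowerSeries.coeff n y +
      ∑ k : Fin n, PowerSeries.coeff (n - k) b * PowerSeries.coeff k y := by
  rw [mul_comm, PowerSeries.coeff_mul, Finset.Nat.sum_antidiagonal_eq_sum_range_succ_mk,
      Finset.sum_range_succ, add_comm, Nat.sub_self, mul_comm ((PowerSeries.coeff n) y),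
      ← Fin.sum_univ_eq_sum_range (fun k => PowerSeries.coeff k y * PowerSeries.coeff (n - k) b)]
  congr 1
  exact Finset.sum_congr rfl fun k _ => mul_comm _ _

/-- the setting of the patching theorem -/
structure PS (G F M O D I : Type) [Group G] [Field F] [Field M] [Algebra F M]
    [CommRing O] [IsDomain O] [Field D] [Algebra O D] [IsFractionRing O D] [Algebra F O] where
  ρ : G →* (M →+* M)
  ρF : ∀ g f, ρ g (algebraMap F M f) = algebraMap F M f
  W : Subring M
  FW : ∀ f, algebraMap F M f ∈ W
  ρW : ∀ g w, w ∈ W → ρ g w ∈ W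
  ι : I → M →+* D
  ιF : ∀ i f, ι i (algebraMap F M f) = algebraMap O D (algebraMap F O f)
  H1 : ∀ ε : I → D, ∃ a ∈ W, (∀ g, ρ g a = a) ∧ ∃ r : I → O, ∀ i, ε i = ι i a + algebraMap O D (r i)
  H2 : ∀ ε : G → I → D, ∃ a ∈ W, ∃ r : G → I → O, ∀ g i,
    ι i (ρ g a) = algebraMap O D (r g i) + ε g i
  H3 : ∀ b : I → O, (∀ i, b i ≠ 0) → ∃ q : M, q ≠ 0 ∧ (∀ g, ρ g q = q) ∧
    ∃ (x : I → O) (w : I → Oˣ), (∀ i, x i ≠ 0 ∧ algebraMap O D (b i * x i) = ι i q * algebraMap O D (w i)) ∧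
    ∃ V : Finset M, (∀ v ∈ V, v ∈ W ∧ ∀ g, ρ g v = v) ∧
      ∀ a ∈ W, (∀ g, ρ g a = a) → (∀ i, ∃ o : O, ι i (q * a) = algebraMap O D o) →
        a ∈ Submodule.span F (V : Set M)
  H4 : ∀ h : G, h ≠ 1 → ∃ w ∈ W, ρ h w ≠ w ∧ ∀ g i, ∃ o : O, ι i (ρ g w) = algebraMap O D o

section
variable {G F M O D I : Type} [Group G] [Field F] [Field M] [Algebra F M]
    [CommRing O] [IsDomain O] [Field D] [Algebra O D] [IsFractionRing O D] [Algebra F O]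
  (S : PS G F M O D I)

namespace PS

/-- the fixed part of `W` -/
def A : Subring M where
  carrier := {a | a ∈ S.W ∧ ∀ g, S.ρ g a = a}
  mul_mem' := fun ha hb => ⟨mul_mem ha.1 hb.1, fun g => by rw [map_mul, ha.2, hb.2]⟩
  one_mem' := ⟨one_mem _, fun g => map_one _⟩
  add_mem' := fun ha hb => ⟨add_mem ha.1 hb.1, fun g => by rw [map_add, ha.2, hb.2]⟩
  zero_mem' := ⟨zero_mem _, fun g => map_zero _⟩
  neg_mem' := fun ha => ⟨neg_mem ha.1, fun g => by rw [map_neg, ha.2]⟩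

/-- Laurent series with coefficients in a subring -/
noncomputable def _root_.GES.LS (B : Subring M) : Subring (LaurentSeries M) := (mapL B.subtype).range

theorem _root_.GES.mem_LS {B : Subring M} {x : LaurentSeries M} : x ∈ LS B ↔ ∀ n, x.coeff n ∈ B := by
  constructor
  · rintro ⟨y, rfl⟩ n
    rw [mapL_coeff]; exact (y.coeff n).2
  · intro h
    refine ⟨⟨fun n => ⟨x.coeff n, h n⟩, ?_⟩, ?_⟩
    · convert x.isPWO_support using 2
      ext n; simp [Subtype.ext_iff]
    · ext n; rfl

noncomputable def P : Subring (LaurentSeries M) :=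
  Subring.closure (Set.range (mapL (algebraMap F M)) ∪ (HahnSeries.C '' (S.A : Set M)))

theorem P_F (x : LaurentSeries F) : mapL (algebraMap F M) x ∈ S.P :=
  Subring.subset_closure (Or.inl ⟨x, rfl⟩)

theorem P_A {a : M} (ha : a ∈ S.A) : HahnSeries.C a ∈ S.P :=
  Subring.subset_closure (Or.inr ⟨a, ha, rfl⟩)

theorem FA (f : F) : algebraMap F M f ∈ S.A := ⟨S.FW f, fun g => S.ρF g f⟩

theorem P_le : S.P ≤ LS S.A := by
  rw [P, Subring.closure_le]
  rintro _ (⟨x, rfl⟩ | ⟨a, ha, rfl⟩)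
  · exact mem_LS.mpr fun n => S.FA _
  · refine mem_LS.mpr fun n => ?_
    rw [HahnSeries.C_apply, HahnSeries.coeff_single]
    split_ifs
    · exact ha
    · exact zero_mem _

theorem A_le : S.A ≤ S.W := fun a ha => ha.1

theorem P_leW {p} (hp : p ∈ S.P) : p ∈ LS S.W :=
  mem_LS.mpr fun n => S.A_le (mem_LS.mp (S.P_le hp) n)

theorem P_fix {p} (hp : p ∈ S.P) (g : G) : mapL (S.ρ g) p = p := by
  ext n
  rw [mapL_coeff]
  exact (mem_LS.mp (S.P_le hp) n).2 g

theorem P_loc {p} (hp : p ∈ S.P) (i : I) : mapL (S.ι i) p ∈ F2 O D := by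
  have : S.P ≤ (F2 O D).toSubring.comap (mapL (S.ι i)) := by
    rw [P, Subring.closure_le]
    rintro _ (⟨x, rfl⟩ | ⟨a, ha, rfl⟩)
    · show mapL (S.ι i) (mapL _ x) ∈ F2 O D
      rw [mapL_mapL]
      have : (S.ι i).comp (algebraMap F M) = (algebraMap O D).comp (algebraMap F O) := by
        ext f; exact S.ιF i f
      rw [this, ← mapL_mapL]
      exact mapL_mem_F2 _
    · show mapL (S.ι i) (HahnSeries.C a) ∈ F2 O D
      rw [mapL_C]
      exact C_mem_F2 _
  exact this hp

theorem single_P (m : ℤ) : HahnSeries.single m 1 ∈ S.P := by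
  have := S.P_F (HahnSeries.single m 1)
  rwa [mapL_single, map_one] at this

theorem span_P (V : Finset M) (hV : ∀ v ∈ V, v ∈ S.A) (x : PowerSeries M)
    (hx : ∀ n, PowerSeries.coeff n x ∈ Submodule.span F (V : Set M)) :
    HahnSeries.ofPowerSeries ℤ M x ∈ S.P := by
  have h : ∀ n, ∃ c : M → F, ∑ v ∈ V, c v • v = PowerSeries.coeff n x := by
    intro n
    obtain ⟨c, -, hc⟩ := Submodule.mem_span_finset.mp (hx n)
    exact ⟨c, hc⟩
  choose c hc using h
  have : HahnSeries.ofPowerSeries ℤ M x = ∑ v ∈ V, HahnSeries.C v *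
      mapL (algebraMap F M) (HahnSeries.ofPowerSeries ℤ F (PowerSeries.mk fun n => c n v)) := by
    ext n
    rw [HahnSeries.coeff_sum]
    simp_rw [coeff_C_mul, mapL_coeff, PowerSeries.coeff_coe]
    split_ifs with h
    · simp
    · rw [← hc]
      refine Finset.sum_congr rfl fun v _ => ?_
      rw [PowerSeries.coeff_mk, Algebra.smul_def, mul_comm]
  rw [this]
  exact sum_mem fun v hv => mul_mem (S.P_A (hV v hv)) (S.P_F _)

theorem lemmaZ_aux [Finite I] (w : PowerSeries M) (hw : ∀ n, PowerSeries.coeff n w ∈ S.A)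
    (hl : ∀ i, mapL (S.ι i) (HahnSeries.ofPowerSeries ℤ M w) ∈ F2 O D) :
    ∃ p ∈ S.P, ∃ p' ∈ S.P, p ≠ 0 ∧ p * HahnSeries.ofPowerSeries ℤ M w = p' := by
  classical
  have hinj := IsFractionRing.injective O D
  -- local fractions
  have h1 : ∀ i, ∃ b r : PowerSeries O, PowerSeries.coeff 0 b ≠ 0 ∧
      PowerSeries.map (algebraMap O D) b * PowerSeries.map (S.ι i) w =
        PowerSeries.map (algebraMap O D) r := by
    intro i
    obtain ⟨b, r, hb, h⟩ := F2_frac (hl i)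
    rw [mapL_ofPS] at h
    have h' : PowerSeries.map (algebraMap O D) b * PowerSeries.map (S.ι i) w =
        PowerSeries.map (algebraMap O D) r := by
      apply HahnSeries.ofPowerSeries_injective (Γ := ℤ)
      rw [map_mul]; exact h
    have hfin : b.order ≠ ⊤ := by rwa [Ne, PowerSeries.order_eq_top]
    obtain ⟨b', hb'⟩ := PowerSeries.X_pow_order_dvd (φ := b)
    set k := b.order.toNat
    have hr : PowerSeries.X ^ k ∣ r := by
      rw [PowerSeries.X_pow_dvd_iff]
      intro m hm
      apply hinj
      rw [← PowerSeries.coeff_map, ← h', hb', map_mul (PowerSeries.map _), map_pow, PowerSeries.map_X, mul_assoc,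
        PowerSeries.coeff_X_pow_mul', if_neg (by omega), map_zero]
    obtain ⟨r', hr'⟩ := hr
    refine ⟨b', r', ?_, ?_⟩
    · have := PowerSeries.coeff_order hb
      rw [show b.order.toNat = k from rfl] at this
      rw [hb', PowerSeries.coeff_X_pow_mul', if_pos le_rfl, Nat.sub_self] at this
      exact this
    · rw [hb', hr', map_mul, map_mul, map_pow, PowerSeries.map_X, mul_assoc] at h'
      exact mul_left_cancel₀ (pow_ne_zero _ PowerSeries.X_ne_zero) h'
  choose b r hb0 hbr using h1
  obtain ⟨q, hq0, hqf, x, u, hx, V, hV, hfin⟩ := S.H3 (fun i => PowerSeries.coeff 0 (b i)) hb0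
  let b' : I → PowerSeries O := fun i => b i * PowerSeries.C (x i)
  have hb' : ∀ i, algebraMap O D (PowerSeries.coeff 0 (b' i)) = S.ι i q * algebraMap O D (u i) := by
    intro i
    rw [← (hx i).2]; simp [b']
  have hιq : ∀ i, S.ι i q ≠ 0 := fun i => by rwa [Ne, map_eq_zero]
  -- recursion
  obtain ⟨f, hf⟩ := rec_exists (X := (I → O) × M) (fun n s y =>
      y.2 ∈ S.A ∧ (n = 0 → y.2 = 1) ∧ ∀ i, algebraMap O D (PowerSeries.coeff 0 (b' i) * y.1 i +
        ∑ k : Fin n, PowerSeries.coeff (n - k) (b' i) * (s k k.2).1 i) = S.ι i q * S.ι i y.2) (by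
    intro n s
    rcases Nat.eq_zero_or_pos n with rfl | hn
    · refine ⟨(fun i => ((u i)⁻¹ : Oˣ), 1), one_mem _, fun _ => rfl, fun i => ?_⟩
      simp only [Finset.univ_eq_empty, Finset.sum_empty, add_zero, map_mul, map_one, hb']
      rw [mul_assoc, ← map_mul]
      simp
    · let δ : I → D := fun i => (S.ι i q)⁻¹ *
        algebraMap O D (∑ k : Fin n, PowerSeries.coeff (n - k) (b' i) * (s k k.2).1 i)
      obtain ⟨a, haW, haf, r, hr⟩ := S.H1 δ
      refine ⟨(fun i => -((u i)⁻¹ : Oˣ) * r i, a), ⟨haW, haf⟩, fun h => absurd h hn.ne', fun i => ?_⟩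
      have h2 := hr i
      simp only [δ] at h2
      rw [inv_mul_eq_iff_eq_mul₀ (hιq i)] at h2
      simp only
      rw [map_add, h2, map_mul, hb', map_mul, map_neg]
      have h3 : algebraMap O D (u i) * algebraMap O D ((u i)⁻¹ : Oˣ) = 1 := by
        rw [← map_mul]; simp
      linear_combination (-S.ι i q * algebraMap O D (r i)) * h3)
  let y : I → PowerSeries O := fun i => PowerSeries.mk fun n => (f n).1 i
  let p : PowerSeries M := PowerSeries.mk fun n => (f n).2
  have key : ∀ i, PowerSeries.C (S.ι i q) * PowerSeries.map (S.ι i) p =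
      PowerSeries.map (algebraMap O D) (b' i * y i) := by
    intro i
    ext n
    rw [PowerSeries.coeff_C_mul, PowerSeries.coeff_map, PowerSeries.coeff_map]
    simp only [p, PowerSeries.coeff_mk]
    rw [← (hf n).2.2 i]
    congr 1
    rw [coeff_mul_rec (b' i) (y i)]
    simp only [y, PowerSeries.coeff_mk]
  have hpA : ∀ n, PowerSeries.coeff n p ∈ S.A := fun n => by
    simp only [p, PowerSeries.coeff_mk]; exact (hf n).1
  have hpP : HahnSeries.ofPowerSeries ℤ M p ∈ S.P := by
    refine S.span_P V hV p fun n => hfin _ (hpA n).1 (hpA n).2 fun i => ?_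
    refine ⟨PowerSeries.coeff n (b' i * y i), ?_⟩
    rw [← PowerSeries.coeff_map, ← key, map_mul, PowerSeries.coeff_C_mul, PowerSeries.coeff_map]
  have hpwA : ∀ n, PowerSeries.coeff n (p * w) ∈ S.A := fun n => by
    rw [PowerSeries.coeff_mul]
    exact sum_mem fun k _ => mul_mem (hpA _) (hw _)
  have hpwP : HahnSeries.ofPowerSeries ℤ M (p * w) ∈ S.P := by
    refine S.span_P V hV _ fun n => hfin _ (hpwA n).1 (hpwA n).2 fun i => ?_
    refine ⟨PowerSeries.coeff n (r i * PowerSeries.C (x i) * y i), ?_⟩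
    rw [← PowerSeries.coeff_map, map_mul, map_mul (PowerSeries.map _), map_mul (PowerSeries.map _),
      ← hbr, ← PowerSeries.coeff_map, ← PowerSeries.coeff_C_mul, map_mul (PowerSeries.map _),
      ← mul_assoc, key]
    simp only [b', map_mul]
    congr 1
    ring
  refine ⟨_, hpP, _, hpwP, ?_, (map_mul _ _ _).symm⟩
  intro h0
  have : PowerSeries.coeff 0 p = 1 := by
    simp only [p, PowerSeries.coeff_mk]; exact (hf 0).2.1 rfl
  have h0' : p = 0 := HahnSeries.ofPowerSeries_injective (Γ := ℤ) (by rw [h0, map_zero])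
  rw [h0'] at this
  simp at this

theorem lemmaZ [Finite I] (w : LaurentSeries M) (hw : w ∈ LS S.A)
    (hl : ∀ i, mapL (S.ι i) w ∈ F2 O D) :
    ∃ p ∈ S.P, ∃ p' ∈ S.P, p ≠ 0 ∧ p * w = p' := by
  have hx := (LaurentSeries.single_order_mul_powerSeriesPart w).symm
  set y := w.powerSeriesPart
  set m := w.order
  have hy : HahnSeries.ofPowerSeries ℤ M y = HahnSeries.single (-m) 1 * w := by
    rw [hx, ← mul_assoc, HahnSeries.single_mul_single]; simp
  obtain ⟨p, hp, p', hp', h0, h⟩ := S.lemmaZ_aux y (fun n => by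
      simp only [y]; rw [LaurentSeries.powerSeriesPart_coeff]; exact mem_LS.mp hw _) (fun i => by
      rw [hy, map_mul, mapL_single, map_one]
      exact mul_mem (single_mem_F2 _) (hl i))
  refine ⟨p, hp, HahnSeries.single m 1 * p', mul_mem (S.single_P m) hp', h0, ?_⟩
  rw [← h, hx]; ring

end PS
end
end GES

set_option synthInstance.maxHeartbeats 1000000
set_option maxHeartbeats 1000000
set_option linter.all false
set_option linter.deprecated false
set_option linter.unusedSectionVars false
set_option linter.unusedVariables false

namespace GES
namespace PS
section
variable {G F M O D I : Type} [Group G] [Field F] [Field M] [Algebra F M]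
    [CommRing O] [IsDomain O] [Field D] [Algebra O D] [IsFractionRing O D] [Algebra F O]
  (S : PS G F M O D I) {c : I → G} (ld : ∀ i, LD F O D (orderOf (c i)))

/-- the patched ring -/
noncomputable def N : Subring (LaurentSeries M) where
  carrier := {a | (∃ p ∈ S.P, p ≠ 0 ∧ p * a ∈ LS S.W) ∧ ∀ i, ∃ e : G → (ld i).E2, ∀ g,
    (ld i).j (e g) = mapL (S.ι i) (mapL (S.ρ g) a) ∧ e (c i * g) = (ld i).σ (e g)}
  mul_mem' := by
    rintro a b ⟨⟨p, hp, hp0, hpa⟩, ha⟩ ⟨⟨q, hq, hq0, hqb⟩, hb⟩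
    refine ⟨⟨p * q, mul_mem hp hq, mul_ne_zero hp0 hq0, ?_⟩, fun i => ?_⟩
    · rw [show p * q * (a * b) = (p * a) * (q * b) by ring]; exact mul_mem hpa hqb
    · obtain ⟨e, he⟩ := ha i
      obtain ⟨f, hf⟩ := hb i
      exact ⟨fun g => e g * f g, fun g => ⟨by simp only [map_mul, (he g).1, (hf g).1],
        by simp only [map_mul, (he g).2, (hf g).2]⟩⟩
  add_mem' := by
    rintro a b ⟨⟨p, hp, hp0, hpa⟩, ha⟩ ⟨⟨q, hq, hq0, hqb⟩, hb⟩
    refine ⟨⟨p * q, mul_mem hp hq, mul_ne_zero hp0 hq0, ?_⟩, fun i => ?_⟩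
    · rw [show p * q * (a + b) = q * (p * a) + p * (q * b) by ring]
      exact add_mem (mul_mem (S.P_leW hq) hpa) (mul_mem (S.P_leW hp) hqb)
    · obtain ⟨e, he⟩ := ha i
      obtain ⟨f, hf⟩ := hb i
      exact ⟨fun g => e g + f g, fun g => ⟨by simp only [map_add, (he g).1, (hf g).1],
        by simp only [map_add, (he g).2, (hf g).2]⟩⟩
  one_mem' := ⟨⟨1, one_mem _, one_ne_zero, by rw [mul_one]; exact one_mem _⟩,
    fun i => ⟨fun _ => 1, fun g => by simp⟩⟩
  zero_mem' := ⟨⟨1, one_mem _, one_ne_zero, by rw [mul_zero]; exact zero_mem _⟩,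
    fun i => ⟨fun _ => 0, fun g => by simp⟩⟩
  neg_mem' := by
    rintro a ⟨⟨p, hp, hp0, hpa⟩, ha⟩
    refine ⟨⟨p, hp, hp0, ?_⟩, fun i => ?_⟩
    · rw [mul_neg]; exact neg_mem hpa
    · obtain ⟨e, he⟩ := ha i
      exact ⟨fun g => - e g, fun g => ⟨by simp only [map_neg, (he g).1],
        by simp only [map_neg, (he g).2]⟩⟩

theorem N_const {m : M} (hm : m ∈ S.W) (hc : ∀ i g, S.ρ (c i * g) m = S.ρ g m) :
    HahnSeries.C m ∈ S.N ld := by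
  refine ⟨⟨1, one_mem _, one_ne_zero, ?_⟩, fun i => ?_⟩
  · rw [one_mul]
    refine mem_LS.mpr fun n => ?_
    rw [HahnSeries.C_apply, HahnSeries.coeff_single]
    split_ifs
    · exact hm
    · exact zero_mem _
  · choose e he using fun g => (ld i).surj (HahnSeries.C (S.ι i (S.ρ g m))) (C_mem_F2 _)
    refine ⟨e, fun g => ⟨by rw [he, mapL_C, mapL_C], ?_⟩⟩
    rw [((ld i).fix (e g)).mpr (by rw [he]; exact C_mem_F2 _)]
    apply (ld i).j.injective
    rw [he, he, hc]

theorem P_N {p} (hp : p ∈ S.P) : p ∈ S.N ld := by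
  refine ⟨⟨1, one_mem _, one_ne_zero, ?_⟩, fun i => ?_⟩
  · rw [one_mul]; exact S.P_leW hp
  · obtain ⟨e, he⟩ := (ld i).surj _ (S.P_loc hp i)
    refine ⟨fun _ => e, fun g => ⟨by rw [he, S.P_fix hp], ?_⟩⟩
    exact (((ld i).fix e).mpr (by rw [he]; exact S.P_loc hp i)).symm

theorem mapL_ρ_mul (g h : G) (a) : mapL (S.ρ g) (mapL (S.ρ h) a) = mapL (S.ρ (g * h)) a := by
  rw [mapL_mapL, map_mul]; rfl

theorem LSW_ρ {a} (ha : a ∈ LS S.W) (g : G) : mapL (S.ρ g) a ∈ LS S.W :=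
  mem_LS.mpr fun n => S.ρW g _ (mem_LS.mp ha n)

theorem N_ρ {a} (ha : a ∈ S.N ld) (g : G) : mapL (S.ρ g) a ∈ S.N ld := by
  obtain ⟨⟨p, hp, hp0, hpa⟩, h⟩ := ha
  refine ⟨⟨p, hp, hp0, ?_⟩, fun i => ?_⟩
  · have := S.LSW_ρ hpa g
    rwa [map_mul, S.P_fix hp] at this
  · obtain ⟨e, he⟩ := h i
    exact ⟨fun x => e (x * g), fun x => ⟨by rw [(he _).1, S.mapL_ρ_mul],
      by simp only [mul_assoc, (he _).2]⟩⟩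

theorem N_fix [Finite I] {a} (ha : a ∈ S.N ld) (hf : ∀ g, mapL (S.ρ g) a = a) :
    ∃ p ∈ S.P, ∃ p' ∈ S.P, p ≠ 0 ∧ p * a = p' := by
  obtain ⟨⟨p, hp, hp0, hpa⟩, h⟩ := ha
  obtain ⟨q, hq, q', hq', hq0, hqq⟩ := S.lemmaZ (p * a) (mem_LS.mpr fun n =>
    ⟨mem_LS.mp hpa n, fun g => by rw [← mapL_coeff, map_mul, S.P_fix hp, hf]⟩) (fun i => by
      rw [map_mul]
      refine mul_mem (S.P_loc hp i) ?_
      obtain ⟨e, he⟩ := h i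
      have h1 := (he 1).1
      rw [hf] at h1
      rw [← h1, ← (ld i).fix]
      rw [← (he 1).2]
      apply (ld i).j.injective
      rw [(he _).1, (he _).1, hf, hf])
  exact ⟨q * p, mul_mem hq hp, q', hq', mul_ne_zero hq0 hp0, by rw [mul_assoc, hqq]⟩

theorem N_alg {a} (ha : a ∈ S.N ld) (hal : AlgOver (mapL (algebraMap F M)) a) (i : I) :
    mapL (S.ρ (c i)) a = a := by
  obtain ⟨e, he⟩ := ha.2 i
  have h1 : mapL (S.ρ 1) a = a := by rw [map_one]; exact mapL_id a
  have h2 : (ld i).σ (e 1) = e 1 := by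
    apply (ld i).const
    rw [(he 1).1, h1]
    have h := hal.map (mapL (S.ι i))
    have : (mapL (S.ι i)).comp (mapL (algebraMap F M)) =
        mapL ((algebraMap O D).comp (algebraMap F O)) := by
      ext x : 1
      rw [RingHom.comp_apply, mapL_mapL]
      congr 2
      ext f; exact S.ιF i f
    rwa [this] at h
  have h3 := (he 1).2
  rw [h2, mul_one] at h3
  apply mapL_injective (S.ι i).injective
  rw [← (he _).1, h3, (he 1).1, h1]

theorem N_faithful [Finite G] (h : G) (hh : h ≠ 1) : ∃ a ∈ S.N ld, mapL (S.ρ h) a ≠ a := by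
  classical
  obtain ⟨w, hw, hwh, hwO⟩ := S.H4 h hh
  choose o ho using hwO
  have hpos : ∀ i, 0 < orderOf (c i) := fun i => orderOf_pos _
  choose b B hB hB0 using fun i => (ld i).exists_b (hpos i)
  -- recursion
  obtain ⟨f, hf⟩ := rec_exists (X := (G → I → O) × M) (fun n s y =>
      y.2 ∈ S.W ∧ (n = 0 → y.2 = w) ∧ ∀ g i, S.ι i (S.ρ g y.2) = algebraMap O D (y.1 g i) +
        ∑ l ∈ Finset.range (orderOf (c i)), ∑ k : Fin n, PowerSeries.coeff (n - k) (B i l) *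
          algebraMap O D ((s k k.2).1 ((c i)⁻¹ ^ l * g) i)) (by
    intro n s
    rcases Nat.eq_zero_or_pos n with rfl | hn
    · refine ⟨(o, w), hw, fun _ => rfl, fun g i => ?_⟩
      simp [ho]
    · obtain ⟨a, haW, r, hr⟩ := S.H2 (fun g i =>
        ∑ l ∈ Finset.range (orderOf (c i)), ∑ k : Fin n, PowerSeries.coeff (n - k) (B i l) *
          algebraMap O D ((s k k.2).1 ((c i)⁻¹ ^ l * g) i))
      exact ⟨(r, a), haW, fun h => absurd h hn.ne', fun g i => hr g i⟩)
  let a : PowerSeries M := PowerSeries.mk fun n => (f n).2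
  let r : G → I → PowerSeries O := fun g i => PowerSeries.mk fun n => (f n).1 g i
  have key : ∀ g i, PowerSeries.map (S.ι i) (PowerSeries.map (S.ρ g) a) =
      ∑ l ∈ Finset.range (orderOf (c i)), B i l *
        PowerSeries.map (algebraMap O D) (r ((c i)⁻¹ ^ l * g) i) := by
    intro g i
    ext n
    rw [map_sum]
    simp_rw [coeff_mul_rec]
    rw [Finset.sum_add_distrib]
    simp only [PowerSeries.coeff_map, a, r, PowerSeries.coeff_mk]
    rw [(hf n).2.2 g i]
    congr 1
    rw [Finset.sum_eq_single 0]
    · rw [hB0 i 0 (hpos i)]; simp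
    · intro l hl hl0
      rw [hB0 i l (Finset.mem_range.mp hl), if_neg hl0, zero_mul]
    · intro h; exact absurd (Finset.mem_range.mpr (hpos i)) h
  refine ⟨HahnSeries.ofPowerSeries ℤ M a, ⟨⟨1, one_mem _, one_ne_zero, ?_⟩, fun i => ?_⟩, ?_⟩
  · rw [one_mul]
    refine mem_LS.mpr fun n => ?_
    rw [PowerSeries.coeff_coe]
    split_ifs
    · exact zero_mem _
    · simp only [a, PowerSeries.coeff_mk]; exact (hf _).1
  · choose R hR using fun g => (ld i).surj (psΩ O D (r g i)) (psΩ_mem _)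
    have hRfix : ∀ g, (ld i).σ (R g) = R g := fun g =>
      ((ld i).fix _).mpr (by rw [hR]; exact psΩ_mem _)
    refine ⟨fun g => ∑ l ∈ Finset.range (orderOf (c i)), R ((c i)⁻¹ ^ l * g) *
      ((ld i).σ ^ l) (b i), fun g => ⟨?_, ?_⟩⟩
    · rw [mapL_ofPS, mapL_ofPS, key, map_sum, map_sum]
      refine Finset.sum_congr rfl fun l hl => ?_
      rw [map_mul, hR, hB i l (Finset.mem_range.mp hl), map_mul, mul_comm]
      rfl
    · rw [map_sum]
      obtain ⟨n, hn⟩ : ∃ n, orderOf (c i) = n + 1 := ⟨orderOf (c i) - 1, by have := hpos i; omega⟩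
      simp only [map_mul, hRfix]
      have e1 : ∀ l, (ld i).σ (((ld i).σ ^ l) (b i)) = ((ld i).σ ^ (l + 1)) (b i) := by
        intro l; rw [pow_succ']; rfl
      simp only [e1]
      have hr : Finset.range (orderOf (c i)) = Finset.range (n + 1) := congrArg _ hn
      rw [hr, Finset.sum_range_succ', Finset.sum_range_succ]
      congr 1
      · refine Finset.sum_congr rfl fun l _ => ?_
        congr 2
        rw [pow_succ]; group
      · have e2 : (ld i).σ ^ (n + 1) = (ld i).σ ^ 0 := by
          rw [pow_zero]
          exact (congrArg (fun k => (ld i).σ ^ k) hn.symm).trans (ld i).pow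
        rw [e2]
        congr 2
        have : (c i) ^ n * c i = 1 := by rw [← pow_succ, ← hn, pow_orderOf_eq_one]
        have e3 : ((c i)⁻¹) ^ n = c i := by
          rw [inv_pow, inv_eq_iff_mul_eq_one]; exact this
        rw [e3]; simp
  · intro hE
    apply hwh
    have := congrArg (fun x => HahnSeries.coeff x (0 : ℤ)) hE
    simp only [mapL_coeff, PowerSeries.coeff_coe, lt_irrefl, if_false, a, Int.natAbs_zero,
      PowerSeries.coeff_mk] at this
    rwa [(hf 0).2.1 rfl] at this

end
end PS
end GES

set_option synthInstance.maxHeartbeats 1000000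
set_option maxHeartbeats 1000000
set_option linter.all false
set_option linter.deprecated false
set_option linter.unusedSectionVars false
set_option linter.unusedVariables false

namespace GES
open Polynomial

section ratmap
variable {N N' : Type} [Field N] [Field N']

/-- coefficientwise map of rational functions -/
noncomputable def mapR (φ : N →+* N') : RatFunc N →+* RatFunc N' :=
  RatFunc.mapRingHom (Polynomial.mapRingHom φ)
    (nonZeroDivisors_le_comap_nonZeroDivisors_of_injective _ (Polynomial.map_injective φ φ.injective))

theorem mapR_algebraMap (φ : N →+* N') (p : N[X]) :
    mapR φ (algebraMap _ _ p) = algebraMap _ (RatFunc N') (p.map φ) := by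
  have := RatFunc.map_apply_div (K := N) (R := N') (Polynomial.mapRingHom φ)
    (nonZeroDivisors_le_comap_nonZeroDivisors_of_injective _ (Polynomial.map_injective φ φ.injective)) p 1
  simpa [mapR, RatFunc.coe_mapRingHom_eq_coe_map] using this

theorem ratFunc_hom_ext {B : Type*} [Field B] {f g : RatFunc N →+* B}
    (h : ∀ p : N[X], f (algebraMap _ _ p) = g (algebraMap _ _ p)) : f = g := by
  ext x
  rw [← RatFunc.num_div_denom x, map_div₀, map_div₀, h, h]

end ratmap

/-- input data of the concrete patching problem -/
structure Inp (G F N N1 I : Type) [Group G] [Field F] [Field N] [Field N1] [Algebra F N]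
    [Algebra N N1] [Algebra F N1] [IsScalarTower F N N1] where
  ρ0 : G →* (N →+* N)
  ρ0F : ∀ g f, ρ0 g (algebraMap F N f) = algebraMap F N f
  fixF : ∀ x, (∀ g, ρ0 g x = x) → ∃ f, algebraMap F N f = x
  inj : ∀ g, g ≠ 1 → ∃ x, ρ0 g x ≠ x
  θ : I → N1
  int : ∀ i, IsIntegral F (θ i)
  gen : ∀ i x, ∃ p : F[X], aeval (θ i) p = x
  sep : ∀ i, aeval (θ i) (derivative (minpoly F (θ i))) ≠ 0
  cop : ∀ i j, i ≠ j → IsCoprime (minpoly F (θ i)) (minpoly F (θ j))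

namespace Inp
section
variable {G F N N1 I : Type} [Group G] [Finite G] [Fintype I] [Field F] [Field N] [Field N1] [Algebra F N]
    [Algebra N N1] [Algebra F N1] [IsScalarTower F N N1] (S : Inp G F N N1 I)

noncomputable def ρ : G →* (RatFunc N →+* RatFunc N) where
  toFun g := mapR (S.ρ0 g)
  map_one' := by
    apply ratFunc_hom_ext; intro p
    rw [mapR_algebraMap, map_one]
    show algebraMap _ _ (p.map (RingHom.id N)) = _
    rw [Polynomial.map_id]; rfl
  map_mul' g h := by
    apply ratFunc_hom_ext; intro p
    show mapR (S.ρ0 (g * h)) _ = mapR (S.ρ0 g) (mapR (S.ρ0 h) _)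
    rw [mapR_algebraMap, mapR_algebraMap, mapR_algebraMap, map_mul, Polynomial.map_map]
    rfl

theorem ρ_alg (g : G) (p : N[X]) : S.ρ g (algebraMap _ _ p) = algebraMap _ _ (p.map (S.ρ0 g)) :=
  mapR_algebraMap _ _

noncomputable def ψ (i : I) : N[X] →+* PowerSeries N1 :=
  (Polynomial.coeToPowerSeries.ringHom).comp
    (((Polynomial.taylorAlgHom (S.θ i)) : N1[X] →+* N1[X]).comp (Polynomial.mapRingHom (algebraMap N N1)))

theorem ψ_apply (i : I) (p : N[X]) :
    S.ψ i p = ((taylor (S.θ i) (p.map (algebraMap N N1)) : N1[X]) : PowerSeries N1) := rfl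

theorem ψ_inj (i : I) : Function.Injective (S.ψ i) := by
  intro p q h
  rw [ψ_apply, ψ_apply, Polynomial.coe_inj] at h
  exact Polynomial.map_injective _ (algebraMap N N1).injective (Polynomial.taylor_injective _ h)

theorem ψ_coeff0 (i : I) (p : F[X]) :
    PowerSeries.coeff 0 (S.ψ i (p.map (algebraMap F N))) = aeval (S.θ i) p := by
  rw [ψ_apply, Polynomial.coeff_coe, taylor_coeff_zero, Polynomial.map_map,
    ← IsScalarTower.algebraMap_eq, eval_map_algebraMap]

theorem ψ_coeff1 (i : I) (p : F[X]) :
    PowerSeries.coeff 1 (S.ψ i (p.map (algebraMap F N))) = aeval (S.θ i) (derivative p) := by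
  rw [ψ_apply, Polynomial.coeff_coe, taylor_coeff_one, Polynomial.map_map,
    ← IsScalarTower.algebraMap_eq, derivative_map, eval_map_algebraMap]

theorem ψ_C (i : I) (n : N) : S.ψ i (C n) = PowerSeries.C (algebraMap N N1 n) := by
  rw [ψ_apply]; simp

noncomputable def ι (i : I) : RatFunc N →+* LaurentSeries N1 :=
  RatFunc.liftRingHom ((algebraMap (PowerSeries N1) (LaurentSeries N1)).comp (S.ψ i))
    (nonZeroDivisors_le_comap_nonZeroDivisors_of_injective _
      ((IsFractionRing.injective _ _).comp (S.ψ_inj i)))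

theorem ι_alg (i : I) (p : N[X]) :
    S.ι i (algebraMap _ _ p) = algebraMap (PowerSeries N1) (LaurentSeries N1) (S.ψ i p) := by
  rw [ι, RatFunc.liftRingHom_algebraMap]; rfl

noncomputable def π : F[X] := ∏ i, minpoly F (S.θ i)

theorem π_monic : S.π.Monic := monic_prod_of_monic _ _ fun i _ => minpoly.monic (S.int i)

noncomputable def d : ℕ := S.π.natDegree

noncomputable def toM (_S : Inp G F N N1 I) (p : F[X]) : RatFunc N := algebraMap _ _ (p.map (algebraMap F N))

theorem toM_mul (p q : F[X]) : S.toM (p * q) = S.toM p * S.toM q := by simp [toM]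
theorem toM_pow (p : F[X]) (n : ℕ) : S.toM (p ^ n) = S.toM p ^ n := by simp [toM]
theorem toM_inj : Function.Injective S.toM := by
  intro p q h
  exact Polynomial.map_injective _ (algebraMap F N).injective (IsFractionRing.injective _ _ h)

theorem πM_ne : S.toM S.π ≠ 0 := by
  have : S.toM 0 = 0 := by simp [toM]
  rw [← this]
  exact fun h => S.π_monic.ne_zero (S.toM_inj h)

theorem ρ_toM (g : G) (p : F[X]) : S.ρ g (S.toM p) = S.toM p := by
  rw [toM, ρ_alg, Polynomial.map_map]
  congr 2
  ext f; exact S.ρ0F g f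

theorem dvd_π (c : F[X]) (h : ∀ i, aeval (S.θ i) c = 0) : S.π ∣ c :=
  Finset.prod_dvd_of_coprime (fun i _ j _ hij => S.cop i j hij) fun i _ => minpoly.dvd _ _ (h i)

theorem aeval_π (i : I) : aeval (S.θ i) S.π = 0 := by
  classical
  rw [π, ← Finset.mul_prod_erase _ _ (Finset.mem_univ i), map_mul, minpoly.aeval, zero_mul]

theorem aeval_dπ (i : I) : aeval (S.θ i) (derivative S.π) ≠ 0 := by
  classical
  rw [π, ← Finset.mul_prod_erase _ _ (Finset.mem_univ i), derivative_mul, map_add, map_mul, map_mul,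
    minpoly.aeval, zero_mul, add_zero]
  refine mul_ne_zero (S.sep i) ?_
  rw [map_prod, Finset.prod_ne_zero_iff]
  intro j hj h
  obtain ⟨a, b, hab⟩ := S.cop j i (Finset.ne_of_mem_erase hj)
  have := congrArg (aeval (S.θ i)) hab
  rw [map_add, map_mul, map_mul, h, minpoly.aeval] at this
  simp at this

theorem ψ_π (i : I) : ∃ u : (PowerSeries N1)ˣ,
    S.ψ i (S.π.map (algebraMap F N)) = (PowerSeries.X : PowerSeries N1) * (u : PowerSeries N1) := by
  have h0 : (PowerSeries.X : PowerSeries N1) ∣ S.ψ i (S.π.map (algebraMap F N)) := by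
    rw [PowerSeries.X_dvd_iff, ← PowerSeries.coeff_zero_eq_constantCoeff_apply, ψ_coeff0, aeval_π]
  obtain ⟨v, hv⟩ := h0
  have hu : IsUnit v := by
    rw [PowerSeries.isUnit_iff_constantCoeff, isUnit_iff_ne_zero,
      ← PowerSeries.coeff_zero_eq_constantCoeff_apply]
    have := S.ψ_coeff1 i S.π
    rw [hv, show (1 : ℕ) = 0 + 1 from rfl, PowerSeries.coeff_succ_X_mul] at this
    rw [this]
    exact S.aeval_dπ i
  exact ⟨hu.unit, hv⟩

theorem crt (v : I → N1) : ∃ c : F[X], c.natDegree ≤ S.d ∧ ∀ i, aeval (S.θ i) c = v i := by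
  classical
  have h1 : ∀ i, ∃ e : F[X], aeval (S.θ i) e = 1 ∧ ∀ j, j ≠ i → aeval (S.θ j) e = 0 := by
    intro i
    have : IsCoprime (∏ j ∈ Finset.univ.erase i, minpoly F (S.θ j)) (minpoly F (S.θ i)) :=
      IsCoprime.prod_left fun j hj => S.cop j i (Finset.ne_of_mem_erase hj)
    obtain ⟨a, b, hab⟩ := this
    refine ⟨a * ∏ j ∈ Finset.univ.erase i, minpoly F (S.θ j), ?_, ?_⟩
    · have := congrArg (aeval (S.θ i)) hab
      rw [map_add, map_mul _ b, minpoly.aeval, mul_zero, add_zero, map_one] at this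
      exact this
    · intro j hj
      rw [map_mul, map_prod, Finset.prod_eq_zero (Finset.mem_erase.mpr ⟨hj, Finset.mem_univ j⟩)
        (minpoly.aeval _ _), mul_zero]
  choose e he1 he0 using h1
  choose q hq using fun i => S.gen i (v i)
  refine ⟨(∑ i, e i * q i) %ₘ S.π, Polynomial.natDegree_modByMonic_le _ S.π_monic, fun i => ?_⟩
  have : aeval (S.θ i) ((∑ i, e i * q i) %ₘ S.π) = aeval (S.θ i) (∑ i, e i * q i) := by
    conv_rhs => rw [← Polynomial.modByMonic_add_div (∑ i, e i * q i) S.π]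
    rw [map_add, map_mul, aeval_π, zero_mul, add_zero]
  rw [this, map_sum, Finset.sum_eq_single i]
  · rw [map_mul, he1, hq, one_mul]
  · intro j _ hj
    rw [map_mul, he0 j i hj.symm, zero_mul]
  · simp

/-- rational functions with poles only at `π` -/
noncomputable def W : Subring (RatFunc N) where
  carrier := {x | ∃ (e : ℕ) (c : N[X]), c.natDegree ≤ e * S.d ∧ x * S.toM S.π ^ e = algebraMap _ _ c}
  mul_mem' := by
    rintro x y ⟨e, c, hc, h⟩ ⟨e', c', hc', h'⟩
    refine ⟨e + e', c * c', natDegree_mul_le.trans (by rw [add_mul]; omega), ?_⟩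
    rw [map_mul, ← h, ← h']; ring
  one_mem' := ⟨0, 1, by simp, by simp⟩
  zero_mem' := ⟨0, 0, by simp, by simp⟩
  add_mem' := by
    rintro x y ⟨e, c, hc, h⟩ ⟨e', c', hc', h'⟩
    refine ⟨e + e', c * (S.π.map (algebraMap F N)) ^ e' + c' * (S.π.map (algebraMap F N)) ^ e, ?_, ?_⟩
    · have hd : (S.π.map (algebraMap F N)).natDegree = S.d := by
        rw [natDegree_map]; rfl
      have key : ∀ (n : ℕ), ((S.π.map (algebraMap F N)) ^ n).natDegree ≤ n * S.d := fun n => by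
        rw [natDegree_pow, hd]
      refine natDegree_add_le_of_degree_le (natDegree_mul_le.trans ?_) (natDegree_mul_le.trans ?_)
      · have := key e'; rw [add_mul]; omega
      · have := key e; rw [add_mul]; omega
    · rw [map_add, map_mul, map_mul, ← h, ← h', map_pow, map_pow]
      simp only [toM]; ring
  neg_mem' := by
    rintro x ⟨e, c, hc, h⟩
    exact ⟨e, -c, by simpa using hc, by rw [neg_mul, h, map_neg]⟩

theorem W_fix {x : RatFunc N} (hx : x ∈ S.W) (hf : ∀ g, S.ρ g x = x) :
    ∃ (e : ℕ) (c : F[X]), c.natDegree ≤ e * S.d ∧ x * S.toM S.π ^ e = S.toM c := by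
  obtain ⟨e, c, hc, h⟩ := hx
  have h1 : ∀ g, c.map (S.ρ0 g) = c := by
    intro g
    apply IsFractionRing.injective N[X] (RatFunc N)
    rw [← S.ρ_alg, ← h, map_mul, map_pow, ρ_toM, hf]
  have h2 : ∀ n, ∃ f, algebraMap F N f = c.coeff n := by
    intro n
    apply S.fixF
    intro g
    rw [← Polynomial.coeff_map, h1]
  have h3 : c ∈ Polynomial.lifts (algebraMap F N) := by
    rw [Polynomial.lifts_iff_coeff_lifts]
    intro n; obtain ⟨f, hf⟩ := h2 n; exact ⟨f, hf⟩
  obtain ⟨c', hc'⟩ := (Polynomial.mem_lifts _).mp h3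
  refine ⟨e, c', ?_, ?_⟩
  · rw [← hc', natDegree_map] at hc; exact hc
  · rw [h, toM, hc']

theorem mem_W (e : ℕ) (c : F[X]) (hc : c.natDegree ≤ e * S.d) : S.toM c / S.toM S.π ^ e ∈ S.W := by
  refine ⟨e, c.map (algebraMap F N), by rwa [natDegree_map], ?_⟩
  rw [div_mul_cancel₀ _ (pow_ne_zero _ S.πM_ne)]; rfl

theorem C_mem_W (n : N) : algebraMap N[X] (RatFunc N) (C n) ∈ S.W := ⟨0, C n, by simp, by simp⟩

theorem frac_fix (e : ℕ) (c : F[X]) (g : G) :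
    S.ρ g (S.toM c / S.toM S.π ^ e) = S.toM c / S.toM S.π ^ e := by
  rw [map_div₀, map_pow, ρ_toM, ρ_toM]

theorem ι_toM (i : I) (c : F[X]) : S.ι i (S.toM c) =
    algebraMap (PowerSeries N1) (LaurentSeries N1) (S.ψ i (c.map (algebraMap F N))) := S.ι_alg i _

theorem H1_aux (m : ℕ) : ∀ ε : I → LaurentSeries N1,
    (∀ i, ∃ o : PowerSeries N1, algebraMap (PowerSeries N1) (LaurentSeries N1) (PowerSeries.X ^ m) * ε i = algebraMap _ _ o) →
    ∃ a ∈ S.W, (∀ g, S.ρ g a = a) ∧ ∃ r : I → PowerSeries N1,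
      ∀ i, ε i = S.ι i a + algebraMap _ _ (r i) := by
  induction m with
  | zero =>
    intro ε h
    choose o ho using h
    refine ⟨0, zero_mem _, fun g => map_zero _, o, fun i => ?_⟩
    have := ho i
    rw [pow_zero, map_one, one_mul] at this
    rw [this, map_zero, zero_add]
  | succ m ih =>
    intro ε h
    choose o ho using h
    choose u hu using S.ψ_π
    obtain ⟨c, hcd, hc⟩ := S.crt (fun i => PowerSeries.coeff 0 (o i * (u i : PowerSeries N1) ^ (m + 1)))
    let a := S.toM c / S.toM S.π ^ (m + 1)
    have haW : a ∈ S.W := S.mem_W _ _ (hcd.trans (by rw [add_mul]; omega))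
    have haf : ∀ g, S.ρ g a = a := S.frac_fix _ _
    let x := algebraMap (PowerSeries N1) (LaurentSeries N1) PowerSeries.X
    have hx : x ≠ 0 := by
      rw [Ne, map_eq_zero_iff _ (IsFractionRing.injective _ _)]; exact PowerSeries.X_ne_zero
    have h1 : ∀ i, ∃ o' : PowerSeries N1, algebraMap (PowerSeries N1) (LaurentSeries N1) (PowerSeries.X ^ m) *
        (ε i - S.ι i a) = algebraMap _ _ o' := by
      intro i
      have hX : (PowerSeries.X : PowerSeries N1) ∣ (o i - S.ψ i (c.map (algebraMap F N)) * (((u i)⁻¹ : (PowerSeries N1)ˣ) : PowerSeries N1) ^ (m + 1)) := by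
        rw [PowerSeries.X_dvd_iff, map_sub, map_mul, ← PowerSeries.coeff_zero_eq_constantCoeff_apply (S.ψ i _),
          ψ_coeff0, hc, PowerSeries.coeff_zero_eq_constantCoeff_apply, map_mul, mul_assoc, ← map_mul,
          ← mul_pow, Units.mul_inv, one_pow, map_one, mul_one, sub_self]
      obtain ⟨o', ho'⟩ := hX
      refine ⟨o', ?_⟩
      apply mul_left_cancel₀ hx
      rw [← map_mul, ← ho', map_sub, ← mul_assoc, ← map_mul, ← pow_succ', mul_sub, ho]
      congr 1
      simp only [a]
      rw [map_div₀, map_pow (S.ι i), ι_toM, ι_toM, hu, mul_div_assoc', div_eq_iff]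
      · rw [← map_mul, ← map_pow, ← map_mul]
        congr 1
        have : (((u i)⁻¹ : (PowerSeries N1)ˣ) : PowerSeries N1) ^ (m + 1) * (u i : PowerSeries N1) ^ (m + 1) = 1 := by
          rw [← mul_pow, Units.inv_mul, one_pow]
        rw [mul_pow]
        linear_combination (-(PowerSeries.X : PowerSeries N1) ^ (m + 1) * S.ψ i (c.map (algebraMap F N))) * this
      · apply pow_ne_zero
        rw [Ne, map_eq_zero_iff _ (IsFractionRing.injective _ _)]
        exact mul_ne_zero PowerSeries.X_ne_zero (Units.ne_zero _)
    obtain ⟨a', haW', haf', r, hr⟩ := ih _ h1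
    refine ⟨a + a', add_mem haW haW', fun g => by rw [map_add, haf, haf'], r, fun i => ?_⟩
    rw [map_add, add_assoc, ← hr]; ring

theorem exists_pow (y : LaurentSeries N1) : ∃ m : ℕ, ∀ m' ≥ m, ∃ o : PowerSeries N1,
    algebraMap (PowerSeries N1) (LaurentSeries N1) (PowerSeries.X ^ m') * y = algebraMap _ _ o := by
  obtain ⟨k, x, rfl⟩ := exists_ps y
  refine ⟨k.natAbs, fun m' hm => ⟨PowerSeries.X ^ (m' + k).toNat * x, ?_⟩⟩
  have e : ∀ z : PowerSeries N1, algebraMap _ (LaurentSeries N1) z = HahnSeries.ofPowerSeries ℤ N1 z :=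
    fun z => rfl
  rw [e, e, map_mul, HahnSeries.ofPowerSeries_X_pow, HahnSeries.ofPowerSeries_X_pow, ← mul_assoc,
    HahnSeries.single_mul_single, one_mul]
  congr 3
  omega

theorem H1 (ε : I → LaurentSeries N1) : ∃ a ∈ S.W, (∀ g, S.ρ g a = a) ∧ ∃ r : I → PowerSeries N1,
      ∀ i, ε i = S.ι i a + algebraMap _ _ (r i) := by
  choose m hm using fun i => exists_pow (ε i)
  exact S.H1_aux (Finset.univ.sup m) ε fun i => hm i _ (Finset.le_sup (Finset.mem_univ i))

theorem ι_C (i : I) (n : N) : S.ι i (algebraMap N[X] (RatFunc N) (C n)) =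
    algebraMap _ (LaurentSeries N1) (PowerSeries.C (algebraMap N N1 n)) := by
  rw [ι_alg, ψ_C]

theorem ρ_C (g : G) (n : N) : S.ρ g (algebraMap N[X] (RatFunc N) (C n)) =
    algebraMap _ _ (C (S.ρ0 g n)) := by
  rw [ρ_alg, map_C]

theorem H2 (ε : G → I → LaurentSeries N1) : ∃ a ∈ S.W, ∃ r : G → I → PowerSeries N1, ∀ g i,
    S.ι i (S.ρ g a) = algebraMap _ _ (r g i) + ε g i := by
  classical
  cases nonempty_fintype G
  obtain ⟨s, y, hy⟩ := spanning (fun g : G => (S.ρ0 g : N →* N)) (by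
      intro g h hgh
      by_contra hne
      obtain ⟨x, hx⟩ := S.inj (g⁻¹ * h) (by rwa [Ne, inv_mul_eq_one])
      apply hx
      have : S.ρ0 h x = S.ρ0 g x := (DFunLike.congr_fun hgh x).symm
      rw [map_mul, RingHom.mul_def, RingHom.comp_apply, this, ← RingHom.comp_apply, ← RingHom.mul_def,
        ← map_mul]
      simp) (fun g => if g = 1 then 1 else 0)
  have hy : ∀ g, ∑ b ∈ s, y b * S.ρ0 g b = if g = 1 then 1 else 0 := hy
  let cN : N → LaurentSeries N1 := fun n => algebraMap _ _ (PowerSeries.C (algebraMap N N1 n))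
  choose a haW haf r hr using fun m : N => S.H1 (fun i => ∑ h : G, ε h i * cN (S.ρ0 h (y m)))
  refine ⟨∑ m ∈ s, a m * algebraMap N[X] _ (C m), sum_mem fun m _ => mul_mem (haW m) (S.C_mem_W m),
    fun g i => - ∑ m ∈ s, r m i * PowerSeries.C (algebraMap N N1 (S.ρ0 g m)), fun g i => ?_⟩
  have h1 : ∀ m, S.ι i (a m) = (∑ h : G, ε h i * cN (S.ρ0 h (y m))) - algebraMap _ _ (r m i) :=
    fun m => by rw [hr]; ring
  simp only [map_sum, map_mul, haf, ρ_C, ι_C, h1, map_neg, sub_mul, Finset.sum_sub_distrib]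
  rw [sub_eq_neg_add]
  congr 1
  have h2 : ∀ h, ∑ m ∈ s, S.ρ0 h (y m) * S.ρ0 g m = if g = h then 1 else 0 := by
    intro h
    have := congrArg (S.ρ0 h) (hy (h⁻¹ * g))
    rw [map_sum] at this
    have e : ∀ m, S.ρ0 h (S.ρ0 (h⁻¹ * g) m) = S.ρ0 g m := fun m => by
      rw [← RingHom.comp_apply, ← RingHom.mul_def, ← map_mul, mul_inv_cancel_left]
    simp only [map_mul (S.ρ0 h), e] at this
    rw [this]
    by_cases hgh : g = h
    · simp [hgh]
    · rw [if_neg hgh, if_neg, map_zero]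
      rw [inv_mul_eq_one]; exact fun h => hgh h.symm
  have hc : ∀ m, algebraMap (PowerSeries N1) (LaurentSeries N1) (PowerSeries.C (algebraMap N N1 m)) =
      ((algebraMap (PowerSeries N1) (LaurentSeries N1)).comp ((PowerSeries.C).comp (algebraMap N N1))) m := fun m => rfl
  simp only [cN, hc, Finset.sum_mul, mul_assoc, ← map_mul]
  rw [Finset.sum_comm]
  simp only [← Finset.mul_sum, ← map_sum, h2]
  simp

theorem H3 (b : I → PowerSeries N1) (hb : ∀ i, b i ≠ 0) : ∃ q : RatFunc N, q ≠ 0 ∧ (∀ g, S.ρ g q = q) ∧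
    ∃ (x : I → PowerSeries N1) (w : I → (PowerSeries N1)ˣ),
      (∀ i, x i ≠ 0 ∧ algebraMap _ (LaurentSeries N1) (b i * x i) = S.ι i q * algebraMap _ _ (w i : PowerSeries N1)) ∧
    ∃ V : Finset (RatFunc N), (∀ v ∈ V, v ∈ S.W ∧ ∀ g, S.ρ g v = v) ∧
      ∀ a ∈ S.W, (∀ g, S.ρ g a = a) →
        (∀ i, ∃ o : PowerSeries N1, S.ι i (q * a) = algebraMap _ (LaurentSeries N1) o) →
        a ∈ Submodule.span F (V : Set (RatFunc N)) := by
  classical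
  have h1 : ∀ i, ∃ (n : ℕ) (v : (PowerSeries N1)ˣ), b i = (PowerSeries.X : PowerSeries N1) ^ n * (v : PowerSeries N1) := by
    intro i
    obtain ⟨v, hv⟩ := PowerSeries.X_pow_order_dvd (φ := b i)
    have hu : IsUnit v := by
      rw [PowerSeries.isUnit_iff_constantCoeff, isUnit_iff_ne_zero,
        ← PowerSeries.coeff_zero_eq_constantCoeff_apply]
      have := PowerSeries.coeff_order (hb i)
      set k := (b i).order.toNat
      rw [hv, PowerSeries.coeff_X_pow_mul', if_pos le_rfl, Nat.sub_self] at this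
      exact this
    exact ⟨_, hu.unit, hv⟩
  choose n v hv using h1
  choose u hu using S.ψ_π
  let m := Finset.univ.sup n
  have hm : ∀ i, n i ≤ m := fun i => Finset.le_sup (Finset.mem_univ i)
  refine ⟨S.toM S.π ^ m, pow_ne_zero _ S.πM_ne, fun g => by rw [map_pow, ρ_toM],
    fun i => PowerSeries.X ^ (m - n i), fun i => v i * (u i)⁻¹ ^ m, fun i => ⟨pow_ne_zero _ PowerSeries.X_ne_zero, ?_⟩,
    (Finset.range (m * S.d + 1)).image fun j => S.toM (X ^ j) / S.toM S.π ^ m, ?_, ?_⟩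
  · rw [map_pow, ι_toM, hu, hv, ← map_pow, ← map_mul]
    congr 1
    push_cast
    have h2 : (((u i)⁻¹ : (PowerSeries N1)ˣ) : PowerSeries N1) ^ m * (u i : PowerSeries N1) ^ m = 1 := by
      rw [← mul_pow, Units.inv_mul, one_pow]
    have h3 : (PowerSeries.X : PowerSeries N1) ^ m = PowerSeries.X ^ (n i) * PowerSeries.X ^ (m - n i) := by
      rw [← pow_add]; congr 1; have := hm i; omega
    rw [mul_pow, h3]
    linear_combination (-(PowerSeries.X ^ (n i) * PowerSeries.X ^ (m - n i) * (v i : PowerSeries N1))) * h2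
  · intro w hw
    obtain ⟨j, hj, rfl⟩ := Finset.mem_image.mp hw
    refine ⟨S.mem_W _ _ ?_, S.frac_fix _ _⟩
    rw [natDegree_X_pow]; have := Finset.mem_range.mp hj; omega
  · intro a haW haf hao
    choose o ho using hao
    -- normal form
    have claim : ∀ (e : ℕ) (c : F[X]), c.natDegree ≤ (m + e) * S.d → a * S.toM S.π ^ (m + e) = S.toM c →
        ∃ c : F[X], c.natDegree ≤ m * S.d ∧ a * S.toM S.π ^ m = S.toM c := by
      intro e
      induction e with
      | zero => intro c hc h; exact ⟨c, by simpa using hc, by simpa using h⟩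
      | succ e ih =>
        intro c hc h
        have hdvd : S.π ∣ c := by
          apply S.dvd_π
          intro i
          have h2 : S.ψ i (c.map (algebraMap F N)) = o i * (S.ψ i (S.π.map (algebraMap F N))) ^ (e + 1) := by
            apply IsFractionRing.injective (PowerSeries N1) (LaurentSeries N1)
            rw [← ι_toM, ← h, map_mul (algebraMap (PowerSeries N1) (LaurentSeries N1)), ← ho, map_pow (algebraMap (PowerSeries N1) (LaurentSeries N1)), ← ι_toM, ← map_pow, ← map_mul]
            congr 1; ring
          rw [← ψ_coeff0, h2, PowerSeries.coeff_zero_eq_constantCoeff_apply, map_mul, map_pow, hu]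
          simp
        obtain ⟨c', rfl⟩ := hdvd
        apply ih c'
        · by_cases h0 : c' = 0
          · simp [h0]
          rw [natDegree_mul S.π_monic.ne_zero h0] at hc
          have : S.π.natDegree = S.d := rfl
          have e2 : (m + (e + 1)) * S.d = (m + e) * S.d + S.d := by ring
          omega
        · apply mul_left_cancel₀ S.πM_ne
          rw [← toM_mul, ← h]; ring
    obtain ⟨e, c, hc, h⟩ := S.W_fix haW haf
    obtain ⟨c', hc', h'⟩ := claim e (c * S.π ^ m) (by
      refine natDegree_mul_le.trans ?_
      have := natDegree_pow S.π m
      have e1 : S.π.natDegree = S.d := rfl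
      rw [e1] at this
      rw [this, add_mul]; omega) (by rw [toM_mul, toM_pow, ← h]; ring)
    have h4 : a = ∑ j ∈ Finset.range (m * S.d + 1), c'.coeff j • (S.toM (X ^ j) / S.toM S.π ^ m) := by
      rw [eq_comm]
      apply mul_right_cancel₀ (pow_ne_zero m S.πM_ne)
      rw [h', Finset.sum_mul]
      have h5 : ∀ j, (c'.coeff j • (S.toM (X ^ j) / S.toM S.π ^ m)) * S.toM S.π ^ m =
          S.toM (Polynomial.monomial j (c'.coeff j)) := by
        intro j
        rw [smul_mul_assoc, div_mul_cancel₀ _ (pow_ne_zero m S.πM_ne), Algebra.smul_def,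
          ← C_mul_X_pow_eq_monomial, toM_mul]
        congr 1
        simp [toM]
        rfl
      simp only [h5]
      conv_rhs => rw [c'.as_sum_range' (m * S.d + 1) (by omega)]
      simp [toM, Polynomial.map_sum]
    rw [h4]
    refine Submodule.sum_mem _ fun j hj => Submodule.smul_mem _ _ (Submodule.subset_span ?_)
    exact Finset.mem_coe.mpr (Finset.mem_image_of_mem _ hj)

noncomputable def toPS : PS G F (RatFunc N) (PowerSeries N1) (LaurentSeries N1) I where
  ρ := S.ρ
  ρF g f := by
    have : algebraMap F (RatFunc N) f = S.toM (C f) := by simp [toM]; rfl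
    rw [this, ρ_toM]
  W := S.W
  FW f := S.C_mem_W _
  ρW g w := by
    rintro ⟨e, c, hc, h⟩
    refine ⟨e, c.map (S.ρ0 g), by rwa [natDegree_map], ?_⟩
    rw [← ρ_alg, ← h, map_mul, map_pow, ρ_toM]
  ι := S.ι
  ιF i f := by
    have : algebraMap F (RatFunc N) f = algebraMap N[X] (RatFunc N) (C (algebraMap F N f)) := rfl
    rw [this, ι_C, ← IsScalarTower.algebraMap_apply, PowerSeries.algebraMap_apply]
  H1 := S.H1
  H2 := S.H2
  H3 := S.H3
  H4 h hh := by
    obtain ⟨x, hx⟩ := S.inj h hh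
    refine ⟨algebraMap _ _ (C x), S.C_mem_W x, ?_, fun g i => ?_⟩
    · rw [ρ_C]
      intro h
      exact hx (C_injective (IsFractionRing.injective N[X] (RatFunc N) h))
    · rw [ρ_C, ι_C]; exact ⟨_, rfl⟩

end
end Inp
end GES

set_option synthInstance.maxHeartbeats 1000000
set_option maxHeartbeats 1000000
set_option linter.all false
set_option linter.deprecated false
set_option linter.unusedSectionVars false
set_option linter.unusedVariables false

namespace GES
open Polynomial

/-- abstract local datum -/
structure LA (k1 Φ Ω : Type) [Field k1] [Field Φ] [Field Ω] [Algebra k1 Φ] [Algebra Φ Ω] [Algebra k1 Ω] (n : ℕ) where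
  E : Type
  [fld : Field E]
  [alg : Algebra Φ E]
  j : E →ₐ[Φ] Ω
  σ : E →ₐ[Φ] E
  pow : σ ^ n = 1
  dist : ∀ i, 0 < i → i < n → σ ^ i ≠ 1
  fix : ∀ e, σ e = e → ∃ f, algebraMap Φ E f = e
  const : ∀ e, IsAlgebraic k1 (j e) → σ e = e

section abs
variable {k1 Φ Ω : Type} [Field k1] [Field Φ] [Field Ω] [Algebra k1 Φ] [Algebra Φ Ω] [Algebra k1 Ω]
  [IsScalarTower k1 Φ Ω]

theorem alg_σ {E : Type} [Field E] [Algebra Φ E] (j : E →ₐ[Φ] Ω) (σ : E →ₐ[Φ] E) {e : E}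
    (h : IsAlgebraic k1 (j e)) : IsAlgebraic k1 (j (σ e)) := by
  obtain ⟨p, hp, h⟩ := h
  refine ⟨p, hp, ?_⟩
  have key : ∀ x : E, aeval (j x) p = j (aeval x (p.map (algebraMap k1 Φ))) := by
    intro x
    rw [← Polynomial.aeval_algHom_apply, Polynomial.aeval_map_algebraMap]
  rw [key, map_eq_zero] at h
  rw [key, Polynomial.aeval_algHom_apply, h, map_zero, map_zero]

theorem alg_σ_pow {E : Type} [Field E] [Algebra Φ E] (j : E →ₐ[Φ] Ω) (σ : E →ₐ[Φ] E) {e : E}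
    (h : IsAlgebraic k1 (j e)) (l : ℕ) : IsAlgebraic k1 (j ((σ ^ l) e)) := by
  induction l with
  | zero => exact h
  | succ l ih => rw [pow_succ']; exact alg_σ j σ ih

theorem alg_down {x : Φ} (h : IsAlgebraic k1 (algebraMap Φ Ω x)) : IsAlgebraic k1 x := by
  exact (isAlgebraic_algebraMap_iff (algebraMap Φ Ω).injective).mp h

variable (v : AddValuation Φ (WithTop ℤ)) (hv : ∀ x : Φ, x ≠ 0 → IsAlgebraic k1 x → v x = 0) (τ : Φ)
  (hτ : v τ = ((-1 : ℤ) : WithTop ℤ))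

theorem v_int {x : Φ} (hx : x ≠ 0) : ∃ n : ℤ, v x = (n : WithTop ℤ) := by
  cases h : v x with
  | top => exact absurd ((AddValuation.top_iff v).mp h) hx
  | coe n => exact ⟨n, rfl⟩

include hτ in
theorem v_one_add : v (1 + τ) = ((-1 : ℤ) : WithTop ℤ) := by
  rw [add_comm, AddValuation.map_add_eq_of_lt_left, hτ]
  rw [hτ, AddValuation.map_one]
  exact_mod_cast (by norm_num : (-1 : ℤ) < 0)

theorem v_pow_int {x : Φ} {m : ℤ} (h : v x = (m : WithTop ℤ)) (n : ℕ) : v (x ^ n) = ((n * m : ℤ) : WithTop ℤ) := by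
  induction n with
  | zero => simp
  | succ n ih =>
    rw [pow_succ, AddValuation.map_mul, ih, h, ← WithTop.coe_add]; congr 1; push_cast; ring

include hv hτ in
theorem kummer (n : ℕ) (hn : 0 < n) (ζ : Φ) (hζ : IsPrimitiveRoot ζ n) (hnΦ : (n : Φ) ≠ 0) (y : Ω)
    (hy : y ^ n = algebraMap Φ Ω (1 + τ)) : Nonempty (LA k1 Φ Ω n) := by
  set u := 1 + τ with hu
  have hvu : v u = ((-1 : ℤ) : WithTop ℤ) := v_one_add v τ hτ
  have hu0 : u ≠ 0 := by
    intro h; rw [h, AddValuation.map_zero] at hvu; exact WithTop.top_ne_coe hvu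
  have hmon : (X ^ n - C u : Φ[X]).Monic := monic_X_pow_sub_C u hn.ne'
  have hroot : aeval y (X ^ n - C u : Φ[X]) = 0 := by simp [hy]
  have hint : IsIntegral Φ y := ⟨_, hmon, by rwa [← aeval_def]⟩
  let E := IntermediateField.adjoin Φ {y}
  haveI : FiniteDimensional Φ E := IntermediateField.adjoin.finiteDimensional hint
  let pb : PowerBasis Φ E := IntermediateField.adjoin.powerBasis hint
  have hgen : ((pb.gen : E) : Ω) = y := by
    simp [pb, IntermediateField.adjoin.powerBasis]
  have hgn : pb.gen ^ n = algebraMap Φ E u := by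
    apply Subtype.ext
    push_cast
    rw [hgen, hy]
    try rfl
  have hg0 : pb.gen ≠ 0 := by
    intro h
    rw [h, zero_pow hn.ne', eq_comm, map_eq_zero] at hgn
    exact hu0 hgn
  have hfr : Module.finrank Φ E = (minpoly Φ y).natDegree := IntermediateField.adjoin.finrank hint
  have hdvd : minpoly Φ y ∣ X ^ n - C u := minpoly.dvd _ _ hroot
  have hle : (minpoly Φ y).natDegree ≤ n := by
    have := natDegree_le_of_dvd hdvd hmon.ne_zero
    rwa [natDegree_X_pow_sub_C] at this
  have hpos : 0 < (minpoly Φ y).natDegree := minpoly.natDegree_pos hint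
  have hdeg : (minpoly Φ y).natDegree = n := by
    have h1 : (Algebra.norm Φ pb.gen) ^ n = u ^ (Module.finrank Φ E) := by
      rw [← map_pow, hgn, Algebra.norm_algebraMap]
    have h2 : Algebra.norm Φ pb.gen ≠ 0 := by
      rwa [Ne, Algebra.norm_eq_zero_iff]
    obtain ⟨m, hm⟩ := v_int v h2
    have h3 := congrArg v h1
    rw [v_pow_int v hm, v_pow_int v hvu, hfr, WithTop.coe_inj] at h3
    have h4 : (n : ℤ) ∣ (minpoly Φ y).natDegree := ⟨-m, by linear_combination h3⟩
    have := Nat.le_of_dvd hpos (Int.natCast_dvd_natCast.mp h4)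
    omega
  have hmin : minpoly Φ pb.gen = X ^ n - C u := by
    have : minpoly Φ pb.gen = minpoly Φ y := by
      rw [← hgen]; exact (minpoly.algebraMap_eq (algebraMap E Ω).injective pb.gen).symm
    rw [this]
    refine (eq_of_monic_of_dvd_of_natDegree_le (minpoly.monic hint) hmon hdvd ?_).symm
    rw [natDegree_X_pow_sub_C, hdeg]
  have hdim : pb.dim = n := by
    rw [← pb.finrank, hfr, hdeg]
  let σ : E →ₐ[Φ] E := pb.lift (algebraMap Φ E ζ * pb.gen) (by
    rw [hmin, map_sub, map_pow, aeval_X, aeval_C, mul_pow, hgn, ← map_pow, hζ.pow_eq_one, map_one, one_mul, sub_self])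
  have hσ : σ pb.gen = algebraMap Φ E ζ * pb.gen := pb.lift_gen _ _
  have hσp : ∀ l : ℕ, (σ ^ l) pb.gen = algebraMap Φ E (ζ ^ l) * pb.gen := by
    intro l
    induction l with
    | zero => simp
    | succ l ih =>
      rw [pow_succ', AlgHom.mul_apply, ih, map_mul, hσ, AlgHom.commutes, pow_succ, map_mul]; ring
  have hpow : σ ^ n = 1 := by
    apply pb.algHom_ext
    rw [hσp, hζ.pow_eq_one]; simp
  have hfix : ∀ e, σ e = e → ∃ f, algebraMap Φ E f = e := by
    intro e he
    have h1 : e = ∑ i : Fin pb.dim, pb.basis.repr e i • pb.gen ^ (i : ℕ) := by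
      conv_lhs => rw [← pb.basis.sum_repr e]
      simp
    have h2 : σ e = ∑ i : Fin pb.dim, (ζ ^ (i : ℕ) * pb.basis.repr e i) • pb.basis i := by
      conv_lhs => rw [h1]
      simp only [map_sum, map_smul, map_pow, hσ, mul_pow, PowerBasis.coe_basis]
      refine Finset.sum_congr rfl fun i _ => ?_
      rw [Algebra.smul_def, Algebra.smul_def, map_mul, map_pow]; ring
    have h3 : ∀ i, pb.basis.repr e i = ζ ^ (i : ℕ) * pb.basis.repr e i := by
      intro i
      conv_lhs => rw [← he, h2, Module.Basis.repr_sum_self]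
    have hd : 0 < pb.dim := by omega
    refine ⟨pb.basis.repr e ⟨0, hd⟩, ?_⟩
    conv_rhs => rw [h1]
    rw [Finset.sum_eq_single ⟨0, hd⟩]
    · simp [Algebra.smul_def]
    · intro i _ hi
      have hi0 : 0 < (i : ℕ) := by
        rcases Nat.eq_zero_or_pos (i : ℕ) with h | h
        · exact absurd (Fin.ext h) hi
        · exact h
      have h4 : ζ ^ (i : ℕ) ≠ 1 := hζ.pow_ne_one_of_pos_of_lt hi0.ne' (by have := i.2; omega)
      have h5 : (ζ ^ (i : ℕ) - 1) * pb.basis.repr e i = 0 := by linear_combination -(h3 i)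
      rcases mul_eq_zero.mp h5 with h | h
      · exact absurd (sub_eq_zero.mp h) h4
      · rw [h, zero_smul]
    · simp
  refine ⟨⟨E, E.val, σ, hpow, ?_, hfix, ?_⟩⟩
  · intro i hi hin h
    have := hσp i
    rw [h, AlgHom.one_apply] at this
    have h6 : algebraMap Φ E (ζ ^ i) = 1 := by
      apply mul_right_cancel₀ hg0; rw [← this, one_mul]
    rw [map_eq_one_iff _ (algebraMap Φ E).injective] at h6
    exact hζ.pow_ne_one_of_pos_of_lt hi.ne' hin h6
  · intro z hz
    have hζ0 : ζ ≠ 0 := hζ.ne_zero hn.ne'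
    let c : Φ →+* E := algebraMap Φ E
    let w : ℕ → E := fun i => ∑ l ∈ Finset.range n, c (ζ⁻¹ ^ (i * l)) * (σ ^ l) z
    have hζi : ζ⁻¹ ^ n = 1 := by rw [inv_pow, hζ.pow_eq_one, inv_one]
    have hσw : ∀ i, σ (w i) = c (ζ ^ i) * w i := by
      intro i
      have e1 : ∀ l, σ (c (ζ⁻¹ ^ (i * l)) * (σ ^ l) z) =
          c (ζ ^ i) * (c (ζ⁻¹ ^ (i * (l + 1))) * (σ ^ (l + 1)) z) := by
        intro l
        rw [map_mul, AlgHom.commutes, ← mul_assoc, ← map_mul, pow_succ', AlgHom.mul_apply]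
        congr 2
        rw [mul_add, pow_add, mul_one, mul_left_comm, ← mul_pow, mul_inv_cancel₀ hζ0, one_pow, mul_one]
      simp only [w, map_sum, e1, ← Finset.mul_sum]
      congr 1
      have := Finset.sum_range_succ' (fun l => c (ζ⁻¹ ^ (i * l)) * (σ ^ l) z) n
      rw [Finset.sum_range_succ] at this
      have e2 : ζ⁻¹ ^ (i * n) = 1 := by rw [mul_comm, pow_mul, hζi, one_pow]
      rw [e2, hpow, mul_zero, pow_zero, pow_zero] at this
      exact (add_right_cancel this).symm
    by_cases hw : ∀ i, 0 < i → i < n → w i = 0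
    · have hsum : ∑ i ∈ Finset.range n, w i = (n : E) * z := by
        simp only [w]
        rw [Finset.sum_comm]
        simp only [← Finset.sum_mul, ← map_sum]
        rw [Finset.sum_eq_single 0]
        · simp
        · intro l hl hl0
          have hp : IsPrimitiveRoot ζ⁻¹ n := hζ.inv
          have h7 : ζ⁻¹ ^ l ≠ 1 := hp.pow_ne_one_of_pos_of_lt hl0 (Finset.mem_range.mp hl)
          have h8 : ∑ i ∈ Finset.range n, ζ⁻¹ ^ (i * l) = 0 := by
            have h9 := mul_geom_sum (ζ⁻¹ ^ l) n
            rw [← pow_mul, mul_comm l n, pow_mul, hζi, one_pow, sub_self] at h9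
            rcases mul_eq_zero.mp h9 with h | h
            · exact absurd (sub_eq_zero.mp h) h7
            · rw [← h]
              refine Finset.sum_congr rfl fun i _ => ?_
              rw [← pow_mul, mul_comm]
          rw [h8, map_zero, zero_mul]
        · intro h; exact absurd (Finset.mem_range.mpr hn) h
      rw [Finset.sum_eq_single 0] at hsum
      · have h10 := hσw 0
        rw [hsum, pow_zero, map_one, one_mul, map_mul, map_natCast] at h10
        refine mul_left_cancel₀ ?_ h10
        rw [← map_natCast (algebraMap Φ E), Ne, map_eq_zero]; exact hnΦ
      · intro i hi hi0; exact hw i (Nat.pos_of_ne_zero hi0) (Finset.mem_range.mp hi)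
      · intro h; exact absurd (Finset.mem_range.mpr hn) h
    · exfalso
      push Not at hw
      obtain ⟨i, hi0, hin, hwi⟩ := hw
      -- w i is algebraic
      have halg : IsAlgebraic k1 (E.val (w i)) := by
        simp only [w, map_sum, map_mul]
        rw [← mem_algebraicClosure_iff]
        refine sum_mem fun l _ => ?_
        rw [mem_algebraicClosure_iff]
        refine IsAlgebraic.mul ?_ (alg_σ_pow E.val σ hz l)
        have : (E.val (c (ζ⁻¹ ^ (i * l)))) ^ n = 1 := by
          rw [← map_pow, ← map_pow, ← pow_mul, mul_comm, pow_mul, hζi]; simp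
        exact IsAlgebraic.of_pow hn (by rw [this]; exact isAlgebraic_one)
      obtain ⟨f, hf⟩ := hfix (w i / pb.gen ^ i) (by
        rw [map_div₀, hσw, map_pow σ, hσ, mul_pow, ← map_pow (algebraMap Φ E)]
        apply mul_div_mul_left
        rw [Ne, map_eq_zero]; exact pow_ne_zero _ hζ0)
      have hf' : w i = c f * pb.gen ^ i := by
        rw [eq_div_iff (pow_ne_zero _ hg0)] at hf; exact hf.symm
      have hf0 : f ≠ 0 := by
        rintro rfl
        rw [map_zero, zero_mul] at hf'
        exact hwi hf'
      have h11 : w i ^ n = c (f ^ n * u ^ i) := by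
        rw [hf', mul_pow, ← pow_mul, mul_comm i n, pow_mul, hgn, map_mul, map_pow, map_pow]
      have h12 : IsAlgebraic k1 (f ^ n * u ^ i) := by
        apply alg_down (Ω := Ω)
        have : algebraMap Φ Ω (f ^ n * u ^ i) = (E.val (w i)) ^ n := by
          rw [← map_pow, h11]; rfl
        rw [this]; exact halg.pow n
      have h13 := hv _ (mul_ne_zero (pow_ne_zero _ hf0) (pow_ne_zero _ hu0)) h12
      obtain ⟨m, hm⟩ := v_int v hf0
      rw [AddValuation.map_mul, v_pow_int v hm, v_pow_int v hvu, ← WithTop.coe_add, ← WithTop.coe_zero,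
        WithTop.coe_inj] at h13
      have h14 : (n : ℤ) ∣ i := ⟨m, by linear_combination -h13⟩
      have := Nat.le_of_dvd hi0 (Int.natCast_dvd_natCast.mp h14)
      omega

end abs
end GES

set_option synthInstance.maxHeartbeats 1000000
set_option maxHeartbeats 1000000
set_option linter.all false
set_option linter.deprecated false
set_option linter.unusedSectionVars false
set_option linter.unusedVariables false

namespace GES
open Polynomial

section as
variable (p : ℕ) [hp : Fact p.Prime]

noncomputable def asPoly {E : Type} [Field E] (a : E) : E[X] := X ^ p - (X + C a)

theorem asPoly_monic {E : Type} [Field E] (a : E) : (asPoly p a).Monic := by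
  apply monic_X_pow_sub
  refine (degree_add_le _ _).trans_lt (max_lt ?_ ?_)
  · rw [degree_X]; exact_mod_cast hp.out.one_lt
  · exact degree_C_le.trans_lt (by exact_mod_cast hp.out.pos)

theorem asPoly_deg {E : Type} [Field E] (a : E) : (asPoly p a).natDegree = p := by
  have : (X + C a).natDegree < p := by rw [natDegree_X_add_C]; exact hp.out.one_lt
  rw [asPoly, natDegree_sub_eq_left_of_natDegree_lt, natDegree_X_pow]
  rwa [natDegree_X_pow]

theorem as_irr {E Ω : Type} [Field E] [Field Ω] [CharP Ω p] (j : E →+* Ω) (a : E) (x : Ω)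
    (hx : x ^ p - x = j a) (hn : ∀ w, j w ≠ x) : Irreducible (asPoly p a) := by
  classical
  letI : Algebra E Ω := j.toAlgebra
  have hj : algebraMap E Ω = j := rfl
  have hroot : aeval x (asPoly p a) = 0 := by
    simp only [asPoly, map_sub, map_pow, map_add, aeval_X, aeval_C, hj]
    linear_combination hx
  have hint : IsIntegral E x := ⟨_, asPoly_monic p a, by rwa [← aeval_def]⟩
  have hdvd := minpoly.dvd _ _ hroot
  have hsub : ∀ y : Ω, y ^ p = y → ∃ w, j w = y := by
    intro y hy
    have : y ∈ (⊥ : Subfield Ω) := (Subfield.mem_bot_iff_pow_eq_self Ω p).mpr hy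
    exact (bot_le (a := j.fieldRange)) this
  have hmapm : ((asPoly p a).map j).Monic := (asPoly_monic p a).map j
  have hrts : ∀ r, r ∈ ((asPoly p a).map j).roots ↔ (r - x) ^ p = r - x := by
    intro r
    rw [mem_roots hmapm.ne_zero, IsRoot.def, eval_map]
    simp only [asPoly, eval₂_sub, eval₂_pow, eval₂_add, eval₂_X, eval₂_C]
    rw [sub_pow_char]
    constructor
    · intro h; linear_combination h - hx
    · intro h; linear_combination h + hx
  have hspl : ((asPoly p a).map j).Splits := by
    rw [splits_iff_card_roots, natDegree_map, asPoly_deg]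
    apply le_antisymm
    · have := card_roots' ((asPoly p a).map j)
      rwa [natDegree_map, asPoly_deg] at this
    · let t : Finset Ω := Finset.univ.image (fun i : ZMod p => x + ZMod.castHom (dvd_refl p) Ω i)
      have ht : t.card = p := by
        rw [Finset.card_image_of_injective, Finset.card_univ, ZMod.card]
        intro i i' h
        exact (ZMod.castHom (dvd_refl p) Ω).injective (add_left_cancel h)
      have hle : t.val ≤ ((asPoly p a).map j).roots := by
        rw [Finset.val_le_iff_val_subset]
        intro r hr
        obtain ⟨i, _, rfl⟩ := Finset.mem_image.mp (Finset.mem_val.mp hr)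
        rw [hrts, add_sub_cancel_left, ← map_pow, ZMod.pow_card]
      have := Multiset.card_le_card hle
      exact ht.symm.le.trans this
  have hdeg : p ≤ (minpoly E x).natDegree := by
    by_contra hlt
    push Not at hlt
    set d := (minpoly E x).natDegree with hd
    have hd0 : 0 < d := minpoly.natDegree_pos hint
    have hmon : ((minpoly E x).map j).Monic := (minpoly.monic hint).map j
    have hs : ((minpoly E x).map j).Splits :=
      hspl.of_dvd hmapm.ne_zero (Polynomial.map_dvd j hdvd)
    have h1 := hs.nextCoeff_eq_neg_sum_roots_of_monic hmon
    rw [nextCoeff_map j.injective] at h1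
    have hcard := splits_iff_card_roots.mp hs
    rw [natDegree_map, ← hd] at hcard
    set s := ((minpoly E x).map j).roots with hsdef
    have h2 : (s.map (fun r => r - x)).sum = s.sum - d * x := by
      rw [Multiset.sum_map_sub, Multiset.map_id', Multiset.map_const', Multiset.sum_replicate, hcard,
        nsmul_eq_mul]
    have h3 : (s.map (fun r => r - x)).sum ∈ j.fieldRange := by
      apply Subfield.multiset_sum_mem
      intro y hy
      obtain ⟨r, hr, rfl⟩ := Multiset.mem_map.mp hy
      have hr' : r ∈ ((asPoly p a).map j).roots :=
        Multiset.subset_of_le (roots.le_of_dvd hmapm.ne_zero (Polynomial.map_dvd j hdvd)) hr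
      exact hsub _ ((hrts r).mp hr')
    have hdΩ : (d : Ω) ≠ 0 := by
      rw [Ne, CharP.cast_eq_zero_iff Ω p]
      exact Nat.not_dvd_of_pos_of_lt hd0 hlt
    have h4 : x ∈ j.fieldRange := by
      have : x = (s.sum - (s.map (fun r => r - x)).sum) / d := by
        rw [h2]; field_simp; ring
      rw [this]
      refine div_mem (sub_mem ?_ h3) (natCast_mem _ _)
      rw [← neg_neg s.sum, ← h1]
      exact neg_mem ⟨_, rfl⟩
    obtain ⟨w, hw⟩ := h4
    exact hn w hw
  have : asPoly p a = minpoly E x := by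
    refine (eq_of_monic_of_dvd_of_natDegree_le (minpoly.monic hint) (asPoly_monic p a) hdvd ?_)
    rw [asPoly_deg]; exact hdeg
  rw [this]
  exact minpoly.irreducible hint

variable {Φ Ω : Type} [Field Φ] [Field Ω] [Algebra Φ Ω] [CharP Ω p]

theorem as_step {E : Type} [Field E] [Algebra Φ E] (j : E →ₐ[Φ] Ω) (σ : E →ₐ[Φ] E) (n : ℕ)
    (hn : σ ^ n = 1) (hfix : ∀ e, σ e = e → ∃ f, algebraMap Φ E f = e) (β a : E)
    (hβ : σ a - a = β ^ p - β) (hTr : ∑ i ∈ Finset.range n, (σ ^ i) β = 1)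
    (x : Ω) (hx : x ^ p - x = j a) (hxn : ∀ w, j w ≠ x) :
    ∃ (E' : Type) (_ : Field E') (_ : Algebra Φ E') (j' : E' →ₐ[Φ] Ω) (σ' : E' →ₐ[Φ] E')
      (i : E →ₐ[Φ] E') (r : E'), (∀ e, σ' (i e) = i (σ e)) ∧ σ' r = r + i β ∧ r ^ p - r = i a ∧
      σ' ^ (n * p) = 1 ∧ σ' ^ n ≠ 1 ∧ (∀ e, σ' e = e → ∃ f, algebraMap Φ E' f = e) := by
  classical
  have hirr := as_irr p j.toRingHom a x hx hxn
  haveI : Fact (Irreducible (asPoly p a)) := ⟨hirr⟩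
  haveI : CharP E p := (j.toRingHom.charP_iff_charP p).mpr inferInstance
  let E' := AdjoinRoot (asPoly p a)
  let i : E →ₐ[Φ] E' := AdjoinRoot.ofAlgHom Φ (asPoly p a)
  let r : E' := AdjoinRoot.root (asPoly p a)
  haveI : CharP E' p := (i.toRingHom.charP_iff_charP p).mp inferInstance
  have hr : r ^ p - r = i a := by
    have : AdjoinRoot.mk (asPoly p a) (asPoly p a) = 0 := AdjoinRoot.mk_self
    have e0 : AdjoinRoot.mk (asPoly p a) (X ^ p - (X + C a)) = 0 := this
    rw [map_sub, map_pow, map_add, AdjoinRoot.mk_X, AdjoinRoot.mk_C] at e0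
    have this := e0
    change r ^ p - (r + i a) = 0 at this
    linear_combination this
  let j' : E' →ₐ[Φ] Ω := AdjoinRoot.liftAlgHom (asPoly p a) j x (by
    simp only [asPoly, eval₂_sub, eval₂_pow, eval₂_add, eval₂_X, eval₂_C]
    have : (j : E →+* Ω) a = j a := rfl
    rw [this]; linear_combination hx)
  let σ' : E' →ₐ[Φ] E' := AdjoinRoot.liftAlgHom (asPoly p a) (i.comp σ) (r + i β) (by
    simp only [asPoly, eval₂_sub, eval₂_pow, eval₂_add, eval₂_X, eval₂_C]
    have : ((i.comp σ : E →ₐ[Φ] E') : E →+* E') a = i (σ a) := rfl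
    rw [this, add_pow_char]
    have h2 := congrArg i hβ
    rw [map_sub, map_sub, map_pow] at h2
    linear_combination hr - h2)
  have hσi : ∀ e, σ' (i e) = i (σ e) := fun e => AdjoinRoot.liftAlgHom_of _ _ _ _ e
  have hσr : σ' r = r + i β := AdjoinRoot.liftAlgHom_root _ _ _ _
  have hσi' : ∀ (l : ℕ) e, (σ' ^ l) (i e) = i ((σ ^ l) e) := by
    intro l
    induction l with
    | zero => intro e; rfl
    | succ l ih => intro e; rw [pow_succ', AlgHom.mul_apply, ih, hσi, pow_succ', AlgHom.mul_apply]
  have hσr' : ∀ l : ℕ, (σ' ^ l) r = r + i (∑ m ∈ Finset.range l, (σ ^ m) β) := by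
    intro l
    induction l with
    | zero => simp
    | succ l ih =>
      rw [pow_succ, AlgHom.mul_apply, hσr, map_add, ih, hσi', Finset.sum_range_succ, map_add, add_assoc]
  have hs : (σ' ^ n) r = r + 1 := by rw [hσr', hTr, map_one]
  have hsi : ∀ e, (σ' ^ n) (i e) = i e := fun e => by rw [hσi', hn]; rfl
  have hsl : ∀ l : ℕ, ((σ' ^ n) ^ l) r = r + l := by
    intro l
    induction l with
    | zero => simp
    | succ l ih => rw [pow_succ, AlgHom.mul_apply, hs, map_add, ih, map_one]; push_cast; ring
  refine ⟨E', inferInstance, inferInstance, j', σ', i, r, hσi, hσr, hr, ?_, ?_, ?_⟩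
  · apply AdjoinRoot.algHom_ext'
    · ext e
      show (σ' ^ (n * p)) (i e) = i e
      rw [hσi', pow_mul, hn, one_pow]; rfl
    · show (σ' ^ (n * p)) r = r
      rw [pow_mul, hsl, CharP.cast_eq_zero, add_zero]
  · intro h
    rw [h] at hs
    have : (1 : E') = 0 := by
      have h3 : r = r + 1 := hs
      linear_combination -h3
    exact one_ne_zero this
  · intro z hz
    have hz' : (σ' ^ n) z = z := by
      have : ∀ l : ℕ, (σ' ^ l) z = z := by
        intro l
        induction l with
        | zero => rfl
        | succ l ih => rw [pow_succ', AlgHom.mul_apply, ih, hz]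
      exact this n
    obtain ⟨g0, hg0⟩ := AdjoinRoot.mk_surjective z
    set g := g0 %ₘ asPoly p a with hg
    have hgz : AdjoinRoot.mk (asPoly p a) g = z := by
      rw [← hg0, hg, AdjoinRoot.mk_eq_mk]
      refine ⟨-(g0 /ₘ asPoly p a), ?_⟩
      have := modByMonic_add_div g0 (asPoly p a)
      linear_combination this
    have hgd : g.natDegree < p := by
      have h4 := natDegree_modByMonic_lt g0 (asPoly_monic p a) (by
        intro h; have := asPoly_deg p a; rw [h, natDegree_one] at this; exact hp.out.pos.ne this)
      rwa [asPoly_deg] at h4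
    have h5 : (σ' ^ n) z = AdjoinRoot.mk (asPoly p a) (g.comp (X + 1)) := by
      rw [← hgz]
      have e1 : ((σ' ^ n : E' →ₐ[Φ] E') : E' →+* E').comp (AdjoinRoot.mk (asPoly p a)) =
          (AdjoinRoot.mk (asPoly p a)).comp (Polynomial.compRingHom (X + 1)) := by
        apply Polynomial.ringHom_ext
        · intro e
          simp only [RingHom.comp_apply, coe_compRingHom_apply, C_comp, AdjoinRoot.mk_C]
          exact hsi e
        · simp only [RingHom.comp_apply, coe_compRingHom_apply, X_comp, AdjoinRoot.mk_X, map_add, map_one]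
          exact hs
      exact DFunLike.congr_fun e1 g
    have h6 : g.comp (X + 1) = g := by
      by_contra hne
      have h7 : g.comp (X + 1) - g ≠ 0 := sub_ne_zero.mpr hne
      refine AdjoinRoot.mk_ne_zero_of_natDegree_lt (asPoly_monic p a) h7 ?_ ?_
      · rw [asPoly_deg]
        refine (natDegree_sub_le _ _).trans_lt (max_lt ?_ hgd)
        refine natDegree_comp_le.trans_lt ?_
        have : (X + 1 : E[X]).natDegree = 1 := natDegree_X_add_C 1
        rw [this, mul_one]; exact hgd
      · rw [map_sub, ← h5, hgz, hz', sub_self]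
    have h8 : ∀ l : ℕ, g.eval (l : E) = g.eval 0 := by
      intro l
      induction l with
      | zero => simp
      | succ l ih =>
        rw [← ih]
        conv_rhs => rw [← h6]
        rw [eval_comp]; simp
    have h9 : g - C (g.eval 0) = 0 := by
      apply Polynomial.eq_zero_of_natDegree_lt_card_of_eval_eq_zero _
        (f := fun l : ZMod p => ZMod.castHom (dvd_refl p) E l) (ZMod.castHom (dvd_refl p) E).injective
      · intro l
        have : ZMod.castHom (dvd_refl p) E l = ((l.val : ℕ) : E) := by
          conv_lhs => rw [← ZMod.natCast_zmod_val l]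
          rw [map_natCast]
        rw [this, eval_sub, eval_C, h8, sub_self]
      · rw [ZMod.card, natDegree_sub_C]; exact hgd
    have h10 : z = i (g.eval 0) := by
      rw [← hgz, sub_eq_zero.mp h9]
      rw [eval_C]; exact AdjoinRoot.mk_C _
    rw [h10, hσi] at hz
    obtain ⟨f, hf⟩ := hfix _ (i.toRingHom.injective hz)
    exact ⟨f, by rw [h10, ← hf, AlgHom.commutes]⟩

end as
end GES

set_option synthInstance.maxHeartbeats 1000000
set_option maxHeartbeats 1000000
set_option linter.all false
set_option linter.deprecated false
set_option linter.unusedSectionVars false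
set_option linter.unusedVariables false

namespace GES
open Polynomial

section as2
variable (p : ℕ) [hp : Fact p.Prime]
variable {k1 Φ Ω : Type} [Field k1] [Field Φ] [Field Ω] [Algebra k1 Φ] [Algebra Φ Ω] [Algebra k1 Ω]
  [IsScalarTower k1 Φ Ω] [CharP Ω p]
variable (v : AddValuation Φ (WithTop ℤ)) (hv : ∀ x : Φ, x ≠ 0 → IsAlgebraic k1 x → v x = 0) (τ : Φ)
  (hτ : v τ = ((-1 : ℤ) : WithTop ℤ))

theorem as_noroot {h : Φ} (hh : v h = ((-1 : ℤ) : WithTop ℤ)) (f : Φ) : f ^ p - f ≠ h := by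
  intro hf
  rw [← hf] at hh
  by_cases hf0 : f = 0
  · rw [hf0, zero_pow hp.out.ne_zero, sub_zero, AddValuation.map_zero] at hh
    exact WithTop.top_ne_coe hh
  obtain ⟨m, hm⟩ := v_int v hf0
  have hpm := v_pow_int v hm p
  have hp1 : (1 : ℤ) < p := by exact_mod_cast hp.out.one_lt
  rcases lt_or_ge m 0 with h0 | h0
  · have : v (f ^ p - f) = v (f ^ p) := by
      apply AddValuation.map_sub_eq_of_lt_left
      rw [hpm, hm, WithTop.coe_lt_coe]
      nlinarith
    rw [this, hpm, WithTop.coe_inj] at hh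
    nlinarith
  · have := AddValuation.map_sub v (f ^ p) f
    rw [hh, hpm, hm, min_le_iff, WithTop.coe_le_coe, WithTop.coe_le_coe] at this
    rcases this with h1 | h1
    · nlinarith
    · omega

include hτ in
theorem as_all (hbase : ∃ x : Ω, x ^ p - x = algebraMap Φ Ω τ)
    (hsol : ∀ a : Ω, ∃ (f : Φ) (x : Ω), x ^ p - x = a - algebraMap Φ Ω f) (e : ℕ) :
    ∃ (E : Type) (_ : Field E) (_ : Algebra Φ E) (j : E →ₐ[Φ] Ω) (σ : E →ₐ[Φ] E) (z : E),
      σ ^ (p ^ (e + 1)) = 1 ∧ σ ^ (p ^ e) ≠ 1 ∧ (∀ e, σ e = e → ∃ f, algebraMap Φ E f = e) ∧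
      z ^ p - z = algebraMap Φ E τ ∧ σ z = z + 1 := by
  classical
  induction e with
  | zero =>
    obtain ⟨x, hx⟩ := hbase
    obtain ⟨E', f1, f2, j', σ', i, r, h1, h2, h3, h4, h5, h6⟩ := as_step p (Algebra.ofId Φ Ω)
      (AlgHom.id Φ Φ) 1 rfl (fun e _ => ⟨e, rfl⟩) 1 τ (by simp) (by simp) x hx (by
        rintro w rfl
        have hx : algebraMap Φ Ω w ^ p - algebraMap Φ Ω w = algebraMap Φ Ω τ := hx
        rw [← map_pow, ← map_sub] at hx
        exact as_noroot p v hτ w ((algebraMap Φ Ω).injective hx))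
    refine ⟨E', f1, f2, j', σ', r, by simpa using h4, by simpa using h5, h6, ?_, by simpa using h2⟩
    rw [h3]; exact i.commutes τ
  | succ e ih =>
    obtain ⟨E, f1, f2, j, σ, z, hpow, hne, hfix, hz, hσz⟩ := ih
    set n := p ^ (e + 1) with hn
    have hn0 : 0 < n := pow_pos hp.out.pos _
    haveI : CharP E p := (j.toRingHom.charP_iff_charP p).mpr inferInstance
    have hord : orderOf σ = n := orderOf_eq_prime_pow hne hpow
    -- trace
    let Tr : E → E := fun w => ∑ l ∈ Finset.range n, (σ ^ l) w
    have hTrσ : ∀ w, Tr (σ w) = Tr w := by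
      intro w
      have h := Finset.sum_range_succ' (fun l => (σ ^ l) w) n
      rw [Finset.sum_range_succ, hpow] at h
      have h' := add_right_cancel h
      simp only [Tr]
      rw [h']
      refine Finset.sum_congr rfl fun l _ => ?_
      rw [pow_succ, AlgHom.mul_apply]
    have hσTr : ∀ w, σ (Tr w) = Tr w := by
      intro w
      conv_rhs => rw [← hTrσ w]
      simp only [Tr, map_sum, ← AlgHom.mul_apply, ← pow_succ, ← pow_succ']
    obtain ⟨w, hw⟩ : ∃ w, Tr w ≠ 0 := by
      by_contra hall
      push Not at hall
      obtain ⟨s, y, hy⟩ := spanning (fun l : Fin n => ((σ ^ (l : ℕ) : E →ₐ[Φ] E) : E →* E)) (by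
        intro l l' h
        have : σ ^ (l : ℕ) = σ ^ (l' : ℕ) := AlgHom.ext fun x => DFunLike.congr_fun h x
        apply Fin.ext
        exact pow_injOn_Iio_orderOf (by rw [hord]; exact l.2) (by rw [hord]; exact l'.2) this)
        (fun l => if l = ⟨0, hn0⟩ then 1 else 0)
      have h1 : ∑ l : Fin n, ∑ b ∈ s, y b * (σ ^ (l : ℕ)) b = 1 := by
        have : ∀ l : Fin n, ∑ b ∈ s, y b * (σ ^ (l : ℕ)) b = if l = ⟨0, hn0⟩ then 1 else 0 := hy
        simp only [this]
        exact (Finset.sum_ite_eq' Finset.univ _ (fun _ => (1 : E))).trans (if_pos (Finset.mem_univ _))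
      rw [Finset.sum_comm] at h1
      have h2 : ∀ b, ∑ l : Fin n, y b * (σ ^ (l : ℕ)) b = y b * Tr b := by
        intro b
        rw [← Finset.mul_sum, Fin.sum_univ_eq_sum_range (fun l => (σ ^ l) b) n]
      simp only [h2, hall, mul_zero, Finset.sum_const_zero] at h1
      exact zero_ne_one h1
    obtain ⟨f, hf⟩ := hfix _ (hσTr w)
    have hf0 : f ≠ 0 := by rintro rfl; rw [map_zero] at hf; exact hw hf.symm
    let β : E := algebraMap Φ E f⁻¹ * w
    have hTrβ : Tr β = 1 := by
      simp only [Tr, β, map_mul, AlgHom.commutes, ← Finset.mul_sum]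
      change algebraMap Φ E f⁻¹ * Tr w = 1
      rw [← hf, ← map_mul, inv_mul_cancel₀ hf0, map_one]
    let c : E := β ^ p - β
    have hTrc : Tr c = 0 := by
      have : Tr (β ^ p) = (Tr β) ^ p := by
        simp only [Tr]; rw [sum_pow_char]; simp
      have h2 : Tr c = Tr (β ^ p) - Tr β := by simp [Tr, c]
      rw [h2, this, hTrβ, one_pow, sub_self]
    let S : ℕ → E := fun l => ∑ m ∈ Finset.range l, (σ ^ m) c
    have hS : ∀ l, σ (S l) = S (l + 1) - c := by
      intro l
      simp only [S, map_sum, Finset.sum_range_succ', pow_zero, AlgHom.one_apply, add_sub_cancel_right]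
      refine Finset.sum_congr rfl fun m _ => ?_
      rw [pow_succ', AlgHom.mul_apply]
    let a0 : E := - ∑ l ∈ Finset.range n, S l * (σ ^ l) β
    have ha0 : σ a0 - a0 = c := by
      have h1 : σ (∑ l ∈ Finset.range n, S l * (σ ^ l) β) =
          ∑ l ∈ Finset.range n, S (l + 1) * (σ ^ (l + 1)) β - c := by
        have h2 : ∀ l, σ (S l * (σ ^ l) β) = S (l + 1) * (σ ^ (l + 1)) β - c * (σ ^ l) (σ β) := by
          intro l
          rw [map_mul, hS, ← AlgHom.mul_apply, ← pow_succ', ← AlgHom.mul_apply, ← pow_succ]; ring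
        simp only [map_sum, h2, Finset.sum_sub_distrib, ← Finset.mul_sum]
        have h3 : ∑ l ∈ Finset.range n, (σ ^ l) (σ β) = 1 := by rw [← hTrβ, ← hTrσ β]
        rw [h3, mul_one]
      have h4 := Finset.sum_range_succ' (fun l => S l * (σ ^ l) β) n
      rw [Finset.sum_range_succ] at h4
      have h5 : S n = 0 := hTrc
      have h6 : S 0 = 0 := rfl
      rw [h5, h6, zero_mul, zero_mul, add_zero, add_zero] at h4
      simp only [a0]
      rw [map_neg, h1, ← h4]; ring
    obtain ⟨f', x, hx⟩ := hsol (j a0)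
    let a : E := a0 - algebraMap Φ E f'
    have ha : σ a - a = β ^ p - β := by
      simp only [a, map_sub, AlgHom.commutes]
      rw [← show c = β ^ p - β from rfl, ← ha0]; ring
    obtain ⟨E', f1', f2', j', σ', i, r, h1, h2, h3, h4, h5, h6⟩ := as_step p j σ n hpow hfix β a ha hTrβ x
      (by rw [hx]; simp [a]) (by
        rintro w rfl
        have hw : w ^ p - w = a := by
          apply j.toRingHom.injective
          show j _ = j _
          rw [map_sub, map_pow, hx]; simp [a]
        let δ := σ w - w - β
        have hδ : δ ^ p = δ := by
          have e1 := congrArg σ hw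
          rw [map_sub, map_pow] at e1
          simp only [δ]
          rw [sub_pow_char, sub_pow_char]
          linear_combination e1 - hw + ha
        have hδ' : ∀ l : ℕ, (σ ^ l) δ = δ := by
          have : δ ∈ (⊥ : Subfield E) := (Subfield.mem_bot_iff_pow_eq_self E p).mpr hδ
          have hle : (⊥ : Subfield E) ≤ (algebraMap Φ E).fieldRange := bot_le
          obtain ⟨d, hd⟩ := hle this
          intro l; rw [← hd, AlgHom.commutes]
        have h7 : Tr δ = 0 := by
          simp only [Tr, hδ', Finset.sum_const, Finset.card_range, nsmul_eq_mul]
          rw [hn]; push_cast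
          rw [CharP.cast_eq_zero, zero_pow (by omega), zero_mul]
        have h8 : Tr δ = Tr (σ w) - Tr w - Tr β := by simp [Tr, δ]
        rw [h7, hTrσ, hTrβ, sub_self, zero_sub] at h8
        exact one_ne_zero (neg_eq_zero.mp h8.symm))
    refine ⟨E', f1', f2', j', σ', i z, ?_, h5, h6, ?_, ?_⟩
    · rw [pow_succ]; exact h4
    · rw [← map_pow, ← map_sub, hz, AlgHom.commutes]
    · rw [h1, hσz, map_add, map_one]

include hv hτ in
theorem as_LA (hbase : ∃ x : Ω, x ^ p - x = algebraMap Φ Ω τ)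
    (hsol : ∀ a : Ω, ∃ (f : Φ) (x : Ω), x ^ p - x = a - algebraMap Φ Ω f) (e : ℕ) :
    Nonempty (LA k1 Φ Ω (p ^ (e + 1))) := by
  obtain ⟨E, f1, f2, j, σ, z1, hpow, hne, hfix, hz1, hσz1⟩ := as_all p v τ hτ hbase hsol e
  haveI : CharP E p := (j.toRingHom.charP_iff_charP p).mpr inferInstance
  have hord : orderOf σ = p ^ (e + 1) := orderOf_eq_prime_pow hne hpow
  refine ⟨⟨E, j, σ, hpow, fun i hi hin h => ?_, hfix, fun z hz => ?_⟩⟩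
  · have := Nat.le_of_dvd hi (orderOf_dvd_of_pow_eq_one h)
    omega
  · by_contra hσ
    let N : Module.End Φ E := σ.toLinearMap - 1
    have hN : ∀ w, N w = σ w - w := fun w => rfl
    haveI : CharP Φ p := ((algebraMap Φ E).charP_iff_charP p).mpr inferInstance
    haveI : CharP (Module.End Φ E) p := charP_of_injective_algebraMap (algebraMap Φ _).injective p
    have hNp : N ^ (p ^ (e + 1)) = 0 := by
      have hc : Commute (σ.toLinearMap : Module.End Φ E) 1 := Commute.one_right _
      simp only [N]
      rw [sub_pow_char_pow_of_commute _ _ hc, one_pow]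
      have : (σ.toLinearMap : Module.End Φ E) ^ (p ^ (e + 1)) = (σ ^ (p ^ (e + 1))).toLinearMap := by
        ext w
        simp [Module.End.pow_apply, AlgHom.coe_pow]
      rw [this, hpow]
      ext w; simp
    have hex : ∃ r, (N ^ (r + 1)) z = 0 := by
      refine ⟨p ^ (e + 1), ?_⟩
      rw [pow_succ', Module.End.mul_apply, hNp]; simp
    classical
    let r := Nat.find hex
    have hr1 : (N ^ (r + 1)) z = 0 := Nat.find_spec hex
    have hr0 : r ≠ 0 := by
      intro h0
      rw [h0, zero_add, pow_one, hN] at hr1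
      exact hσ (sub_eq_zero.mp hr1)
    obtain ⟨q, hq⟩ := Nat.exists_eq_succ_of_ne_zero hr0
    have hr2 : (N ^ (q + 1)) z ≠ 0 := Nat.find_min hex (show q < r by omega)
    let w := (N ^ q) z
    let c := N w
    have hc0 : c ≠ 0 := by
      intro h; apply hr2; rw [pow_succ', Module.End.mul_apply]; exact h
    have hNc : N c = 0 := by
      rw [hq] at hr1
      rw [Nat.succ_eq_add_one, pow_succ', pow_succ', Module.End.mul_apply, Module.End.mul_apply] at hr1
      exact hr1
    have halgN : ∀ x, IsAlgebraic k1 (j x) → IsAlgebraic k1 (j (N x)) := by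
      intro x hx
      rw [hN, map_sub]
      exact (alg_σ j σ hx).sub hx
    have hwalg : IsAlgebraic k1 (j w) := by
      have : ∀ q : ℕ, IsAlgebraic k1 (j ((N ^ q) z)) := by
        intro q
        induction q with
        | zero => simpa using hz
        | succ q ih => rw [pow_succ', Module.End.mul_apply]; exact halgN _ ih
      exact this q
    have hcalg : IsAlgebraic k1 (j c) := halgN _ hwalg
    let u := w / c
    have hσc : σ c = c := by rw [hN] at hNc; exact sub_eq_zero.mp hNc
    have hσw : σ w = w + c := by
      have : c = σ w - w := rfl
      rw [this]; ring
    have hσu : σ u = u + 1 := by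
      simp only [u]
      rw [map_div₀, hσc, hσw, add_div, div_self hc0]
    have hualg : IsAlgebraic k1 (j u) := by
      simp only [u]; rw [map_div₀, div_eq_mul_inv]
      exact hwalg.mul hcalg.inv
    obtain ⟨f, hf⟩ := hfix (u - z1) (by rw [map_sub, hσu, hσz1]; ring)
    let g := f ^ p - f + τ
    have hg : u ^ p - u = algebraMap Φ E g := by
      have : u = z1 + algebraMap Φ E f := by rw [hf]; ring
      rw [this, add_pow_char]
      simp only [g, map_add, map_sub, map_pow]
      linear_combination hz1
    have hgalg : IsAlgebraic k1 g := by
      apply alg_down (Ω := Ω)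
      rw [← j.commutes, ← hg, map_sub, map_pow]
      exact (hualg.pow p).sub hualg
    have hvg : v (g - τ) = ((-1 : ℤ) : WithTop ℤ) := by
      by_cases hg0 : g = 0
      · rw [hg0, zero_sub, AddValuation.map_neg, hτ]
      · rw [AddValuation.map_sub_swap, AddValuation.map_sub_eq_of_lt_left, hτ]
        rw [hτ, hv g hg0 hgalg, ← WithTop.coe_zero, WithTop.coe_lt_coe]; norm_num
    exact as_noroot p v hvg f (by simp [g])

end as2
end GES

set_option synthInstance.maxHeartbeats 1000000
set_option maxHeartbeats 1000000
set_option linter.all false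
set_option linter.deprecated false
set_option linter.unusedSectionVars false
set_option linter.unusedVariables false

namespace GES

open Polynomial in
theorem hens {D : Type} [Field D] (f : Polynomial (PowerSeries D)) (hf : f.Monic) (a0 : PowerSeries D)
    (h0 : PowerSeries.constantCoeff (f.eval a0) = 0)
    (h1 : PowerSeries.constantCoeff (f.derivative.eval a0) ≠ 0) : ∃ a, f.eval a = 0 := by
  haveI : HenselianRing (PowerSeries D) (Ideal.span {(PowerSeries.X : PowerSeries D)}) := inferInstance
  obtain ⟨a, ha, _⟩ := HenselianRing.is_henselian (I := Ideal.span {(PowerSeries.X : PowerSeries D)}) f hf a0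
    (by rw [Ideal.mem_span_singleton]; exact PowerSeries.X_dvd_iff.mpr h0)
    (by
      have : IsUnit (f.derivative.eval a0) := PowerSeries.isUnit_iff_constantCoeff.mpr h1.isUnit
      exact this.map _)
  exact ⟨a, ha⟩

theorem hens_root {D : Type} [Field D] (n : ℕ) (hn : n ≠ 0) (hnD : (n : D) ≠ 0) (u : PowerSeries D)
    (hu : PowerSeries.constantCoeff u = 1) : ∃ a, a ^ n = u := by
  obtain ⟨a, ha⟩ := hens (Polynomial.X ^ n - Polynomial.C u) (Polynomial.monic_X_pow_sub_C u hn) 1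
    (by simp [hu]) (by simpa [Polynomial.derivative_X_pow] using hnD)
  refine ⟨a, ?_⟩
  simpa [sub_eq_zero] using ha

theorem hens_as {D : Type} [Field D] (p : ℕ) [hp : Fact p.Prime] [CharP D p] (u : PowerSeries D)
    (hu : PowerSeries.constantCoeff u = 0) : ∃ a, a ^ p - a = u := by
  have hm : (Polynomial.X ^ p - (Polynomial.X + Polynomial.C u)).Monic := by
    apply Polynomial.monic_X_pow_sub
    rw [Polynomial.degree_X_add_C]
    exact_mod_cast hp.out.one_lt
  obtain ⟨a, ha⟩ := hens _ hm 0
    (by simp [hu, hp.out.ne_zero]) (by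
      simp [Polynomial.derivative_X_pow])
  refine ⟨a, ?_⟩
  have : a ^ p - (a + u) = 0 := by simpa using ha
  linear_combination this

section swap
variable {K : Type} [Field K]

noncomputable def swap : PowerSeries (PowerSeries K) →+* PowerSeries (PowerSeries K) where
  toFun f := PowerSeries.mk fun n => PowerSeries.mk fun m => PowerSeries.coeff n (PowerSeries.coeff m f)
  map_one' := by
    ext n m
    simp only [PowerSeries.coeff_mk, PowerSeries.coeff_one]
    split_ifs <;> simp_all [PowerSeries.coeff_one]
  map_zero' := by ext n m; simp
  map_add' f g := by ext n m; simp
  map_mul' f g := by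
    ext n m
    simp only [PowerSeries.coeff_mk, PowerSeries.coeff_mul, map_sum]
    rw [Finset.sum_comm]

theorem swap_coeff (f : PowerSeries (PowerSeries K)) (n m : ℕ) :
    PowerSeries.coeff m (PowerSeries.coeff n (swap f)) = PowerSeries.coeff n (PowerSeries.coeff m f) := by
  simp [swap]

theorem swap_inj : Function.Injective (swap (K := K)) := by
  intro f g h
  ext n m
  rw [← swap_coeff, h, swap_coeff]

theorem swap_X : swap (K := K) PowerSeries.X = PowerSeries.C PowerSeries.X := by
  ext n m
  rw [swap_coeff, PowerSeries.coeff_X, PowerSeries.coeff_C]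
  split_ifs <;> simp_all [PowerSeries.coeff_X, PowerSeries.coeff_one]

theorem swap_CX : swap (K := K) (PowerSeries.C PowerSeries.X) = PowerSeries.X := by
  ext n m
  rw [swap_coeff, PowerSeries.coeff_X, PowerSeries.coeff_C]
  split_ifs <;> simp_all [PowerSeries.coeff_X, PowerSeries.coeff_one]

theorem swap_map {F : Type} [Field F] [Algebra F K] (f : PowerSeries F) :
    swap (K := K) (PowerSeries.map (algebraMap F (PowerSeries K)) f) =
      PowerSeries.C (PowerSeries.map (algebraMap F K) f) := by
  ext n m
  rw [swap_coeff, PowerSeries.coeff_map, PowerSeries.coeff_C, PowerSeries.algebraMap_apply, PowerSeries.coeff_C]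
  split_ifs <;> simp

noncomputable def wΘ : FractionRing (PowerSeries (PowerSeries K)) →+* LaurentSeries (LaurentSeries K) :=
  IsFractionRing.lift (g := (psΩ (PowerSeries K) (LaurentSeries K)).comp swap)
    ((psΩ_inj (PowerSeries K) (LaurentSeries K)).comp swap_inj)

theorem wΘ_alg (f : PowerSeries (PowerSeries K)) : wΘ (algebraMap _ (FractionRing (PowerSeries (PowerSeries K))) f) =
    psΩ (PowerSeries K) (LaurentSeries K) (swap f) := by
  simp [wΘ]

variable (K) in
noncomputable def vΦ : AddValuation (FractionRing (PowerSeries (PowerSeries K))) (WithTop ℤ) :=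
  (HahnSeries.addVal ℤ (LaurentSeries K)).comap wΘ

theorem vΦ_apply (x) : vΦ K x = (wΘ x).orderTop := rfl

theorem order_alg {K1 : Type} [Field K1] (z : LaurentSeries K1) (hz : z ≠ 0)
    (h : AlgOver (HahnSeries.C : K1 →+* LaurentSeries K1) z) : z.orderTop = 0 := by
  letI : Algebra K1 (LaurentSeries K1) := (HahnSeries.C : K1 →+* LaurentSeries K1).toAlgebra
  have h1 : IsAlgebraic K1 z := h
  have key : ∀ y : LaurentSeries K1, IsAlgebraic K1 y → 0 ≤ y.orderTop := by
    intro y hy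
    obtain ⟨q, hq, hq0⟩ := hy.isIntegral
    have h2 : IsIntegral (PowerSeries K1) y := by
      refine ⟨q.map PowerSeries.C, hq.map _, ?_⟩
      rw [Polynomial.eval₂_map]
      have hh : (algebraMap (PowerSeries K1) (LaurentSeries K1)).comp PowerSeries.C =
          algebraMap K1 (LaurentSeries K1) := by
        ext1 a
        simp [RingHom.algebraMap_toAlgebra]
      rw [hh]; exact hq0
    obtain ⟨s, rfl⟩ := IsIntegrallyClosed.isIntegral_iff.mp h2
    by_contra hlt
    push Not at hlt
    rcases eq_or_ne (algebraMap (PowerSeries K1) (LaurentSeries K1) s) 0 with h0 | h0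
    · rw [h0] at hlt; simp at hlt
    · rw [← HahnSeries.order_eq_orderTop_of_ne_zero h0] at hlt
      have hlt' : (algebraMap (PowerSeries K1) (LaurentSeries K1) s).order < 0 := by exact_mod_cast hlt
      apply mt HahnSeries.coeff_order_eq_zero.mp h0
      rw [LaurentSeries.coe_algebraMap, PowerSeries.coeff_coe]; exact if_pos hlt'
  have ha := key z h1
  have hb := key z⁻¹ h1.inv
  have hab : z.orderTop + (z⁻¹).orderTop = 0 := by
    rw [← HahnSeries.orderTop_mul, mul_inv_cancel₀ hz, HahnSeries.orderTop_one]
  refine le_antisymm ?_ ha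
  rw [← hab]
  exact le_add_of_nonneg_right hb

end swap

section conc
variable (F K : Type) [Field F] [Field K] [Algebra F K]

theorem κ_inj : Function.Injective ((algebraMap (PowerSeries (PowerSeries K))
    (FractionRing (PowerSeries (PowerSeries K)))).comp
    (PowerSeries.map (algebraMap F (PowerSeries K)))) := by
  rw [RingHom.coe_comp]
  refine (IsFractionRing.injective _ _).comp ?_
  intro x y h
  ext n
  apply (algebraMap F (PowerSeries K)).injective
  rw [← PowerSeries.coeff_map, ← PowerSeries.coeff_map, h]

noncomputable def κ : LaurentSeries F →+* FractionRing (PowerSeries (PowerSeries K)) :=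
  IsFractionRing.lift (κ_inj F K)

theorem laurent_ext {F B : Type} [Field F] [CommRing B] (f g : LaurentSeries F →+* B)
    (h : ∀ x : PowerSeries F, f (x : LaurentSeries F) = g (x : LaurentSeries F)) : f = g := by
  apply IsLocalization.ringHom_ext (nonZeroDivisors (PowerSeries F))
  ext1 x
  exact h x

theorem κ_coe (x : PowerSeries F) : κ F K (x : LaurentSeries F) =
    algebraMap _ _ (PowerSeries.map (algebraMap F (PowerSeries K)) x) :=
  IsFractionRing.lift_algebraMap (κ_inj F K) x

theorem κ_Ω : (F2Ω (PowerSeries K) (LaurentSeries K)).comp (κ F K) =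
    mapL ((algebraMap (PowerSeries K) (LaurentSeries K)).comp (algebraMap F (PowerSeries K))) := by
  apply laurent_ext
  intro x
  rw [RingHom.comp_apply, κ_coe, F2Ω_algebraMap, mapL_ofPS]
  simp only [psΩ, RingHom.comp_apply]
  congr 1

theorem κ_w : (wΘ).comp (κ F K) = (HahnSeries.C : LaurentSeries K →+* LaurentSeries (LaurentSeries K)).comp
    (mapL (algebraMap F K)) := by
  apply laurent_ext
  intro x
  rw [RingHom.comp_apply, κ_coe, wΘ_alg, swap_map, RingHom.comp_apply, mapL_ofPS]
  simp [psΩ]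

theorem vΦ_const (x : FractionRing (PowerSeries (PowerSeries K))) (hx : x ≠ 0)
    (h : AlgOver (κ F K) x) : vΦ K x = 0 := by
  rw [vΦ_apply]
  apply order_alg _ (by rwa [Ne, map_eq_zero])
  obtain ⟨p, hp, h⟩ := h.map wΘ
  rw [κ_w, ← Polynomial.eval₂_map] at h
  exact ⟨_, by rwa [Ne, Polynomial.map_eq_zero_iff (mapL_injective (algebraMap F K).injective)], h⟩

noncomputable def τΦ : FractionRing (PowerSeries (PowerSeries K)) :=
  algebraMap (PowerSeries (PowerSeries K)) _ PowerSeries.X /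
    algebraMap (PowerSeries (PowerSeries K)) _ (PowerSeries.C PowerSeries.X)

theorem τΦ_v : vΦ K (τΦ K) = ((-1 : ℤ) : WithTop ℤ) := by
  rw [vΦ_apply, τΦ, map_div₀, wΘ_alg, wΘ_alg, swap_X, swap_CX]
  have h1 : psΩ (PowerSeries K) (LaurentSeries K) (PowerSeries.C PowerSeries.X) =
    HahnSeries.single 0 (HahnSeries.single 1 1) := by
    simp only [psΩ, RingHom.comp_apply, PowerSeries.map_C, HahnSeries.ofPowerSeries_C, LaurentSeries.coe_algebraMap, HahnSeries.ofPowerSeries_X]; rfl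
  have h2 : psΩ (PowerSeries K) (LaurentSeries K) PowerSeries.X =
    HahnSeries.single 1 1 := by simp [psΩ]
  rw [h1, h2, div_eq_mul_inv, HahnSeries.inv_single, HahnSeries.single_mul_single, HahnSeries.orderTop_single]
  · rfl
  · simp

theorem τΦ_Ω : F2Ω (PowerSeries K) (LaurentSeries K) (τΦ K) =
    ((PowerSeries.C (HahnSeries.single (-1) 1) * PowerSeries.X : PowerSeries (LaurentSeries K)) :
      LaurentSeries (LaurentSeries K)) := by
  rw [τΦ, map_div₀, F2Ω_algebraMap, F2Ω_algebraMap]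
  have h1 : psΩ (PowerSeries K) (LaurentSeries K) (PowerSeries.C PowerSeries.X) =
    HahnSeries.single 0 (HahnSeries.single 1 1) := by
    simp only [psΩ, RingHom.comp_apply, PowerSeries.map_C, HahnSeries.ofPowerSeries_C, LaurentSeries.coe_algebraMap, HahnSeries.ofPowerSeries_X]; rfl
  have h2 : psΩ (PowerSeries K) (LaurentSeries K) PowerSeries.X =
    HahnSeries.single 1 1 := by simp [psΩ]
  rw [h1, h2, div_eq_mul_inv, HahnSeries.inv_single, HahnSeries.inv_single, HahnSeries.single_mul_single]
  simp

theorem LD_of {n : ℕ}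
    (h : letI := (F2Ω (PowerSeries K) (LaurentSeries K)).toAlgebra
      letI := (κ F K).toAlgebra
      letI := ((F2Ω (PowerSeries K) (LaurentSeries K)).comp (κ F K)).toAlgebra
      Nonempty (LA (LaurentSeries F) (FractionRing (PowerSeries (PowerSeries K)))
        (LaurentSeries (LaurentSeries K)) n)) :
    Nonempty (LD F (PowerSeries K) (LaurentSeries K) n) := by
  letI := (F2Ω (PowerSeries K) (LaurentSeries K)).toAlgebra
  letI := (κ F K).toAlgebra
  letI := ((F2Ω (PowerSeries K) (LaurentSeries K)).comp (κ F K)).toAlgebra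
  obtain ⟨E, j, σ, hpow, hd, hfix, hc⟩ := h
  have hpw : ∀ i : ℕ, ((σ : E →+* E) ^ i) = ((σ ^ i : E →ₐ[_] E) : E →+* E) := by
    intro i
    induction i with
    | zero => rfl
    | succ i ih => rw [pow_succ, pow_succ, ih]; rfl
  refine ⟨⟨E, (j : E →+* _), (σ : E →+* E), ?_, ?_, ?_, ?_, ?_⟩⟩
  · rw [hpw, hpow]; rfl
  · intro i h0 hi h
    rw [hpw] at h
    exact hd i h0 hi (AlgHom.ext fun x => DFunLike.congr_fun h x)
  · intro e
    constructor
    · intro he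
      obtain ⟨f, rfl⟩ := hfix e he
      exact ⟨f, (j.commutes f).symm⟩
    · rintro ⟨f, hf⟩
      have : e = algebraMap _ E f := by
        apply j.injective
        exact hf.symm.trans (j.commutes f).symm
      rw [this]; exact σ.commutes f
  · rintro x ⟨f, rfl⟩
    exact ⟨algebraMap _ E f, j.commutes f⟩
  · intro e he
    rw [← κ_Ω] at he
    exact hc e he

theorem LD_kummer (n : ℕ) (hn : 0 < n) (hnK : (n : K) ≠ 0) (ζ : K) (hζ : IsPrimitiveRoot ζ n) :
    Nonempty (LD F (PowerSeries K) (LaurentSeries K) n) := by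
  apply LD_of
  letI := (F2Ω (PowerSeries K) (LaurentSeries K)).toAlgebra
  letI := (κ F K).toAlgebra
  letI := ((F2Ω (PowerSeries K) (LaurentSeries K)).comp (κ F K)).toAlgebra
  haveI : IsScalarTower (LaurentSeries F) (FractionRing (PowerSeries (PowerSeries K)))
        (LaurentSeries (LaurentSeries K)) := IsScalarTower.of_algebraMap_eq fun x => rfl
  let inc : K →+* FractionRing (PowerSeries (PowerSeries K)) := (algebraMap _ _).comp
    ((PowerSeries.C).comp PowerSeries.C)
  have hnD : (n : LaurentSeries K) ≠ 0 := by
    rw [← map_natCast (HahnSeries.C : K →+* LaurentSeries K)]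
    rwa [Ne, map_eq_zero]
  obtain ⟨y, hy⟩ := hens_root n hn.ne' hnD
    (1 + PowerSeries.C (HahnSeries.single (-1) 1) * PowerSeries.X : PowerSeries (LaurentSeries K)) (by simp)
  refine kummer (k1 := LaurentSeries F) (vΦ K) (fun x hx h => vΦ_const F K x hx h) (τΦ K) (τΦ_v K) n hn (inc ζ)
    (hζ.map_of_injective inc.injective) ?_ (y : LaurentSeries (LaurentSeries K)) ?_
  · rw [← map_natCast inc]
    rwa [Ne, map_eq_zero]
  · change _ = F2Ω (PowerSeries K) (LaurentSeries K) _
    rw [map_add, map_one, τΦ_Ω, ← map_pow, hy, map_add, map_one]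

theorem LD_as (p : ℕ) [hp : Fact p.Prime] [CharP K p] (e : ℕ) :
    Nonempty (LD F (PowerSeries K) (LaurentSeries K) (p ^ (e + 1))) := by
  apply LD_of
  letI := (F2Ω (PowerSeries K) (LaurentSeries K)).toAlgebra
  letI := (κ F K).toAlgebra
  letI := ((F2Ω (PowerSeries K) (LaurentSeries K)).comp (κ F K)).toAlgebra
  haveI : IsScalarTower (LaurentSeries F) (FractionRing (PowerSeries (PowerSeries K)))
        (LaurentSeries (LaurentSeries K)) := IsScalarTower.of_algebraMap_eq fun x => rfl
  haveI : CharP (LaurentSeries K) p :=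
    ((HahnSeries.C : K →+* LaurentSeries K).charP_iff_charP p).mp inferInstance
  haveI : CharP (LaurentSeries (LaurentSeries K)) p :=
    ((HahnSeries.C : LaurentSeries K →+* LaurentSeries (LaurentSeries K)).charP_iff_charP p).mp inferInstance
  refine as_LA (k1 := LaurentSeries F) p (vΦ K) (fun x hx h => vΦ_const F K x hx h) (τΦ K) (τΦ_v K) ?_ ?_ e
  · obtain ⟨y, hy⟩ := hens_as p
      (PowerSeries.C (HahnSeries.single (-1) 1) * PowerSeries.X : PowerSeries (LaurentSeries K)) (by simp)
    refine ⟨(y : LaurentSeries (LaurentSeries K)), ?_⟩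
    change _ = F2Ω (PowerSeries K) (LaurentSeries K) _
    rw [τΦ_Ω, ← map_pow, ← map_sub, hy]
  · intro a
    obtain ⟨_, ⟨f, rfl⟩, hf⟩ := approx (PowerSeries K) a 1
    obtain ⟨u, hu⟩ : ∃ u : PowerSeries (LaurentSeries K), (u : LaurentSeries (LaurentSeries K)) =
        a - F2Ω (PowerSeries K) (LaurentSeries K) f := by
      refine ⟨PowerSeries.mk fun n => (a - F2Ω (PowerSeries K) (LaurentSeries K) f).coeff n, ?_⟩
      ext1
      funext n
      rw [PowerSeries.coeff_coe]
      split_ifs with h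
      · rw [hf n (by push_cast; omega)]
      · rw [PowerSeries.coeff_mk]
        congr 1; omega
    obtain ⟨y, hy⟩ := hens_as p u (by
      have := hf 0 (by norm_num)
      rw [← hu, PowerSeries.coeff_coe] at this
      simpa using this)
    refine ⟨f, (y : LaurentSeries (LaurentSeries K)), ?_⟩
    change _ = _ - F2Ω (PowerSeries K) (LaurentSeries K) _
    rw [← map_pow, ← map_sub, hy, hu]

end conc
end GES

set_option synthInstance.maxHeartbeats 1000000
set_option maxHeartbeats 1000000
set_option linter.all false
set_option linter.deprecated false
set_option linter.unusedSectionVars false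
set_option linter.unusedVariables false

namespace GES

/-- regularity witness -/
def Reg (k K : Type) [Field k] [Field K] [Algebra k K] : Prop :=
  ∃ (Ω : Type) (_ : Field Ω) (u : AlgebraicClosure k →+* Ω) (i : K →+* Ω) (J : Type)
    (b : Module.Basis J k (AlgebraicClosure k)),
    (∀ a : k, u (algebraMap _ _ a) = i (algebraMap _ _ a)) ∧
    ∀ (t : Finset J) (c : J → K), ∑ x ∈ t, u (b x) * i (c x) = 0 → ∀ x ∈ t, c x = 0

theorem Reg.sub {k K : Type} [Field k] [Field K] [Algebra k K] (h : Reg k K) (k0 : IntermediateField k K) :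
    Reg k k0 := by
  obtain ⟨Ω, f, u, i, J, b, h1, h2⟩ := h
  refine ⟨Ω, f, u, i.comp (algebraMap k0 K), J, b, h1, fun t c hc x hx => ?_⟩
  have := h2 t (fun x => (c x : K)) hc x hx
  exact Subtype.ext this

theorem Reg.isDomain {k K : Type} [Field k] [Field K] [Algebra k K] (h : Reg k K) :
    IsDomain (TensorProduct k (AlgebraicClosure k) K) := by
  obtain ⟨Ω, f, u, i, J, b, h1, h2⟩ := h
  letI : Algebra k Ω := (i.comp (algebraMap k K)).toAlgebra
  let u' : AlgebraicClosure k →ₐ[k] Ω := { u with commutes' := h1 }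
  let i' : K →ₐ[k] Ω := { i with commutes' := fun _ => rfl }
  let m : TensorProduct k (AlgebraicClosure k) K →ₐ[k] Ω := Algebra.TensorProduct.productMap u' i'
  have hm : Function.Injective m := by
    rw [injective_iff_map_eq_zero]
    intro x hx
    obtain ⟨c, rfl⟩ := TensorProduct.eq_repr_basis_left b x
    have : ∑ x ∈ c.support, u (b x) * i (c x) = 0 := by
      rw [Finsupp.sum, map_sum] at hx
      simpa [m, u', i'] using hx
    have := h2 _ _ this
    exact Finset.sum_eq_zero fun x hx => by simp [this x hx]
  exact hm.isDomain m.toRingHom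

theorem ratFunc_const {F : Type} [Field F] (r : RatFunc F) (h : IsAlgebraic F r) :
    ∃ a : F, algebraMap F (RatFunc F) a = r := by
  have h1 : IsIntegral (Polynomial F) r := h.isIntegral.tower_top
  obtain ⟨p, rfl⟩ := IsIntegrallyClosed.isIntegral_iff.mp h1
  have h2 : IsAlgebraic F p := (isAlgebraic_algebraMap_iff (IsFractionRing.injective _ _)).mp h
  by_cases hp : p.natDegree = 0
  · rw [Polynomial.natDegree_eq_zero] at hp
    obtain ⟨a, rfl⟩ := hp
    exact ⟨a, by rfl⟩
  · exfalso
    obtain ⟨q, hq, hq0⟩ := h2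
    rw [Polynomial.aeval_def] at hq0
    have hq0 : q.comp p = 0 := hq0
    rw [Polynomial.comp_eq_zero_iff] at hq0
    rcases hq0 with h | ⟨_, h⟩
    · exact hq h
    · apply hp; rw [h, Polynomial.natDegree_C]

theorem fg_top_adjoin {k K : Type} [Field k] [Field K] [Algebra k K] (s : Finset K) :
    ∃ t : Finset (IntermediateField.adjoin k (s : Set K)), IntermediateField.adjoin k (t : Set (IntermediateField.adjoin k (s : Set K))) = ⊤ := by
  have := IntermediateField.fg_adjoin_finset (F := k) s
  have h2 := (IntermediateField.essFiniteType_iff).mpr this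
  exact IntermediateField.fg_top k _

end GES

set_option synthInstance.maxHeartbeats 1000000
set_option maxHeartbeats 1000000
set_option linter.all false
set_option linter.deprecated false
set_option linter.unusedSectionVars false
set_option linter.unusedVariables false

namespace GES

theorem final {k G L : Type} [Field k] [Group G] [Finite G] [Field L] [Algebra k L] [FiniteDimensional k L]
  {α : G →* (L ≃ₐ[k] L)} (hα : Function.Surjective α) {k0 E0 : Type} [Field k0] [Algebra k k0] [Field E0]
  [Algebra (RatFunc k0) E0] [FiniteDimensional (RatFunc k0) E0]
  (a : G →* (E0 ≃ₐ[RatFunc k0] E0)) (ha : Function.Injective a)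
  (hr : Module.finrank (RatFunc k0) E0 ≤ Nat.card G) (j : L →+* E0)
  (hjk : ∀ x, j (algebraMap k L x) = algebraMap (RatFunc k0) E0 (algebraMap k0 _ (algebraMap k k0 x)))
  (hjρ : ∀ g x, a g (j x) = j (α g x))
  (hc : ∀ z, AlgOver ((algebraMap (RatFunc k0) E0).comp (algebraMap k0 _)) z → ∀ g, α g = 1 → a g z = z) :
    HasGeomGaloisSolution k G L α k0 := by
  classical
  let R := RatFunc k0
  letI : Algebra k0 E0 := ((algebraMap (RatFunc k0) E0).comp (algebraMap k0 _)).toAlgebra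
  haveI : IsScalarTower k0 R E0 := IsScalarTower.of_algebraMap_eq fun x => rfl
  have hcardle : Nat.card (E0 ≃ₐ[RatFunc k0] E0) ≤ Module.finrank (RatFunc k0) E0 := by
    rw [Nat.card_eq_fintype_card]; exact AlgEquiv.card_le
  have hGle : Nat.card G ≤ Nat.card (E0 ≃ₐ[RatFunc k0] E0) := Nat.card_le_card_of_injective a ha
  have hcard : Nat.card (E0 ≃ₐ[RatFunc k0] E0) = Module.finrank (RatFunc k0) E0 := by omega
  haveI hgal : IsGalois R E0 := IsGalois.of_card_aut_eq_finrank R E0 hcard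
  have hbij : Function.Bijective a := by
    cases nonempty_fintype G
    rw [Fintype.bijective_iff_injective_and_card]
    refine ⟨ha, ?_⟩
    rw [← Nat.card_eq_fintype_card, ← Nat.card_eq_fintype_card]; omega
  let β0 : G ≃* (E0 ≃ₐ[RatFunc k0] E0) := MulEquiv.ofBijective a hbij
  let ε : E0 →ₐ[R] AlgebraicClosure R := IsAlgClosed.lift
  let e : E0 ≃ₐ[R] ε.fieldRange := AlgEquiv.ofInjectiveField ε
  have he : ∀ x, ((e x : ε.fieldRange) : AlgebraicClosure R) = ε x := fun x => rfl
  letI : Algebra k (AlgebraicClosure (RatFunc k0)) :=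
    ((algebraMap (RatFunc k0) (AlgebraicClosure (RatFunc k0))).comp
      ((algebraMap k0 (RatFunc k0)).comp (algebraMap k k0))).toAlgebra
  let ι : L →ₐ[k] AlgebraicClosure (RatFunc k0) :=
    { (ε : E0 →+* AlgebraicClosure R).comp j with
      commutes' := fun x => by
        change ε (j (algebraMap k L x)) = _
        rw [hjk, ε.commutes]; rfl }
  have hι : ∀ x, ι x = ε (j x) := fun x => rfl
  have hιE : ∀ x, ι x ∈ ε.fieldRange := fun x => ⟨j x, rfl⟩
  have hee : ∀ x, (⟨ι x, hιE x⟩ : ε.fieldRange) = e (j x) := fun x => rfl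
  refine ⟨ι, ε.fieldRange, hιE, LinearEquiv.finiteDimensional e.toLinearEquiv, IsGalois.of_algEquiv e, ?_,
    (AlgEquiv.autCongr e).symm.trans β0.symm, ?_⟩
  · rintro _ ⟨z, rfl⟩ hz
    have hz : IsAlgebraic k0 z := by
      obtain ⟨p, hp, h⟩ := hz
      refine ⟨p, hp, ε.injective ?_⟩
      rw [map_zero, ← h, Polynomial.aeval_def, Polynomial.aeval_def]
      change (ε : E0 →+* AlgebraicClosure R) _ = _
      rw [Polynomial.hom_eval₂]
      congr 1
      ext1 x
      change ε (algebraMap R E0 (algebraMap k0 R x)) = _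
      rw [ε.commutes]; rfl
    have hz1 : ∀ g, α g = 1 → a g z = z := hc z hz
    obtain ⟨s, y, hy⟩ := spanning (fun l : (L ≃ₐ[k] L) => ((l : L →ₐ[k] L) : L →* L)) (by
        intro l l' h
        exact AlgEquiv.ext fun x => DFunLike.congr_fun h x) (fun l => if l = 1 then 1 else 0)
    have hy : ∀ l : (L ≃ₐ[k] L), ∑ b ∈ s, y b * l b = if l = 1 then 1 else 0 := hy
    choose sec hsec using hα
    have hdep : ∀ g g' b, α g = α g' → a g (z * j b) = a g' (z * j b) := by
      intro g g' b h
      have h1 : a (g'⁻¹ * g) (z * j b) = z * j b := by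
        rw [map_mul (a _), hz1 _ (by rw [map_mul, map_inv, h, inv_mul_cancel]), hjρ]
        congr 2
        rw [map_mul α, map_inv, h, inv_mul_cancel]; rfl
      conv_rhs => rw [← h1]
      rw [← AlgEquiv.mul_apply, ← map_mul, mul_inv_cancel_left]
    let f : L → E0 := fun b => ∑ l : (L ≃ₐ[k] L), a (sec l) (z * j b)
    have hf : ∀ b g, a g (f b) = f b := by
      intro b g
      simp only [f, map_sum]
      rw [← Equiv.sum_comp (Equiv.mulLeft (α g)) (fun l => a (sec l) (z * j b))]
      refine Finset.sum_congr rfl fun l _ => ?_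
      rw [← AlgEquiv.mul_apply, ← map_mul]
      apply hdep
      simp [hsec]
    have halgL : ∀ x, IsAlgebraic k0 (j x) := by
      intro x
      obtain ⟨p, hp, h⟩ := Algebra.IsAlgebraic.isAlgebraic (R := k) x
      refine ⟨p.map (algebraMap k k0), (Polynomial.map_ne_zero_iff (algebraMap k k0).injective).mpr hp, ?_⟩
      rw [Polynomial.aeval_def, Polynomial.eval₂_map]
      have : (algebraMap k0 E0).comp (algebraMap k k0) = j.comp (algebraMap k L) := by
        ext1 x; exact (hjk x).symm
      rw [this, ← Polynomial.hom_eval₂, ← Polynomial.aeval_def, h, map_zero]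
    have hfalg : ∀ b, IsAlgebraic k0 (f b) := by
      intro b
      rw [← mem_algebraicClosure_iff]
      refine sum_mem fun l _ => ?_
      rw [mem_algebraicClosure_iff]
      have := (hz.mul (halgL b)).algHom ((a (sec l) : E0 →ₐ[R] E0).restrictScalars k0)
      exact this
    have hfk : ∀ b, ∃ c : k0, algebraMap k0 E0 c = f b := by
      intro b
      have : f b ∈ (⊥ : IntermediateField R E0) := by
        rw [IsGalois.mem_bot_iff_fixed]
        intro σ
        obtain ⟨g, rfl⟩ := hbij.2 σ
        exact hf b g
      obtain ⟨r, hr⟩ := IntermediateField.mem_bot.mp this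
      have hra : IsAlgebraic k0 r := by
        have := hfalg b
        rw [← hr] at this
        exact (isAlgebraic_algebraMap_iff (algebraMap R E0).injective).mp this
      obtain ⟨c, rfl⟩ := ratFunc_const r hra
      exact ⟨c, hr⟩
    choose c hc using hfk
    have hzsum : z = ∑ b ∈ s, j (y b) * algebraMap k0 E0 (c b) := by
      simp only [hc, f, Finset.mul_sum]
      rw [Finset.sum_comm]
      have : ∀ l : (L ≃ₐ[k] L), ∑ b ∈ s, j (y b) * a (sec l) (z * j b) =
          if l = 1 then z else 0 := by
        intro l
        have h1 : ∑ b ∈ s, j (y b) * a (sec l) (z * j b) = a (sec l) z * j (∑ b ∈ s, y b * l b) := by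
          rw [map_sum, Finset.mul_sum]
          refine Finset.sum_congr rfl fun b _ => ?_
          rw [map_mul (a _), hjρ, hsec, map_mul]; ring
        rw [h1, hy]
        split_ifs with h
        · rw [map_one, mul_one, hz1 _ (by rw [hsec, h])]
        · simp
      simp only [this]
      simp
    rw [hzsum]
    change ε _ ∈ _
    rw [map_sum]
    refine sum_mem fun b _ => ?_
    rw [map_mul]
    refine mul_mem (IntermediateField.subset_adjoin k0 _ ⟨y b, rfl⟩) ?_
    have : ε (algebraMap k0 E0 (c b)) = algebraMap k0 (AlgebraicClosure R) (c b) := by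
      change ε (algebraMap R E0 (algebraMap k0 R (c b))) = _
      rw [ε.commutes]; rfl
    rw [this]
    exact IntermediateField.algebraMap_mem _ _
  · intro σ x
    obtain ⟨τ, rfl⟩ := (AlgEquiv.autCongr e).surjective σ
    obtain ⟨g, rfl⟩ := hbij.2 τ
    have h1 : ((AlgEquiv.autCongr e).symm.trans β0.symm) (AlgEquiv.autCongr e (a g)) = g := by
      rw [MulEquiv.trans_apply, MulEquiv.symm_apply_apply]
      exact β0.symm_apply_apply g
    rw [h1, hee]
    change ((e (a g (e.symm (e (j x)))) : ε.fieldRange) : AlgebraicClosure R) = _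
    rw [AlgEquiv.symm_apply_apply, hjρ]; rfl

end GES

set_option synthInstance.maxHeartbeats 1000000
set_option maxHeartbeats 1000000
set_option linter.all false
set_option linter.deprecated false
set_option linter.unusedSectionVars false
set_option linter.unusedVariables false

namespace GES

/-- big data to be descended -/
structure Big (k G L : Type) [Field k] [Group G] [Field L] [Algebra k L] (α : G →* (L ≃ₐ[k] L))
    (K E : Type) [Field K] [Algebra k K] [Field E] [Algebra K E] where
  ρ : G →* (E →ₐ[K] E)
  T : E
  tr : Transcendental K T
  ρT : ∀ g, ρ g T = T
  fix : ∀ x, (∀ g, ρ g x = x) → x ∈ IntermediateField.adjoin K {T}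
  faith : ∀ g, g ≠ 1 → ∃ x, ρ g x ≠ x
  j : L →+* E
  jk : ∀ a, j (algebraMap k L a) = algebraMap K E (algebraMap k K a)
  jρ : ∀ g x, ρ g (j x) = j (α g x)
  const : ∀ z, IsAlgebraic K z → ∀ g, α g = 1 → ρ g z = z

namespace Big
variable {k G L : Type} [Field k] [Group G] [Finite G] [Field L] [Algebra k L] [FiniteDimensional k L]
  {α : G →* (L ≃ₐ[k] L)} {K E : Type} [Field K] [Algebra k K] [Field E] [Algebra K E]
  (S : Big k G L α K E)

open Polynomial

/-- the base subfield for a finite set -/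
def cl (X : Set E) (s : Set K) : Subfield E :=
  Subfield.closure (algebraMap K E '' (IntermediateField.adjoin k s : Set K) ∪ X)

theorem cl_mono (X : Set E) {s t : Set K} (h : s ⊆ t) : cl (k := k) X s ≤ cl (k := k) X t := by
  apply Subfield.closure_mono
  exact Set.union_subset_union_left _ (Set.image_mono (IntermediateField.adjoin.mono k _ _ h))

theorem exists_cl (X : Set E) (x : E) (hx : x ∈ Subfield.closure (Set.range (algebraMap K E) ∪ X)) :
    ∃ s : Finset K, x ∈ cl (k := k) X (s : Set K) := by
  classical
  induction hx using Subfield.closure_induction with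
  | mem x hx =>
    rcases hx with ⟨a, rfl⟩ | hx
    · refine ⟨{a}, Subfield.subset_closure (Or.inl ⟨a, ?_, rfl⟩)⟩
      exact IntermediateField.subset_adjoin k _ (by simp)
    · exact ⟨∅, Subfield.subset_closure (Or.inr hx)⟩
  | one => exact ⟨∅, one_mem _⟩
  | add x y _ _ hx hy =>
    obtain ⟨s, hs⟩ := hx
    obtain ⟨t, ht⟩ := hy
    exact ⟨s ∪ t, add_mem (cl_mono X (by simp) hs) (cl_mono X (by simp) ht)⟩
  | neg x _ hx => obtain ⟨s, hs⟩ := hx; exact ⟨s, neg_mem hs⟩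
  | inv x _ hx => obtain ⟨s, hs⟩ := hx; exact ⟨s, inv_mem hs⟩
  | mul x y _ _ hx hy =>
    obtain ⟨s, hs⟩ := hx
    obtain ⟨t, ht⟩ := hy
    exact ⟨s ∪ t, mul_mem (cl_mono X (by simp) hs) (cl_mono X (by simp) ht)⟩

theorem exists_cl_finite (X : Set E) {ι : Type} [Finite ι] (x : ι → E)
    (hx : ∀ i, x i ∈ Subfield.closure (Set.range (algebraMap K E) ∪ X)) :
    ∃ s : Finset K, ∀ i, x i ∈ cl (k := k) X (s : Set K) := by
  classical
  cases nonempty_fintype ι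
  choose s hs using fun i => exists_cl (k := k) X (x i) (hx i)
  exact ⟨Finset.univ.biUnion s, fun i => cl_mono X (by
    intro a ha
    simp only [Finset.coe_biUnion, Set.mem_iUnion]
    exact ⟨i, by simp, ha⟩) (hs i)⟩

theorem adjoin_cl (X : Set E) (x : E) : x ∈ IntermediateField.adjoin K X ↔
    x ∈ Subfield.closure (Set.range (algebraMap K E) ∪ X) := Iff.rfl

/-- primitive element with the orbit polynomial -/
theorem exists_prim : ∃ θ : E, ∀ x : E, x ∈ Subfield.closure (Set.range (algebraMap K E) ∪ {S.T, θ}) := by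
  classical
  letI : MulSemiringAction G E :=
    { smul := fun g x => S.ρ g x
      one_smul := fun x => by change S.ρ 1 x = x; rw [map_one]; rfl
      mul_smul := fun g h x => by change S.ρ (g * h) x = S.ρ g (S.ρ h x); rw [map_mul]; rfl
      smul_zero := fun g => map_zero _
      smul_add := fun g x y => map_add _ _ _
      smul_one := fun g => map_one _
      smul_mul := fun g x y => map_mul _ _ _ }
  let F0 := FixedPoints.subfield G E
  haveI : FiniteDimensional F0 E := inferInstance
  haveI : Algebra.IsSeparable F0 E := inferInstance
  obtain ⟨θ, hθ⟩ := Field.exists_primitive_element F0 E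
  refine ⟨θ, fun x => ?_⟩
  have hx : x ∈ IntermediateField.adjoin F0 {θ} := by rw [hθ]; trivial
  have hx : x ∈ Subfield.closure (Set.range (algebraMap F0 E) ∪ {θ}) := hx
  refine (Subfield.closure_le (t := Subfield.closure (Set.range (algebraMap K E) ∪ {S.T, θ}))).mpr ?_ hx
  rintro _ (⟨f, rfl⟩ | rfl)
  · have := S.fix (f : E) (fun g => f.2 g)
    rw [adjoin_cl] at this
    refine Subfield.closure_mono (Set.union_subset_union_right _ ?_) this
    simp
  · exact Subfield.subset_closure (Or.inr (by simp))

end Big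
end GES

set_option synthInstance.maxHeartbeats 1000000
set_option maxHeartbeats 1000000
set_option linter.all false
set_option linter.deprecated false
set_option linter.unusedSectionVars false
set_option linter.unusedVariables false

namespace GES
namespace Big
variable {k G L : Type} [Field k] [Group G] [Finite G] [Field L] [Algebra k L] [FiniteDimensional k L]
  {α : G →* (L ≃ₐ[k] L)} {K E : Type} [Field K] [Algebra k K] [Field E] [Algebra K E]
  (S : Big k G L α K E)

open Polynomial

theorem fix_cl {g : G} {X : Set E} (hX : ∀ x ∈ X, S.ρ g x = x) {x : E}
    (hx : x ∈ Subfield.closure (Set.range (algebraMap K E) ∪ X)) : S.ρ g x = x := by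
  have : Subfield.closure (Set.range (algebraMap K E) ∪ X) ≤
      RingHom.eqLocusField (S.ρ g : E →+* E) (RingHom.id E) := by
    rw [Subfield.closure_le]
    rintro x (⟨a, rfl⟩ | h)
    · exact (S.ρ g).commutes a
    · exact hX x h
  exact this hx

theorem descent (S : Big k G L α K E) (hα : Function.Surjective α) (hreg : Reg k K) :
    ∃ (k₀ : Type) (_ : Field k₀) (_ : Algebra k k₀),
      (∃ s : Finset k₀, IntermediateField.adjoin k (s : Set k₀) = ⊤) ∧
      IsDomain (TensorProduct k (AlgebraicClosure k) k₀) ∧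
      HasGeomGaloisSolution k G L α k₀ := by
  classical
  cases nonempty_fintype G
  obtain ⟨θ, hθ⟩ := S.exists_prim
  let q : E[X] := ∏ g : G, (X - C (S.ρ g θ))
  have hqm : q.Monic := monic_prod_of_monic _ _ fun g _ => monic_X_sub_C _
  have hqd : q.natDegree = Nat.card G := by
    rw [Nat.card_eq_fintype_card]
    simp only [q]
    rw [natDegree_prod_of_monic _ _ fun g _ => monic_X_sub_C _]
    simp
  have hqθ : q.eval θ = 0 := by
    simp only [q, eval_prod]
    apply Finset.prod_eq_zero (Finset.mem_univ 1)
    simp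
  have hqfix : ∀ g, q.map (S.ρ g : E →+* E) = q := by
    intro g
    simp only [q, Polynomial.map_prod]
    rw [← Equiv.prod_comp (Equiv.mulLeft g) (fun h => (X - C (S.ρ h θ)))]
    refine Finset.prod_congr rfl fun h _ => ?_
    simp only [Polynomial.map_sub, map_X, map_C, Equiv.coe_mulLeft, map_mul]
    rfl
  have hqc : ∀ n : ℕ, q.coeff n ∈ Subfield.closure (Set.range (algebraMap K E) ∪ {S.T}) := by
    intro n
    rw [← adjoin_cl]
    apply S.fix
    intro g
    conv_rhs => rw [← hqfix g]
    rw [coeff_map]; rfl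
  obtain ⟨s1, hs1⟩ := exists_cl_finite (k := k) {S.T} (fun n : Fin (q.natDegree + 1) => q.coeff n) (fun n => hqc n)
  obtain ⟨s2, hs2⟩ := exists_cl_finite (k := k) {S.T, θ} (fun g : G => S.ρ g θ) (fun g => hθ _)
  let b := Module.finBasis k L
  obtain ⟨s3, hs3⟩ := exists_cl_finite (k := k) {S.T, θ} (fun n => S.j (b n)) (fun g => hθ _)
  let s : Finset K := s1 ∪ s2 ∪ s3
  let k0 := IntermediateField.adjoin k (s : Set K)
  have hT0 : Transcendental k0 S.T := by
    intro h
    exact S.tr (h.tower_top K)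
  let e0 := RatFunc.algEquivOfTranscendental S.T hT0
  let φ : RatFunc k0 →ₐ[k0] E := (IntermediateField.val _).comp e0.toAlgHom
  have hφX : φ RatFunc.X = S.T := RatFunc.algEquivOfTranscendental_X S.T hT0
  have hφr : ∀ r, φ r ∈ Subfield.closure (Set.range (algebraMap K E) ∪ {S.T}) := by
    intro r
    have : φ r ∈ IntermediateField.adjoin k0 {S.T} := (e0 r).2
    refine Subfield.closure_mono (Set.union_subset_union_left _ ?_) this
    rintro _ ⟨a, rfl⟩
    exact ⟨(a : K), rfl⟩
  letI : Algebra (RatFunc k0) E := φ.toRingHom.toAlgebra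
  have hφa : ∀ r, algebraMap (RatFunc k0) E r = φ r := fun r => rfl
  let aR : G → (E →ₐ[RatFunc k0] E) := fun g =>
    { (S.ρ g : E →+* E) with
      commutes' := fun r => S.fix_cl (X := {S.T}) (by
        rintro x rfl; exact S.ρT g) (hφr r) }
  have haR : ∀ g x, aR g x = S.ρ g x := fun g x => rfl
  let E0 := IntermediateField.adjoin (RatFunc k0) {θ}
  have hcl : cl (k := k) {S.T, θ} (s : Set K) ≤ E0.toSubfield := by
    rw [cl, Subfield.closure_le]
    rintro x (⟨a, ha, rfl⟩ | rfl | rfl)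
    · have : algebraMap K E a = algebraMap (RatFunc k0) E (algebraMap k0 _ ⟨a, ha⟩) :=
        (φ.commutes ⟨a, ha⟩).symm
      rw [this]; exact E0.algebraMap_mem _
    · rw [← hφX]; exact E0.algebraMap_mem _
    · exact IntermediateField.mem_adjoin_simple_self _ _
  have hcl1 : cl (k := k) {S.T} (s : Set K) ≤ (algebraMap (RatFunc k0) E).fieldRange := by
    rw [cl, Subfield.closure_le]
    rintro x (⟨a, ha, rfl⟩ | rfl)
    · exact ⟨algebraMap k0 _ ⟨a, ha⟩, φ.commutes ⟨a, ha⟩⟩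
    · exact ⟨_, hφX⟩
  have hstab : ∀ g, ∀ x : E0, S.ρ g x ∈ E0 := by
    intro g x
    have h1 : E0.map (aR g) ≤ E0 := by
      rw [IntermediateField.adjoin_map, IntermediateField.adjoin_le_iff]
      rintro _ ⟨_, rfl, rfl⟩
      exact hcl (cl_mono _ (by intro x hx; simp [s] at hx ⊢; tauto) (hs2 g))
    exact h1 ⟨x, x.2, rfl⟩
  have hjE : ∀ x, S.j x ∈ E0 := by
    intro x
    rw [← b.sum_repr x, map_sum]
    refine sum_mem fun n _ => ?_
    rw [Algebra.smul_def, map_mul, S.jk]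
    refine mul_mem ?_ ?_
    · exact hcl (Subfield.subset_closure (Or.inl ⟨_, k0.algebraMap_mem _, rfl⟩))
    · exact hcl (cl_mono _ (by intro x hx; simp [s] at hx ⊢; tauto) (hs3 n))
  let A0 : G → (E0 →ₐ[RatFunc k0] E0) := fun g => ((aR g).comp E0.val).codRestrict E0.toSubalgebra
    (fun x => hstab g x)
  have hA0 : ∀ g x, ((A0 g x : E0) : E) = S.ρ g x := fun g x => rfl
  have hA0m : ∀ g h, (A0 g).comp (A0 h) = A0 (g * h) := by
    intro g h
    ext x
    change S.ρ g (S.ρ h x) = S.ρ (g * h) x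
    rw [map_mul]; rfl
  have hA01 : A0 1 = AlgHom.id _ _ := by
    ext x
    change S.ρ 1 x = x
    rw [map_one]; rfl
  let a : G →* (E0 ≃ₐ[RatFunc k0] E0) :=
    { toFun := fun g => AlgEquiv.ofAlgHom (A0 g) (A0 g⁻¹) (by rw [hA0m, mul_inv_cancel, hA01])
        (by rw [hA0m, inv_mul_cancel, hA01])
      map_one' := by
        ext1 x
        change A0 1 x = x
        rw [hA01]; rfl
      map_mul' := fun g h => by
        ext1 x
        change A0 (g * h) x = A0 g (A0 h x)
        rw [← hA0m]; rfl }
  have haa : ∀ g x, ((a g x : E0) : E) = S.ρ g x := fun g x => rfl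
  have hainj : Function.Injective a := by
    rw [injective_iff_map_eq_one]
    intro g hg
    by_contra hne
    obtain ⟨x, hx⟩ := S.faith g hne
    apply hx
    refine S.fix_cl (X := {S.T, θ}) ?_ (hθ x)
    rintro x (rfl | rfl)
    · exact S.ρT g
    · have := haa g ⟨x, IntermediateField.mem_adjoin_simple_self _ _⟩
      rw [hg] at this
      exact this.symm
  obtain ⟨Q, hQ, hQd, hQm⟩ := lifts_and_natDegree_eq_and_monic (f := algebraMap (RatFunc k0) E) (p := q) (by
    rw [lifts_iff_coeff_lifts]
    intro n
    by_cases hn : n < q.natDegree + 1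
    · exact hcl1 (cl_mono _ (by intro x hx; simp [s] at hx ⊢; tauto) (hs1 ⟨n, hn⟩))
    · rw [coeff_eq_zero_of_natDegree_lt (by omega)]; exact ⟨0, map_zero _⟩) hqm
  have hQθ : aeval θ Q = 0 := by
    rw [aeval_def, ← eval_map, hQ, hqθ]
  have hint : IsIntegral (RatFunc k0) θ := ⟨Q, hQm, hQθ⟩
  haveI : FiniteDimensional (RatFunc k0) E0 := IntermediateField.adjoin.finiteDimensional hint
  have hrank : Module.finrank (RatFunc k0) E0 ≤ Nat.card G := by
    rw [IntermediateField.adjoin.finrank hint, ← hqd, ← hQd]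
    exact natDegree_le_of_dvd (minpoly.dvd _ _ hQθ) hQm.ne_zero
  let j0 : L →+* E0 := S.j.codRestrict E0.toSubfield hjE
  have hj0 : ∀ x, ((j0 x : E0) : E) = S.j x := fun x => rfl
  refine ⟨k0, inferInstance, inferInstance, fg_top_adjoin s, (hreg.sub k0).isDomain,
    final hα a hainj hrank j0 ?_ ?_ ?_⟩
  · intro x
    apply Subtype.ext
    rw [hj0, S.jk]
    exact (φ.commutes (algebraMap k k0 x)).symm
  · intro g x
    apply Subtype.ext
    rw [haa, hj0, hj0, S.jρ]
  · intro z hz g hg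
    apply Subtype.ext
    rw [haa]
    refine S.const _ ?_ g hg
    obtain ⟨p, hp, h⟩ := hz.map (algebraMap E0 E)
    refine ⟨p.map (algebraMap k0 K), (Polynomial.map_ne_zero_iff (algebraMap k0 K).injective).mpr hp, ?_⟩
    rw [aeval_def, eval₂_map]
    have hh : (algebraMap E0 E).comp ((algebraMap (RatFunc k0) E0).comp (algebraMap k0 _)) =
      (algebraMap K E).comp (algebraMap k0 K) := by
      ext1 x
      exact φ.commutes x
    rw [hh] at h
    exact h

end Big
end GES

set_option synthInstance.maxHeartbeats 1000000
set_option maxHeartbeats 1000000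
set_option linter.all false
set_option linter.deprecated false
set_option linter.unusedSectionVars false
set_option linter.unusedVariables false

namespace GES
theorem algC {k F : Type} [Field k] [Field F] [Algebra k F] (a : k) :
    algebraMap k (LaurentSeries F) a = HahnSeries.C (algebraMap k F a) := by
  rw [HahnSeries.algebraMap_apply', PowerSeries.algebraMap_apply, HahnSeries.ofPowerSeries_C]

namespace PS
section
variable {G F M O D I : Type} [Group G] [Field F] [Field M] [Algebra F M]
    [CommRing O] [IsDomain O] [Field D] [Algebra O D] [IsFractionRing O D] [Algebra F O]
  (S : PS G F M O D I) {c : I → G} (ld : ∀ i, LD F O D (orderOf (c i)))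

theorem N_div {p z} (hp : p ∈ S.P) (hp0 : p ≠ 0) (h : p * z ∈ S.N ld) : z ∈ S.N ld := by
  obtain ⟨⟨q, hq, hq0, hqz⟩, h⟩ := h
  refine ⟨⟨q * p, mul_mem hq hp, mul_ne_zero hq0 hp0, by rwa [mul_assoc]⟩, fun i => ?_⟩
  obtain ⟨e, he⟩ := h i
  obtain ⟨r, hr⟩ := (ld i).surj _ (S.P_loc hp i)
  have hrσ : (ld i).σ r = r := ((ld i).fix r).mpr (by rw [hr]; exact S.P_loc hp i)
  refine ⟨fun g => e g / r, fun g => ⟨?_, ?_⟩⟩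
  · have hne : mapL (S.ι i) p ≠ 0 := fun h0 =>
      hp0 (mapL_injective (S.ι i).injective (by rw [h0, map_zero]))
    rw [map_div₀, (he g).1, hr, map_mul, map_mul, S.P_fix hp, mul_div_cancel_left₀ _ hne]
  · change e (c i * g) / r = _
    rw [map_div₀, (he g).2, hrσ]

theorem N_inv [Finite G] [Finite I] {b} (hb : b ∈ S.N ld) : b⁻¹ ∈ S.N ld := by
  classical
  cases nonempty_fintype G
  by_cases hb0 : b = 0
  · rw [hb0, inv_zero]; exact zero_mem _
  let n := ∏ g : G, mapL (S.ρ g) b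
  have hn : n ∈ S.N ld := prod_mem fun g _ => S.N_ρ ld hb g
  have hn0 : n ≠ 0 := Finset.prod_ne_zero_iff.mpr fun g _ h0 =>
    hb0 (mapL_injective (S.ρ g).injective (by rw [h0, map_zero]))
  have hnf : ∀ g, mapL (S.ρ g) n = n := by
    intro g
    simp only [n, map_prod]
    rw [← Equiv.prod_comp (Equiv.mulLeft g) (fun h => mapL (S.ρ h) b)]
    exact Finset.prod_congr rfl fun h _ => S.mapL_ρ_mul g h b
  obtain ⟨p, hp, p', hp', hp0, hpp⟩ := S.N_fix ld hn hnf
  refine S.N_div ld hp' (by rw [← hpp]; exact mul_ne_zero hp0 hn0) ?_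
  have h1 : n = b * ∏ g ∈ Finset.univ.erase (1 : G), mapL (S.ρ g) b := by
    simp only [n]
    rw [← Finset.mul_prod_erase _ _ (Finset.mem_univ (1 : G)), map_one]
    congr 1
  have h2 : p' * b⁻¹ = p * ∏ g ∈ Finset.univ.erase (1 : G), mapL (S.ρ g) b := by
    rw [← hpp, h1]
    field_simp
  rw [h2]
  exact mul_mem (S.P_N ld hp) (prod_mem fun g _ => S.N_ρ ld hb g)

/-- the patched field -/
noncomputable def NF [Finite G] [Finite I] : Subfield (LaurentSeries M) :=
  { S.N ld with inv_mem' := fun _ h => S.N_inv ld h }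

noncomputable def NFρ [Finite G] [Finite I] (g : G) : S.NF ld →+* S.NF ld :=
  ((mapL (S.ρ g)).comp (S.NF ld).subtype).codRestrict (S.NF ld) (fun x => S.N_ρ ld x.2 g)

end
end PS

namespace Inp
open Polynomial
variable {G F N N1 I : Type} [Group G] [Finite G] [Fintype I] [Field F] [Field N] [Field N1] [Algebra F N]
    [Algebra N N1] [Algebra F N1] [IsScalarTower F N N1] (S : Inp G F N N1 I)

theorem d_pos [Nonempty I] : 1 ≤ S.d := by
  classical
  obtain ⟨i⟩ := ‹Nonempty I›
  have h : minpoly F (S.θ i) ∣ S.π := Finset.dvd_prod_of_mem _ (Finset.mem_univ i)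
  exact (minpoly.natDegree_pos (S.int i)).trans_le (natDegree_le_of_dvd h S.π_monic.ne_zero)

theorem frac_A (e : ℕ) (c : F[X]) (hc : c.natDegree ≤ e * S.d) :
    S.toM c / S.toM S.π ^ e ∈ S.toPS.A := ⟨S.mem_W e c hc, S.frac_fix e c⟩

theorem mkBig [Nonempty I] {c : I → G} (ld : ∀ i, LD F (PowerSeries N1) (LaurentSeries N1) (orderOf (c i)))
    {k L : Type} [Field k] [Field L] [Algebra k L] [Algebra k F] (α : G →* (L ≃ₐ[k] L))
    (j : L →+* N) (jk : ∀ a, j (algebraMap k L a) = algebraMap F N (algebraMap k F a))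
    (jρ : ∀ g x, S.ρ0 g (j x) = j (α g x)) (hc : ∀ i, α (c i) = 1)
    (hgen : ∀ g, α g = 1 → g ∈ Subgroup.closure (Set.range c)) :
    ∃ (E : Type) (_ : Field E) (_ : Algebra (LaurentSeries F) E),
      Nonempty (Big k G L α (LaurentSeries F) E) := by
  let NN := S.toPS.NF ld
  have hPN : ∀ p, p ∈ S.toPS.P → p ∈ NN := fun p hp => S.toPS.P_N ld hp
  letI : Algebra (LaurentSeries F) NN :=
    ((mapL (algebraMap F (RatFunc N))).codRestrict NN (fun x => hPN _ (S.toPS.P_F x))).toAlgebra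
  have halg : ∀ x, ((algebraMap (LaurentSeries F) NN x : NN) : LaurentSeries (RatFunc N)) =
    mapL (algebraMap F (RatFunc N)) x := fun x => rfl
  have hX : S.toM X = RatFunc.X := by simp [toM]
  have hXfix : ∀ g, S.toPS.ρ g RatFunc.X = RatFunc.X := by
    intro g; rw [← hX]; exact S.ρ_toM g X
  have hTmem : HahnSeries.C (RatFunc.X : RatFunc N) ∈ NN := by
    have h1 : HahnSeries.C (S.toM 1 / S.toM S.π ^ 1) ∈ S.toPS.P := S.toPS.P_A (S.frac_A 1 1 (by simp))
    have h2 : HahnSeries.C (S.toM X / S.toM S.π ^ 1) ∈ S.toPS.P :=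
      S.toPS.P_A (S.frac_A 1 X (by simpa using S.d_pos))
    have h11 : S.toM 1 = 1 := by simp [toM]
    refine S.toPS.N_div ld h1 ?_ ?_
    · rw [Ne, map_eq_zero_iff _ HahnSeries.C_injective, h11]
      exact div_ne_zero one_ne_zero (pow_ne_zero _ S.πM_ne)
    · rw [← map_mul, ← hX, h11, one_div_mul_eq_div]
      exact S.toPS.P_N ld h2
  let T : NN := ⟨HahnSeries.C RatFunc.X, hTmem⟩
  let R : G →* (NN →ₐ[LaurentSeries F] NN) :=
    { toFun := fun g => { S.toPS.NFρ ld g with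
        commutes' := fun r => Subtype.ext (S.toPS.P_fix (S.toPS.P_F r) g) }
      map_one' := by
        ext x : 2
        change mapL (S.toPS.ρ 1) (x : LaurentSeries (RatFunc N)) = x
        rw [map_one]; exact mapL_id _
      map_mul' := fun g h => by
        ext x : 2
        exact (S.toPS.mapL_ρ_mul g h x).symm }
  have hR : ∀ g x, ((R g x : NN) : LaurentSeries (RatFunc N)) = mapL (S.toPS.ρ g) x := fun g x => rfl
  -- `P` is inside `K(T)`
  let KT : Subfield (LaurentSeries (RatFunc N)) :=
    (IntermediateField.adjoin (LaurentSeries F) {T}).toSubfield.map NN.subtype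
  have hKTF : ∀ x, mapL (algebraMap F (RatFunc N)) x ∈ KT := fun x =>
    ⟨_, (IntermediateField.adjoin (LaurentSeries F) {T}).algebraMap_mem x, halg x⟩
  have hKTT : HahnSeries.C (RatFunc.X : RatFunc N) ∈ KT :=
    ⟨T, IntermediateField.mem_adjoin_simple_self _ _, rfl⟩
  have hKTc : ∀ c : F[X], HahnSeries.C (S.toM c) ∈ KT := by
    intro c
    induction c using Polynomial.induction_on' with
    | add p q hp hq =>
      have : S.toM (p + q) = S.toM p + S.toM q := by simp [toM]
      rw [this, map_add]; exact add_mem hp hq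
    | monomial n a =>
      have : S.toM (monomial n a) = algebraMap F (RatFunc N) a * RatFunc.X ^ n := by
        rw [← C_mul_X_pow_eq_monomial, toM_mul, toM_pow, hX]
        congr 1
        simp [toM]; rfl
      rw [this, map_mul, map_pow HahnSeries.C]
      refine mul_mem ?_ (pow_mem hKTT n)
      rw [← mapL_C]; exact hKTF _
  have hKT : S.toPS.P ≤ KT.toSubring := by
    rw [PS.P, Subring.closure_le]
    rintro _ (⟨x, rfl⟩ | ⟨a, ha, rfl⟩)
    · exact hKTF x
    · obtain ⟨e, c, -, h⟩ := S.W_fix ha.1 ha.2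
      have : a = S.toM c / S.toM S.π ^ e := by
        rw [eq_div_iff (pow_ne_zero _ S.πM_ne), h]
      change HahnSeries.C a ∈ KT
      rw [this, map_div₀ HahnSeries.C, map_pow HahnSeries.C]
      exact div_mem (hKTc c) (pow_mem (hKTc _) _)
  have hjmem : ∀ x, HahnSeries.C (algebraMap N[X] (RatFunc N) (C (j x))) ∈ NN := by
    intro x
    refine S.toPS.N_const ld (S.C_mem_W _) fun i g => ?_
    change S.ρ (c i * g) _ = S.ρ g _
    rw [S.ρ_C, S.ρ_C, map_mul]
    change algebraMap _ _ (C (S.ρ0 (c i) (S.ρ0 g (j x)))) = _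
    rw [jρ g x, jρ (c i), hc]; rfl
  let jj : L →+* NN := (((HahnSeries.C (Γ := ℤ)).comp ((algebraMap N[X] (RatFunc N)).comp C)).comp j).codRestrict NN hjmem
  refine ⟨NN, inferInstance, inferInstance, ⟨⟨R, T, ?_, ?_, ?_, ?_, jj, ?_, ?_, ?_⟩⟩⟩
  · -- transcendence
    rintro ⟨p, hp, h⟩
    apply hp
    have h0 : ∑ n ∈ p.support, mapL (algebraMap F (RatFunc N)) (p.coeff n) *
        HahnSeries.C (RatFunc.X ^ n) = 0 := by
      have := congrArg (fun x : NN => (x : LaurentSeries (RatFunc N))) h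
      rw [aeval_def, eval₂_eq_sum, Polynomial.sum] at this
      have hT' : (T : LaurentSeries (RatFunc N)) = HahnSeries.C RatFunc.X := rfl
      simp only [map_pow HahnSeries.C, ← hT']
      simpa [halg] using this
    have h1 : ∀ m : ℤ, ∑ n ∈ p.support, monomial n ((p.coeff n).coeff m) = 0 := by
      intro m
      apply S.toM_inj
      have h2 := congrArg (fun x => HahnSeries.coeff x m) h0
      simp only [HahnSeries.coeff_sum, HahnSeries.coeff_zero] at h2
      have h3 : S.toM 0 = 0 := by simp [toM]
      rw [h3, ← h2, toM, Polynomial.map_sum, map_sum]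
      refine Finset.sum_congr rfl fun n _ => ?_
      rw [mul_comm, coeff_C_mul, mapL_coeff, map_monomial, ← C_mul_X_pow_eq_monomial, map_mul, map_pow,
        RatFunc.algebraMap_X, mul_comm]
      rfl
    ext n m
    have := congrArg (fun q => Polynomial.coeff q n) (h1 m)
    simp only [finset_sum_coeff, coeff_monomial, coeff_zero] at this
    rw [Finset.sum_ite_eq' p.support n] at this
    split_ifs at this with hn
    · simpa using this
    · rw [notMem_support_iff.mp hn]; simp
  · intro g
    apply Subtype.ext
    rw [hR]
    change mapL _ (HahnSeries.C _) = HahnSeries.C _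
    rw [mapL_C, hXfix]
  · intro x hx
    obtain ⟨p, hp, p', hp', hp0, hpp⟩ := S.toPS.N_fix ld x.2 (fun g => by rw [← hR, hx])
    have hx' : (x : LaurentSeries (RatFunc N)) = p' / p := by
      rw [eq_div_iff hp0, ← hpp, mul_comm]
    have : (x : LaurentSeries (RatFunc N)) ∈ KT := by
      rw [hx']; exact div_mem (hKT hp') (hKT hp)
    obtain ⟨y, hy, hyx⟩ := this
    have : y = x := Subtype.ext hyx
    rw [← this]; exact hy
  · intro g hg
    obtain ⟨a, ha, h⟩ := S.toPS.N_faithful ld g hg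
    exact ⟨⟨a, ha⟩, fun h' => h (by rw [← hR g ⟨a, ha⟩, h'])⟩
  · intro a
    apply Subtype.ext
    rw [halg, algC, mapL_C]
    change HahnSeries.C (algebraMap N[X] (RatFunc N) (C (j _))) = _
    rw [jk]; rfl
  · intro g x
    apply Subtype.ext
    rw [hR]
    change mapL (S.ρ g) (HahnSeries.C (algebraMap N[X] (RatFunc N) (C (j x)))) =
      HahnSeries.C (algebraMap N[X] (RatFunc N) (C (j _)))
    rw [mapL_C, S.ρ_C, jρ]
  · intro z hz g hg
    have hz' : AlgOver (mapL (algebraMap F (RatFunc N))) (z : LaurentSeries (RatFunc N)) := by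
      obtain ⟨p, hp, h⟩ := hz
      refine ⟨p, hp, ?_⟩
      have := congrArg NN.subtype h
      rw [aeval_def, hom_eval₂, map_zero] at this
      exact this
    let H : Subgroup G :=
      { carrier := {g | mapL (S.toPS.ρ g) (z : LaurentSeries (RatFunc N)) = z}
        one_mem' := by
          change mapL (S.toPS.ρ 1) (z : LaurentSeries (RatFunc N)) = z
          rw [map_one]; exact mapL_id _
        mul_mem' := fun {a b} ha hb => by
          change mapL (S.toPS.ρ (a * b)) (z : LaurentSeries (RatFunc N)) = z
          rw [← S.toPS.mapL_ρ_mul, hb, ha]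
        inv_mem' := fun {a} ha => by
          change mapL (S.toPS.ρ a⁻¹) (z : LaurentSeries (RatFunc N)) = z
          conv_lhs => rw [← ha]
          rw [S.toPS.mapL_ρ_mul, inv_mul_cancel, map_one]; exact mapL_id _ }
    have : Subgroup.closure (Set.range c) ≤ H := by
      rw [Subgroup.closure_le]
      rintro _ ⟨i, rfl⟩
      exact S.toPS.N_alg ld z.2 hz' i
    exact Subtype.ext (this (hgen g hg))

end Inp
end GES

set_option synthInstance.maxHeartbeats 1000000
set_option maxHeartbeats 1000000
set_option linter.all false
set_option linter.deprecated false
set_option linter.unusedSectionVars false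
set_option linter.unusedVariables false

namespace GES

theorem Reg.laurent {k F : Type} [Field k] [Field F] [Algebra k F] (h : Reg k F) :
    Reg k (LaurentSeries F) := by
  obtain ⟨Ω, f, u, i, J, b, h1, h2⟩ := h
  refine ⟨LaurentSeries Ω, inferInstance, (HahnSeries.C).comp u, mapL i, J, b, fun a => ?_, fun t c hc x hx => ?_⟩
  · rw [algC, mapL_C, RingHom.comp_apply, h1]
  · ext m
    refine h2 t (fun x => (c x).coeff m) ?_ x hx
    have := congrArg (fun z => HahnSeries.coeff z m) hc
    simp only [HahnSeries.coeff_sum, HahnSeries.coeff_zero, RingHom.comp_apply, coeff_C_mul, mapL_coeff] at this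
    exact this

section base
variable {k G L : Type} [Field k] [Group G] [Finite G] [Field L] [Algebra k L]
  (α : G →* (L ≃ₐ[k] L))

open MvPolynomial

noncomputable def bφ (g : G) : MvPolynomial G L →+* MvPolynomial G L :=
  (rename (fun h => g * h) : MvPolynomial G L →ₐ[L] MvPolynomial G L).toRingHom.comp
    (MvPolynomial.map (α g : L →+* L))

theorem bφ_C (g : G) (x : L) : bφ α g (C x) = C (α g x) := by simp [bφ]
theorem bφ_X (g h : G) : bφ α g (X h) = X (g * h) := by simp [bφ]

theorem bφ_one : bφ α 1 = RingHom.id _ := by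
  apply MvPolynomial.ringHom_ext
  · intro x; rw [bφ_C]; simp
  · intro h; rw [bφ_X]; simp

theorem bφ_mul (g h : G) : bφ α (g * h) = (bφ α g).comp (bφ α h) := by
  apply MvPolynomial.ringHom_ext
  · intro x; rw [RingHom.comp_apply, bφ_C, bφ_C, bφ_C, map_mul]; rfl
  · intro x; rw [RingHom.comp_apply, bφ_X, bφ_X, bφ_X, mul_assoc]

theorem bφ_inj (g : G) : Function.Injective (bφ α g) := by
  intro p q h
  have := congrArg (bφ α g⁻¹) h
  rwa [← RingHom.comp_apply, ← RingHom.comp_apply, ← bφ_mul, inv_mul_cancel, bφ_one] at this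

theorem bφ_coeff (g : G) (p : MvPolynomial G L) (m : G →₀ ℕ) :
    coeff (m.mapDomain (fun h => g * h)) (bφ α g p) = α g (coeff m p) := by
  change coeff _ (rename _ (MvPolynomial.map _ p)) = _
  rw [coeff_rename_mapDomain _ (mul_right_injective g), coeff_map]; rfl

variable (N : Type) [Field N] [Algebra (MvPolynomial G L) N] [IsFractionRing (MvPolynomial G L) N]

noncomputable def bρ1 (g : G) : N →+* N := IsFractionRing.map (bφ_inj α g)

theorem bρ1_alg (g : G) (p : MvPolynomial G L) :
    bρ1 α N g (algebraMap _ _ p) = algebraMap _ _ (bφ α g p) :=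
  IsLocalization.map_eq (M := nonZeroDivisors (MvPolynomial G L))
    (nonZeroDivisors_le_comap_nonZeroDivisors_of_injective _ (bφ_inj α g)) p

theorem bhom_ext {B : Type} [Field B] {f g : N →+* B}
    (h : ∀ p : MvPolynomial G L, f (algebraMap _ _ p) = g (algebraMap _ _ p)) : f = g := by
  apply IsLocalization.ringHom_ext (nonZeroDivisors (MvPolynomial G L))
  exact RingHom.ext h

noncomputable def bρ : G →* (N →+* N) where
  toFun := bρ1 α N
  map_one' := bhom_ext (L := L) N fun p => by rw [bρ1_alg, bφ_one]; rfl
  map_mul' := fun g h => bhom_ext (L := L) N fun p => by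
    change _ = bρ1 α N g (bρ1 α N h _)
    rw [bρ1_alg, bρ1_alg, bρ1_alg, bφ_mul]; rfl

theorem bρ_alg (g : G) (p : MvPolynomial G L) :
    bρ α N g (algebraMap _ _ p) = algebraMap _ _ (bφ α g p) := bρ1_alg α N g p

theorem trace_aux [FiniteDimensional k L] [IsGalois k L] (hα : Function.Surjective α)
    (ε : L →ₐ[k] AlgebraicClosure k) {J : Type} (b : Module.Basis J k (AlgebraicClosure k)) (t : Finset J)
    (a : J → L) (h : ∀ g, ∑ x ∈ t, b x * ε (α g (a x)) = 0) : ∀ x ∈ t, a x = 0 := by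
  have h1 : ∀ l : L, ∀ x ∈ t, Algebra.trace k L (l * a x) = 0 := by
    intro l
    have h2 : ∑ x ∈ t, Algebra.trace k L (l * a x) • b x = 0 := by
      have h3 : ∀ x, Algebra.trace k L (l * a x) • b x =
          ∑ σ : L ≃ₐ[k] L, ε (σ l) * (b x * ε (σ (a x))) := by
        intro x
        rw [Algebra.smul_def, ← ε.commutes, trace_eq_sum_automorphisms, map_sum, Finset.sum_mul]
        refine Finset.sum_congr rfl fun σ _ => ?_
        rw [map_mul, map_mul]; ring
      simp_rw [h3]
      rw [Finset.sum_comm]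
      refine Finset.sum_eq_zero fun σ _ => ?_
      obtain ⟨g, rfl⟩ := hα σ
      rw [← Finset.mul_sum, h g, mul_zero]
    exact linearIndependent_iff'.mp b.linearIndependent t _ h2
  intro x hx
  refine traceForm_nondegenerate k L |>.1 (a x) fun l => ?_
  rw [Algebra.traceForm_apply, mul_comm]
  exact h1 l x hx

theorem exists_base_aux [FiniteDimensional k L] [IsGalois k L] (hα : Function.Surjective α)
    (Ω : Type) [Field Ω] [Algebra (MvPolynomial G (AlgebraicClosure k)) Ω]
    [IsFractionRing (MvPolynomial G (AlgebraicClosure k)) Ω] :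
    ∃ (F : Type) (_ : Field F) (_ : Algebra F N) (_ : Algebra k F)
      (ρ0 : G →* (N →+* N)) (j : L →+* N),
      (∀ g f, ρ0 g (algebraMap F N f) = algebraMap F N f) ∧
      (∀ x, (∀ g, ρ0 g x = x) → ∃ f, algebraMap F N f = x) ∧
      (∀ g, g ≠ 1 → ∃ x, ρ0 g x ≠ x) ∧
      (∀ a, j (algebraMap k L a) = algebraMap F N (algebraMap k F a)) ∧
      (∀ g x, ρ0 g (j x) = j (α g x)) ∧
      FiniteDimensional F N ∧ Algebra.IsSeparable F N ∧ Infinite F ∧ Reg k F := by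
  classical
  cases nonempty_fintype G
  letI act : MulSemiringAction G N :=
    { smul := fun g x => bρ α N g x
      one_smul := fun x => by change bρ α N 1 x = x; rw [map_one]; rfl
      mul_smul := fun g h x => by change bρ α N (g * h) x = bρ α N g (bρ α N h x); rw [map_mul]; rfl
      smul_zero := fun g => map_zero _
      smul_add := fun g x y => map_add _ _ _
      smul_one := fun g => map_one _
      smul_mul := fun g x y => map_mul _ _ _ }
  let F := FixedPoints.subfield G N
  haveI : FiniteDimensional F N := inferInstance
  haveI : Algebra.IsSeparable F N := inferInstance
  have hF : ∀ x : F, ∀ g, bρ α N g x = x := fun x g => x.2 g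
  let j : L →+* N := (algebraMap (MvPolynomial G L) N).comp C
  have hjρ : ∀ g x, bρ α N g (j x) = j (α g x) := by
    intro g x
    change bρ α N g (algebraMap _ _ (C x)) = algebraMap _ _ (C (α g x))
    rw [bρ_alg, bφ_C]
  letI : Algebra k F := ((j.comp (algebraMap k L)).codRestrict F (fun a g =>
    (hjρ g (algebraMap k L a)).trans (by rw [AlgEquiv.commutes]; rfl))).toAlgebra
  refine ⟨F, inferInstance, inferInstance, inferInstance, bρ α N, j,
    fun g f => hF f g, fun x hx => ⟨⟨x, hx⟩, rfl⟩, ?_, fun a => rfl, hjρ, inferInstance, inferInstance, ?_, ?_⟩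
  · intro g hg
    refine ⟨algebraMap (MvPolynomial G L) N (X 1), ?_⟩
    rw [bρ_alg, bφ_X, mul_one]
    intro h
    exact hg (X_injective (IsFractionRing.injective (MvPolynomial G L) N h))
  · by_contra hfin
    rw [not_infinite_iff_finite] at hfin
    haveI : Finite N := Module.finite_of_finite F
    haveI : Finite (MvPolynomial G L) :=
      Finite.of_injective _ (IsFractionRing.injective (MvPolynomial G L) N)
    exact not_finite (MvPolynomial G L)
  · -- regularity
    let ε : L →ₐ[k] AlgebraicClosure k := IsAlgClosed.lift
    have hεi : Function.Injective (MvPolynomial.map (σ := G) (ε : L →+* AlgebraicClosure k)) :=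
      MvPolynomial.map_injective _ ε.toRingHom.injective
    let i1 : N →+* Ω := IsFractionRing.map hεi
    have hi1 : ∀ p, i1 (algebraMap (MvPolynomial G L) N p) = algebraMap _ Ω (MvPolynomial.map (ε : L →+* AlgebraicClosure k) p) :=
      fun p => IsLocalization.map_eq (M := nonZeroDivisors (MvPolynomial G L))
        (nonZeroDivisors_le_comap_nonZeroDivisors_of_injective _ hεi) p
    let u : AlgebraicClosure k →+* Ω := (algebraMap (MvPolynomial G (AlgebraicClosure k)) Ω).comp C
    let b := Module.Basis.ofVectorSpace k (AlgebraicClosure k)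
    refine ⟨Ω, inferInstance, u, i1.comp (algebraMap F N), _, b, fun a => ?_, ?_⟩
    · change algebraMap _ _ (C _) = i1 (algebraMap _ _ (C _))
      rw [hi1, map_C]
      change _ = algebraMap _ _ (C (ε _))
      rw [ε.commutes]
    · intro t c hc
      obtain ⟨q, hq⟩ := IsLocalization.exist_integer_multiples_of_finset
        (nonZeroDivisors (MvPolynomial G L)) (t.image (fun x => ((c x : F) : N)))
      let Q : MvPolynomial G L := ∏ g : G, bφ α g q
      have hQ0 : algebraMap _ N Q ≠ 0 := by
        rw [Ne, map_eq_zero_iff _ (IsFractionRing.injective (MvPolynomial G L) N)]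
        refine Finset.prod_ne_zero_iff.mpr fun g _ h0 => ?_
        exact nonZeroDivisors.coe_ne_zero q (bφ_inj α g (by rw [h0, map_zero]))
      have hQf : ∀ g, bφ α g Q = Q := by
        intro g
        simp only [Q, map_prod]
        rw [← Equiv.prod_comp (Equiv.mulLeft g) (fun h => bφ α h q)]
        refine Finset.prod_congr rfl fun h _ => ?_
        rw [← RingHom.comp_apply, ← bφ_mul]; rfl
      have hp : ∀ x ∈ t, ∃ p : MvPolynomial G L, algebraMap _ N p = algebraMap _ N Q * c x := by
        intro x hx
        obtain ⟨p, hp⟩ := hq _ (Finset.mem_image_of_mem _ hx)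
        refine ⟨(∏ g ∈ Finset.univ.erase (1 : G), bφ α g q) * p, ?_⟩
        have h1 : Q = (∏ g ∈ Finset.univ.erase (1 : G), bφ α g q) * q := by
          simp only [Q]
          rw [← Finset.mul_prod_erase _ _ (Finset.mem_univ (1 : G)), bφ_one, mul_comm]; rfl
        rw [map_mul, hp, h1, map_mul, Algebra.smul_def, mul_assoc]
      have hp' : ∀ x, ∃ p : MvPolynomial G L, x ∈ t → algebraMap _ N p = algebraMap _ N Q * c x := by
        intro x
        by_cases hx : x ∈ t
        · obtain ⟨p, hp⟩ := hp x hx; exact ⟨p, fun _ => hp⟩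
        · exact ⟨0, fun h => absurd h hx⟩
      choose p hp using hp'
      have hpf : ∀ x ∈ t, ∀ g, bφ α g (p x) = p x := by
        intro x hx g
        apply IsFractionRing.injective (MvPolynomial G L) N
        rw [← bρ_alg, hp x hx, map_mul, bρ_alg, hQf, hF]
      have hsum : ∑ x ∈ t, C (b x) * MvPolynomial.map (ε : L →+* AlgebraicClosure k) (p x) = 0 := by
        apply IsFractionRing.injective (MvPolynomial G (AlgebraicClosure k)) Ω
        rw [map_sum, map_zero]
        have h1 : ∀ x ∈ t, algebraMap _ Ω (C (b x) * MvPolynomial.map (ε : L →+* AlgebraicClosure k) (p x)) =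
            i1 (algebraMap _ N Q) * (u (b x) * i1 (c x)) := by
          intro x hx
          rw [map_mul, ← hi1, hp x hx, map_mul]
          change u (b x) * _ = _
          ring
        rw [Finset.sum_congr rfl h1, ← Finset.mul_sum]
        erw [hc]
        rw [mul_zero]
      have hp0 : ∀ x ∈ t, p x = 0 := by
        intro x hx
        ext m
        rw [coeff_zero]
        refine trace_aux α hα ε b t (fun x => coeff m (p x)) (fun g => ?_) x hx
        have := congrArg (coeff (m.mapDomain (fun h => g * h))) hsum
        rw [coeff_sum, coeff_zero] at this
        rw [← this]
        refine Finset.sum_congr rfl fun y hy => ?_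
        rw [MvPolynomial.coeff_C_mul, coeff_map, ← bφ_coeff, hpf y hy]; rfl
      intro x hx
      have h1 := hp x hx
      rw [hp0 x hx, map_zero] at h1
      exact Subtype.ext ((mul_eq_zero.mp h1.symm).resolve_left hQ0)

theorem exists_base [FiniteDimensional k L] [IsGalois k L] (hα : Function.Surjective α) :
    ∃ (N F : Type) (_ : Field N) (_ : Field F) (_ : Algebra F N) (_ : Algebra k F)
      (ρ0 : G →* (N →+* N)) (j : L →+* N),
      (∀ g f, ρ0 g (algebraMap F N f) = algebraMap F N f) ∧
      (∀ x, (∀ g, ρ0 g x = x) → ∃ f, algebraMap F N f = x) ∧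
      (∀ g, g ≠ 1 → ∃ x, ρ0 g x ≠ x) ∧
      (∀ a, j (algebraMap k L a) = algebraMap F N (algebraMap k F a)) ∧
      (∀ g x, ρ0 g (j x) = j (α g x)) ∧
      FiniteDimensional F N ∧ Algebra.IsSeparable F N ∧ Infinite F ∧ Reg k F := by
  obtain ⟨F, h, h1⟩ := exists_base_aux α (FractionRing (MvPolynomial G L)) hα
    (FractionRing (MvPolynomial G (AlgebraicClosure k)))
  exact ⟨FractionRing (MvPolynomial G L), F, inferInstance, h, h1⟩

end base
end GES

set_option synthInstance.maxHeartbeats 1000000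
set_option maxHeartbeats 1000000
set_option linter.all false
set_option linter.deprecated false
set_option linter.unusedSectionVars false
set_option linter.unusedVariables false

namespace GES
open Polynomial

theorem exists_theta {F N1 I : Type} [Field F] [Field N1] [Algebra F N1] [FiniteDimensional F N1]
    [Algebra.IsSeparable F N1] [Infinite F] [Finite I] :
    ∃ θ : I → N1, (∀ i x, ∃ p : F[X], aeval (θ i) p = x) ∧
      ∀ i j, i ≠ j → IsCoprime (minpoly F (θ i)) (minpoly F (θ j)) := by
  obtain ⟨θ, hθ⟩ := Field.exists_primitive_element F N1
  have hint : ∀ x : N1, IsIntegral F x := fun x => Algebra.IsIntegral.isIntegral x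
  let f : F → F[X] := fun m => minpoly F (θ + algebraMap F N1 m)
  have hf : (Set.range f).Infinite := by
    intro hfin
    have h1 := hfin.preimage' (f := f) (by
      rintro _ ⟨m, rfl⟩
      have h2 : ((f m).rootSet N1).Finite := (f m).rootSet_finite N1
      refine (h2.preimage (f := fun a => θ + algebraMap F N1 a) ?_).subset ?_
      · intro a _ b _ hab
        exact (algebraMap F N1).injective (add_left_cancel hab)
      · intro a ha
        have ha : f a = f m := ha
        rw [Set.mem_preimage, mem_rootSet]
        refine ⟨minpoly.ne_zero (hint _), ?_⟩
        rw [← ha]; exact minpoly.aeval _ _)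
    rw [Set.preimage_range] at h1
    exact Set.infinite_univ h1
  haveI := hf.to_subtype
  cases nonempty_fintype I
  obtain ⟨e⟩ : Nonempty (I ↪ Set.range f) :=
    ⟨(Fintype.equivFin I).toEmbedding.trans ((Fin.valEmbedding).trans (Infinite.natEmbedding _))⟩
  choose m hm using fun i => (e i).2
  refine ⟨fun i => θ + algebraMap F N1 (m i), fun i x => ?_, fun i j hij => ?_⟩
  · have hx : x ∈ (IntermediateField.adjoin F {θ}).toSubalgebra := by rw [hθ]; trivial
    rw [IntermediateField.adjoin_simple_toSubalgebra_of_isAlgebraic (hint θ).isAlgebraic,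
      Algebra.adjoin_singleton_eq_range_aeval] at hx
    obtain ⟨p, rfl⟩ := hx
    refine ⟨p.comp (X - C (m i)), ?_⟩
    rw [aeval_comp]; simp
  · rw [(minpoly.irreducible (hint _)).coprime_iff_not_dvd]
    intro hd
    have h1 := (minpoly.irreducible (hint _)).associated_of_dvd (minpoly.irreducible (hint _)) hd
    have h2 : f (m i) = f (m j) := eq_of_monic_of_associated (minpoly.monic (hint _)) (minpoly.monic (hint _)) h1
    rw [hm, hm] at h2
    exact hij (e.injective (Subtype.ext h2))

theorem order_split {G : Type} [Group G] [Finite G] {p : ℕ} (hp : p.Prime) (g : G) (hg : p ∣ orderOf g)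
    (H : Subgroup G) (h1 : ∀ n : ℕ, ¬ p ∣ orderOf (g ^ n) → g ^ n ∈ H)
    (h2 : ∀ n e : ℕ, orderOf (g ^ n) = p ^ (e + 1) → g ^ n ∈ H) : g ∈ H := by
  have h0 : orderOf g ≠ 0 := (orderOf_pos g).ne'
  obtain ⟨a, m, hm, ho⟩ := Nat.exists_eq_pow_mul_and_not_dvd h0 p hp.ne_one
  have ha : a ≠ 0 := by
    rintro rfl
    rw [pow_zero, one_mul] at ho
    exact hm (ho ▸ hg)
  obtain ⟨e, rfl⟩ := Nat.exists_eq_succ_of_ne_zero ha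
  have hm0 : 0 < m := Nat.pos_of_ne_zero (by rintro rfl; simp at hm)
  have hp0 : 0 < p ^ (e + 1) := pow_pos hp.pos _
  have o1 : orderOf (g ^ m) = p ^ (e + 1) := by
    rw [orderOf_pow_of_dvd hm0.ne' (by rw [ho]; exact dvd_mul_left _ _), ho, Nat.mul_div_cancel _ hm0]
  have o2 : orderOf (g ^ (p ^ (e + 1))) = m := by
    rw [orderOf_pow_of_dvd hp0.ne' (by rw [ho]; exact dvd_mul_right _ _), ho, Nat.mul_div_cancel_left _ hp0]
  have hA := h2 m e o1
  have hB := h1 (p ^ (e + 1)) (by rw [o2]; exact hm)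
  have hcop : Nat.Coprime m (p ^ (e + 1)) :=
    (((Nat.Prime.coprime_iff_not_dvd hp).mpr hm).symm).pow_right _
  obtain ⟨u, v, huv⟩ := Nat.isCoprime_iff_coprime.mpr hcop
  have : g = (g ^ m) ^ u * (g ^ (p ^ (e + 1))) ^ v := by
    rw [← zpow_natCast, ← zpow_natCast, ← zpow_mul, ← zpow_mul, ← zpow_add]
    conv_lhs => rw [← zpow_one g, ← huv]
    congr 1
    push_cast; ring
  rw [this]
  exact mul_mem (zpow_mem hA _) (zpow_mem hB _)

theorem main (k : Type) [Field k] (G : Type) [Group G] [Finite G]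
    (L : Type) [Field L] [Algebra k L] [FiniteDimensional k L] [IsGalois k L]
    (α : G →* (L ≃ₐ[k] L)) (hα : Function.Surjective α) :
    ∃ (k₀ : Type) (_ : Field k₀) (_ : Algebra k k₀),
      (∃ s : Finset k₀, IntermediateField.adjoin k (s : Set k₀) = ⊤) ∧
      IsDomain (TensorProduct k (AlgebraicClosure k) k₀) ∧
      HasGeomGaloisSolution k G L α k₀ := by
  classical
  cases nonempty_fintype G
  obtain ⟨N, F, _, _, _, _, ρ0, j, hρ0F, hfixF, hinj, hjk, hjρ, _, _, _, hreg⟩ := exists_base α hα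
  let n : ℕ := ∏ g ∈ Finset.univ.filter (fun g : G => (orderOf g : N) ≠ 0), orderOf g
  have hn : (n : N) ≠ 0 := by
    simp only [n, Nat.cast_prod]
    exact Finset.prod_ne_zero_iff.mpr fun g hg => (Finset.mem_filter.mp hg).2
  haveI : NeZero (n : N) := ⟨hn⟩
  haveI : NeZero n := ⟨fun h => hn (by rw [h]; simp)⟩
  let N1 := CyclotomicField n N
  haveI : IsCyclotomicExtension {n} N N1 := inferInstance
  haveI : FiniteDimensional N N1 := IsCyclotomicExtension.finiteDimensional {n} N N1
  haveI : IsGalois N N1 := IsCyclotomicExtension.isGalois {n} N N1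
  haveI : IsScalarTower F N N1 := inferInstance
  haveI : FiniteDimensional F N1 := FiniteDimensional.trans F N N1
  haveI : Algebra.IsSeparable F N1 := Algebra.IsSeparable.trans F N N1
  let I := {g : G // α g = 1 ∧ ((orderOf g : N) ≠ 0 ∨ ∃ p e : ℕ, p.Prime ∧ CharP N p ∧ orderOf g = p ^ (e + 1))}
  letI : Fintype I := Fintype.ofFinite I
  haveI : Nonempty I := ⟨⟨1, map_one _, Or.inl (by simp)⟩⟩
  let c : I → G := Subtype.val
  obtain ⟨θ, hgen, hcop⟩ := exists_theta (F := F) (N1 := N1) (I := I)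
  let S : Inp G F N N1 I :=
    { ρ0 := ρ0, ρ0F := hρ0F, fixF := hfixF, inj := hinj, θ := θ
      int := fun i => Algebra.IsIntegral.isIntegral _
      gen := hgen
      sep := fun i => (Algebra.IsSeparable.isSeparable F (θ i)).aeval_derivative_ne_zero (minpoly.aeval _ _)
      cop := hcop }
  have hld : ∀ i, Nonempty (LD F (PowerSeries N1) (LaurentSeries N1) (orderOf (c i))) := by
    rintro ⟨g, hg1, hg | ⟨p, e, hp, hchar, hg⟩⟩
    · have hd : orderOf g ∣ n := Finset.dvd_prod_of_mem _ (Finset.mem_filter.mpr ⟨Finset.mem_univ g, hg⟩)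
      obtain ⟨m, hm⟩ := hd
      have hζ := (IsCyclotomicExtension.zeta_spec n N N1).pow (NeZero.pos n) (hm.trans (mul_comm _ _))
      refine LD_kummer F N1 (orderOf g) (orderOf_pos g) ?_ _ hζ
      rw [← map_natCast (algebraMap N N1)]
      exact (_root_.map_ne_zero _).mpr hg
    · haveI : Fact p.Prime := ⟨hp⟩
      haveI : CharP N1 p := charP_of_injective_algebraMap (algebraMap N N1).injective p
      change Nonempty (LD F (PowerSeries N1) (LaurentSeries N1) (orderOf g))
      rw [hg]
      exact LD_as F N1 p e
  have hmem : ∀ g, α g = 1 → g ∈ Subgroup.closure (Set.range c) := by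
    intro g hg
    have hgn : ∀ m : ℕ, α (g ^ m) = 1 := fun m => by rw [map_pow, hg, one_pow]
    by_cases h0 : (orderOf g : N) ≠ 0
    · exact Subgroup.subset_closure ⟨⟨g, hg, Or.inl h0⟩, rfl⟩
    · rw [not_not] at h0
      obtain ⟨p, hchar⟩ := CharP.exists N
      have hd := (CharP.cast_eq_zero_iff N p _).mp h0
      have hp : p.Prime := (CharP.char_is_prime_or_zero N p).resolve_right (by
        rintro rfl
        exact (orderOf_pos g).ne' (zero_dvd_iff.mp hd))
      refine order_split hp g hd _ (fun m hm => ?_) (fun m e hm => ?_)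
      · refine Subgroup.subset_closure ⟨⟨g ^ m, hgn m, Or.inl ?_⟩, rfl⟩
        rwa [Ne, CharP.cast_eq_zero_iff N p]
      · exact Subgroup.subset_closure ⟨⟨g ^ m, hgn m, Or.inr ⟨p, e, hp, hchar, hm⟩⟩, rfl⟩
  obtain ⟨E, _, _, ⟨B⟩⟩ := S.mkBig (fun i => (hld i).some) α j hjk hjρ (fun i => i.2.1) hmem
  exact B.descent hα hreg.laurent

end GES

/-- **Geometric Galois solutions exist after a regular finitely generated base change.**
Let `k` be a field and `α : G → Gal(L/k)` a finite Galois embedding problem over `k`.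
Then there is an extension `k₀/k` which is finitely generated (as a field extension) and
regular over `k` — i.e. `k₀` is linearly disjoint from an algebraic closure of `k` over
`k`, encoded by `k̄ ⊗_k k₀` being an integral domain — such that the induced embedding
problem `α_{k₀}` has a geometric Galois solution. -/
theorem statement_6 (k : Type) [Field k] (G : Type) [Group G] [Finite G]
    (L : Type) [Field L] [Algebra k L] [FiniteDimensional k L] [IsGalois k L]
    (α : G →* (L ≃ₐ[k] L)) (hα : Function.Surjective α) :
    ∃ (k₀ : Type) (_ : Field k₀) (_ : Algebra k k₀),
      (∃ s : Finset k₀, IntermediateField.adjoin k (s : Set k₀) = ⊤) ∧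
      IsDomain (TensorProduct k (AlgebraicClosure k) k₀) ∧
      HasGeomGaloisSolution k G L α k₀ := by
  exact GES.main k G L α hα
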